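/- Drift in eccentricity, mutual inclination and node of the second planet. Consider the Newtonian 4-body problem with masses m_0,m_1,m_2,m_3 > 0 satisfying m_0 ≠ m_1. For every N ∈ ℕ, every itinerary e_2^0,…,e_2^N ∈ (0,1), θ_{23}^0,…,θ_{23}^N ∈ (0,π), h_2^0,…,h_2^N ∈ ℝ/2πℤ, and every δ > 0, there exist a collision-free solution of Newton's equations and times t_0 < t_1 < ⋯ < t_N at which E_2 < 0, C_2 and C_3 are nonzero and (C_2^{(1)}, C_2^{(2)}) ≠ (0,0), such that |e_2(t_k) − e_2^k| ≤ δ, |θ_{23}(t_k) − θ_{23}^k| ≤ δ, and dist(h_2(t_k), h_2^k) ≤ δ on ℝ/2πℤ, for all k = 0,1,…,N. -/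

import Mathlib

noncomputable section

open Real Filter Set
open scoped BigOperators RealInnerProductSpace Topology

/-- Vectors in physical space `ℝ³`, with the Euclidean norm. -/
abbrev V3 : Type := EuclideanSpace ℝ (Fin 3)

/-- The cross product on `ℝ³`. -/
def cross3 (a b : V3) : V3 :=
  (WithLp.equiv 2 (Fin 3 → ℝ)).symm
    ![a 1 * b 2 - a 2 * b 1, a 2 * b 0 - a 0 * b 2, a 0 * b 1 - a 1 * b 0]

/-- `x`, with velocity `v`, is a collision-free solution of the Newtonian 4-body problem
with masses `m` on the set of times `I`. -/
def IsFourBodySolution (m : Fin 4 → ℝ) (I : Set ℝ) (x v : Fin 4 → ℝ → V3) : Prop :=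
  (∀ t ∈ I, ∀ i j : Fin 4, i ≠ j → x i t ≠ x j t) ∧
  (∀ j : Fin 4, ∀ t ∈ I, HasDerivAt (x j) (v j t) t) ∧
  (∀ j : Fin 4, ∀ t ∈ I, HasDerivAt (v j)
      (∑ i ∈ Finset.univ.filter (fun i => i ≠ j),
        (m i / ‖x i t - x j t‖ ^ 3) • (x i t - x j t)) t)

def Mtot1 (m : Fin 4 → ℝ) : ℝ := m 0 + m 1
def Mtot2 (m : Fin 4 → ℝ) : ℝ := m 0 + m 1 + m 2
def Mtot3 (m : Fin 4 → ℝ) : ℝ := m 0 + m 1 + m 2 + m 3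
def mu1 (m : Fin 4 → ℝ) : ℝ := m 0 * m 1 / Mtot1 m
def mu2 (m : Fin 4 → ℝ) : ℝ := Mtot1 m * m 2 / Mtot2 m
def mu3 (m : Fin 4 → ℝ) : ℝ := Mtot2 m * m 3 / Mtot3 m
def sig01 (m : Fin 4 → ℝ) : ℝ := m 0 / Mtot1 m
def sig11 (m : Fin 4 → ℝ) : ℝ := m 1 / Mtot1 m
def sig02 (m : Fin 4 → ℝ) : ℝ := m 0 / Mtot2 m
def sig12 (m : Fin 4 → ℝ) : ℝ := m 1 / Mtot2 m
def sig22 (m : Fin 4 → ℝ) : ℝ := m 2 / Mtot2 m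

/-- Jacobi positions. -/
def jq1 (pos : Fin 4 → V3) : V3 := pos 1 - pos 0
def jq2 (m : Fin 4 → ℝ) (pos : Fin 4 → V3) : V3 := pos 2 - sig01 m • pos 0 - sig11 m • pos 1
def jq3 (m : Fin 4 → ℝ) (pos : Fin 4 → V3) : V3 :=
  pos 3 - sig02 m • pos 0 - sig12 m • pos 1 - sig22 m • pos 2

/-- Linear momenta `y j = m j • ẋ j`. -/
def lmom (m : Fin 4 → ℝ) (vel : Fin 4 → V3) (j : Fin 4) : V3 := m j • vel j

/-- Jacobi momenta. -/
def jp1 (m : Fin 4 → ℝ) (vel : Fin 4 → V3) : V3 :=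
  lmom m vel 1 + sig11 m • lmom m vel 2 + sig11 m • lmom m vel 3
def jp2 (m : Fin 4 → ℝ) (vel : Fin 4 → V3) : V3 := lmom m vel 2 + sig22 m • lmom m vel 3
def jp3 (m : Fin 4 → ℝ) (vel : Fin 4 → V3) : V3 := lmom m vel 3

/-- Kepler energies of the three fictitious bodies. -/
def kepE1 (m : Fin 4 → ℝ) (pos vel : Fin 4 → V3) : ℝ :=
  ‖jp1 m vel‖ ^ 2 / (2 * mu1 m) - mu1 m * Mtot1 m / ‖jq1 pos‖
def kepE2 (m : Fin 4 → ℝ) (pos vel : Fin 4 → V3) : ℝ :=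
  ‖jp2 m vel‖ ^ 2 / (2 * mu2 m) - mu2 m * Mtot2 m / ‖jq2 m pos‖
def kepE3 (m : Fin 4 → ℝ) (pos vel : Fin 4 → V3) : ℝ :=
  ‖jp3 m vel‖ ^ 2 / (2 * mu3 m) - mu3 m * Mtot3 m / ‖jq3 m pos‖

/-- Semimajor axes. -/
def sma1 (m : Fin 4 → ℝ) (pos vel : Fin 4 → V3) : ℝ :=
  -(mu1 m * Mtot1 m) / (2 * kepE1 m pos vel)
def sma2 (m : Fin 4 → ℝ) (pos vel : Fin 4 → V3) : ℝ :=
  -(mu2 m * Mtot2 m) / (2 * kepE2 m pos vel)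
def sma3 (m : Fin 4 → ℝ) (pos vel : Fin 4 → V3) : ℝ :=
  -(mu3 m * Mtot3 m) / (2 * kepE3 m pos vel)

/-- Circular angular momenta `L j = μ j √(M j a j)`. -/
def Lact1 (m : Fin 4 → ℝ) (pos vel : Fin 4 → V3) : ℝ :=
  mu1 m * Real.sqrt (Mtot1 m * sma1 m pos vel)
def Lact2 (m : Fin 4 → ℝ) (pos vel : Fin 4 → V3) : ℝ :=
  mu2 m * Real.sqrt (Mtot2 m * sma2 m pos vel)
def Lact3 (m : Fin 4 → ℝ) (pos vel : Fin 4 → V3) : ℝ :=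
  mu3 m * Real.sqrt (Mtot3 m * sma3 m pos vel)

/-- Angular momenta `C j = q j × p j`. -/
def angC1 (m : Fin 4 → ℝ) (pos vel : Fin 4 → V3) : V3 := cross3 (jq1 pos) (jp1 m vel)
def angC2 (m : Fin 4 → ℝ) (pos vel : Fin 4 → V3) : V3 := cross3 (jq2 m pos) (jp2 m vel)
def angC3 (m : Fin 4 → ℝ) (pos vel : Fin 4 → V3) : V3 := cross3 (jq3 m pos) (jp3 m vel)

/-- Eccentricities `e j = √(1 - ‖C j‖²/L j²)`. -/
def ecc1 (m : Fin 4 → ℝ) (pos vel : Fin 4 → V3) : ℝ :=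
  Real.sqrt (1 - ‖angC1 m pos vel‖ ^ 2 / (Lact1 m pos vel) ^ 2)
def ecc2 (m : Fin 4 → ℝ) (pos vel : Fin 4 → V3) : ℝ :=
  Real.sqrt (1 - ‖angC2 m pos vel‖ ^ 2 / (Lact2 m pos vel) ^ 2)
def ecc3 (m : Fin 4 → ℝ) (pos vel : Fin 4 → V3) : ℝ :=
  Real.sqrt (1 - ‖angC3 m pos vel‖ ^ 2 / (Lact3 m pos vel) ^ 2)

/-- The normalised angular momentum of planet 2, `C̃₂ = C₂ / L₂`. -/
def nAngC2 (m : Fin 4 → ℝ) (pos vel : Fin 4 → V3) : V3 :=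
  (Lact2 m pos vel)⁻¹ • angC2 m pos vel

/-- Deprit actions. -/
def dGamma1 (m : Fin 4 → ℝ) (pos vel : Fin 4 → V3) : ℝ := ‖angC1 m pos vel‖
def dGamma2 (m : Fin 4 → ℝ) (pos vel : Fin 4 → V3) : ℝ := ‖angC2 m pos vel‖
def dGamma3 (m : Fin 4 → ℝ) (pos vel : Fin 4 → V3) : ℝ := ‖angC3 m pos vel‖
def dPsi1 (m : Fin 4 → ℝ) (pos vel : Fin 4 → V3) : ℝ := ‖angC1 m pos vel + angC2 m pos vel‖
def dPsi2 (m : Fin 4 → ℝ) (pos vel : Fin 4 → V3) : ℝ :=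
  ‖angC1 m pos vel + angC2 m pos vel + angC3 m pos vel‖

/-- Configuration of the system at time `t`. -/
def posAt (x : Fin 4 → ℝ → V3) (t : ℝ) : Fin 4 → V3 := fun i => x i t

/-- The mutual inclination `θ₂₃ ∈ [0,π]` of planets 2 and 3, defined by
`cos θ₂₃ = ⟨C₂,C₃⟩/(‖C₂‖‖C₃‖)`. -/
def incl23 (m : Fin 4 → ℝ) (pos vel : Fin 4 → V3) : ℝ :=
  Real.arccos (⟪angC2 m pos vel, angC3 m pos vel⟫ /
    (‖angC2 m pos vel‖ * ‖angC3 m pos vel‖))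

/-- The longitude of the node of planet 2, `h₂ ∈ ℝ/2πℤ`: the argument of the planar vector
`(−C₂⁽²⁾, C₂⁽¹⁾)`. -/
def node2 (m : Fin 4 → ℝ) (pos vel : Fin 4 → V3) : Real.Angle :=
  ((Complex.arg ⟨-(angC2 m pos vel 1), angC2 m pos vel 0⟩ : ℝ) : Real.Angle)

/-! ### The cross product -/

@[simp] lemma cross3_zero_coord (a b : V3) : cross3 a b 0 = a 1 * b 2 - a 2 * b 1 := rfl
@[simp] lemma cross3_one_coord (a b : V3) : cross3 a b 1 = a 2 * b 0 - a 0 * b 2 := rfl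
@[simp] lemma cross3_two_coord (a b : V3) : cross3 a b 2 = a 0 * b 1 - a 1 * b 0 := rfl

lemma V3.ext {a b : V3} (h0 : a 0 = b 0) (h1 : a 1 = b 1) (h2 : a 2 = b 2) : a = b := by
  ext i
  fin_cases i <;> assumption

lemma V3.inner_eq (a b : V3) : ⟪a, b⟫ = a 0 * b 0 + a 1 * b 1 + a 2 * b 2 := by
  simp [PiLp.inner_apply, Fin.sum_univ_three]
  ring

lemma V3.norm_sq (a : V3) : ‖a‖ ^ 2 = a 0 ^ 2 + a 1 ^ 2 + a 2 ^ 2 := by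
  rw [EuclideanSpace.real_norm_sq_eq, Fin.sum_univ_three]

lemma V3.abs_apply_le (a : V3) (i : Fin 3) : |a i| ≤ ‖a‖ := by
  simpa using PiLp.norm_apply_le a i

lemma V3.norm_le_sum (a : V3) : ‖a‖ ≤ |a 0| + |a 1| + |a 2| := by
  refine abs_le_of_sq_le_sq' ?_ (by positivity) |>.2
  rw [V3.norm_sq, ← sq_abs (a 0), ← sq_abs (a 1), ← sq_abs (a 2)]
  nlinarith [mul_nonneg (abs_nonneg (a 0)) (abs_nonneg (a 1)),
    mul_nonneg (abs_nonneg (a 0)) (abs_nonneg (a 2)),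
    mul_nonneg (abs_nonneg (a 1)) (abs_nonneg (a 2))]

lemma cross3_add_left (a b c : V3) : cross3 (a + b) c = cross3 a c + cross3 b c := by
  apply V3.ext <;> simp <;> ring

lemma cross3_add_right (a b c : V3) : cross3 a (b + c) = cross3 a b + cross3 a c := by
  apply V3.ext <;> simp <;> ring

lemma cross3_sub_left (a b c : V3) : cross3 (a - b) c = cross3 a c - cross3 b c := by
  apply V3.ext <;> simp <;> ring

lemma cross3_sub_right (a b c : V3) : cross3 a (b - c) = cross3 a b - cross3 a c := by
  apply V3.ext <;> simp <;> ring

lemma cross3_smul_left (s : ℝ) (a b : V3) : cross3 (s • a) b = s • cross3 a b := by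
  apply V3.ext <;> simp <;> ring

lemma cross3_smul_right (s : ℝ) (a b : V3) : cross3 a (s • b) = s • cross3 a b := by
  apply V3.ext <;> simp <;> ring

lemma cross3_self (a : V3) : cross3 a a = 0 := by
  apply V3.ext <;> simp <;> ring

lemma cross3_cross3 (a b c : V3) :
    cross3 a (cross3 b c) = ⟪a, c⟫ • b - ⟪a, b⟫ • c := by
  apply V3.ext <;> simp [V3.inner_eq] <;> ring

lemma norm_cross3_sq (a b : V3) : ‖cross3 a b‖ ^ 2 = ‖a‖ ^ 2 * ‖b‖ ^ 2 - ⟪a, b⟫ ^ 2 := by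
  simp only [V3.norm_sq, V3.inner_eq, cross3_zero_coord, cross3_one_coord, cross3_two_coord]
  ring

lemma norm_cross3_le (a b : V3) : ‖cross3 a b‖ ≤ ‖a‖ * ‖b‖ := by
  refine abs_le_of_sq_le_sq' ?_ (by positivity) |>.2
  rw [norm_cross3_sq]
  nlinarith [sq_nonneg ⟪a, b⟫]

/-- The cross product as a continuous bilinear map. -/
def cross3CLM : V3 →L[ℝ] V3 →L[ℝ] V3 :=
  LinearMap.mkContinuous₂
    (LinearMap.mk₂ ℝ cross3 cross3_add_left cross3_smul_left cross3_add_right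
      (fun s a b => cross3_smul_right s a b)) 1
    (fun a b => by simpa using norm_cross3_le a b)

lemma HasDerivAt.cross3 {a b : ℝ → V3} {a' b' : V3} {t : ℝ}
    (ha : HasDerivAt a a' t) (hb : HasDerivAt b b' t) :
    HasDerivAt (fun s => cross3 (a s) (b s)) (cross3 (a t) b' + cross3 a' (b t)) t :=
  cross3CLM.hasDerivAt_of_bilinear (fun _ => ha) (fun _ => hb)

/-! ### Softened power laws -/

/-- The Kepler field `x / ‖x‖³`, softened inside the ball of radius `r`. -/
def softKepler (r : ℝ) (x : V3) : V3 := ((max ‖x‖ r)⁻¹ ^ 3) • x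

/-- Radial truncation to the ball of radius `r`. -/
def radialClamp (r : ℝ) (x : V3) : V3 := (r * (max ‖x‖ r)⁻¹) • x

section
variable {r : ℝ}

lemma abs_inv_max_sub_le (hr : 0 < r) (x y : V3) :
    |(max ‖x‖ r)⁻¹ - (max ‖y‖ r)⁻¹| ≤ (max ‖x‖ r)⁻¹ * (max ‖y‖ r)⁻¹ * ‖x - y‖ := by
  have hx : 0 < max ‖x‖ r := lt_max_of_lt_right hr
  have hy : 0 < max ‖y‖ r := lt_max_of_lt_right hr
  have h : |max ‖y‖ r - max ‖x‖ r| ≤ ‖x - y‖ := by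
    refine (abs_max_sub_max_le_abs _ _ _).trans ?_
    rw [abs_sub_comm]
    exact abs_norm_sub_norm_le x y
  rw [inv_sub_inv hx.ne' hy.ne', abs_div, abs_of_pos (mul_pos hx hy), div_eq_inv_mul, mul_inv]
  gcongr

lemma inv_max_le (hr : 0 < r) (x : V3) : (max ‖x‖ r)⁻¹ ≤ r⁻¹ :=
  inv_anti₀ hr (le_max_right _ _)

lemma norm_mul_inv_max_le (hr : 0 < r) (x : V3) : ‖x‖ * (max ‖x‖ r)⁻¹ ≤ 1 := by
  have hx : 0 < max ‖x‖ r := lt_max_of_lt_right hr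
  rw [← div_eq_mul_inv, div_le_one hx]
  exact le_max_left _ _

lemma softKepler_sub_le (hr : 0 < r) (x y : V3) :
    ‖softKepler r x - softKepler r y‖ ≤ 4 * r⁻¹ ^ 3 * ‖x - y‖ := by
  set a := (max ‖x‖ r)⁻¹ with ha
  set b := (max ‖y‖ r)⁻¹ with hb
  have ha0 : 0 ≤ a := by positivity
  have hb0 : 0 ≤ b := by positivity
  have har : a ≤ r⁻¹ := inv_max_le hr x
  have hbr : b ≤ r⁻¹ := inv_max_le hr y
  have hab : |a - b| ≤ a * b * ‖x - y‖ := abs_inv_max_sub_le hr x y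
  have hyb : ‖y‖ * b ≤ 1 := norm_mul_inv_max_le hr y
  have e : softKepler r x - softKepler r y = a ^ 3 • (x - y) + (a ^ 3 - b ^ 3) • y := by
    simp only [softKepler, ← ha, ← hb]; module
  have h3 : |a ^ 3 - b ^ 3| ≤ 3 * r⁻¹ ^ 2 * (a * b * ‖x - y‖) := by
    have : a ^ 3 - b ^ 3 = (a ^ 2 + a * b + b ^ 2) * (a - b) := by ring
    rw [this, abs_mul, abs_of_nonneg (by positivity)]
    gcongr
    nlinarith [mul_le_mul har har ha0 (by positivity), mul_le_mul hbr hbr hb0 (by positivity),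
      mul_le_mul har hbr hb0 (by positivity)]
  rw [e]
  refine (norm_add_le _ _).trans ?_
  rw [norm_smul, norm_smul, Real.norm_eq_abs, Real.norm_eq_abs, abs_of_nonneg (by positivity)]
  have h1 : a ^ 3 * ‖x - y‖ ≤ r⁻¹ ^ 3 * ‖x - y‖ := by gcongr
  have h2 : |a ^ 3 - b ^ 3| * ‖y‖ ≤ 3 * r⁻¹ ^ 3 * ‖x - y‖ := by
    calc |a ^ 3 - b ^ 3| * ‖y‖ ≤ 3 * r⁻¹ ^ 2 * (a * b * ‖x - y‖) * ‖y‖ := by gcongr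
      _ = 3 * r⁻¹ ^ 2 * a * ‖x - y‖ * (‖y‖ * b) := by ring
      _ ≤ 3 * r⁻¹ ^ 2 * r⁻¹ * ‖x - y‖ * 1 := by gcongr
      _ = 3 * r⁻¹ ^ 3 * ‖x - y‖ := by ring
  linarith

lemma radialClamp_sub_le (hr : 0 < r) (x y : V3) :
    ‖radialClamp r x - radialClamp r y‖ ≤ 2 * ‖x - y‖ := by
  set a := (max ‖x‖ r)⁻¹ with ha
  set b := (max ‖y‖ r)⁻¹ with hb
  have ha0 : 0 ≤ a := by positivity
  have hb0 : 0 ≤ b := by positivity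
  have har : r * a ≤ 1 := by
    have := mul_le_mul_of_nonneg_left (inv_max_le hr x) hr.le
    rwa [mul_inv_cancel₀ hr.ne'] at this
  have hab : |a - b| ≤ a * b * ‖x - y‖ := abs_inv_max_sub_le hr x y
  have hyb : ‖y‖ * b ≤ 1 := norm_mul_inv_max_le hr y
  have e : radialClamp r x - radialClamp r y = (r * a) • (x - y) + (r * (a - b)) • y := by
    simp only [radialClamp, ← ha, ← hb]; module
  rw [e]
  refine (norm_add_le _ _).trans ?_
  rw [norm_smul, norm_smul, Real.norm_eq_abs, Real.norm_eq_abs, abs_of_nonneg (by positivity),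
    abs_mul, abs_of_pos hr]
  have h1 : r * a * ‖x - y‖ ≤ 1 * ‖x - y‖ := by gcongr
  have h2 : r * |a - b| * ‖y‖ ≤ ‖x - y‖ := by
    calc r * |a - b| * ‖y‖ ≤ r * (a * b * ‖x - y‖) * ‖y‖ := by gcongr
      _ = (r * a) * ‖x - y‖ * (‖y‖ * b) := by ring
      _ ≤ 1 * ‖x - y‖ * 1 := by gcongr
      _ = ‖x - y‖ := by ring
  linarith

lemma norm_softKepler_le (hr : 0 < r) (x : V3) : ‖softKepler r x‖ ≤ r⁻¹ ^ 2 := by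
  have h := norm_mul_inv_max_le hr x
  have h' := inv_max_le hr x
  rw [softKepler, norm_smul, Real.norm_eq_abs, abs_of_nonneg (by positivity)]
  calc (max ‖x‖ r)⁻¹ ^ 3 * ‖x‖ = (max ‖x‖ r)⁻¹ ^ 2 * (‖x‖ * (max ‖x‖ r)⁻¹) := by ring
    _ ≤ r⁻¹ ^ 2 * 1 := by gcongr
    _ = _ := by ring

lemma norm_radialClamp_le (hr : 0 < r) (x : V3) : ‖radialClamp r x‖ ≤ r := by
  have h := norm_mul_inv_max_le hr x
  rw [radialClamp, norm_smul, Real.norm_eq_abs, abs_of_nonneg (by positivity)]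
  calc r * (max ‖x‖ r)⁻¹ * ‖x‖ = r * (‖x‖ * (max ‖x‖ r)⁻¹) := by ring
    _ ≤ r * 1 := by gcongr
    _ = r := by ring

lemma softKepler_of_le {x : V3} (h : r ≤ ‖x‖) : softKepler r x = (1 / ‖x‖ ^ 3) • x := by
  rw [softKepler, max_eq_left h, inv_pow, one_div]

lemma radialClamp_of_le (hr : 0 < r) {x : V3} (h : ‖x‖ ≤ r) : radialClamp r x = x := by
  rw [radialClamp, max_eq_right h, mul_inv_cancel₀ hr.ne', one_smul]

lemma kepler_sub_le (hr : 0 < r) {x y : V3} (hx : r ≤ ‖x‖) (hy : r ≤ ‖y‖) :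
    ‖(1 / ‖x‖ ^ 3) • x - (1 / ‖y‖ ^ 3) • y‖ ≤ 4 * r⁻¹ ^ 3 * ‖x - y‖ := by
  rw [← softKepler_of_le hx, ← softKepler_of_le hy]
  exact softKepler_sub_le hr x y

end

/-! ### Existence of solutions -/

lemma exists_solution_of_lipschitz_of_bounded {E : Type*} [NormedAddCommGroup E]
    [NormedSpace ℝ E] [CompleteSpace E] {F : E → E} {K L : NNReal} (hK : LipschitzWith K F)
    (hL : ∀ p, ‖F p‖ ≤ L) (p₀ : E) {T : ℝ} (hT : 0 ≤ T) :
    ∃ α : ℝ → E, α 0 = p₀ ∧ ∀ t ∈ Icc 0 T, HasDerivAt α (F (α t)) t := by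
  have h0 : (0 : ℝ) ∈ Icc (-1) (T + 1) := ⟨by norm_num, by linarith⟩
  have hPL : IsPicardLindelof (fun _ => F) (⟨0, h0⟩ : Icc (-1) (T + 1)) p₀
      (L * (T + 1).toNNReal) 0 L K := by
    refine .of_time_independent (fun p _ => hL p) hK.lipschitzOnWith ?_
    rw [NNReal.coe_mul, Real.coe_toNNReal _ (by linarith), NNReal.coe_zero, sub_zero, sub_zero]
    refine mul_le_mul_of_nonneg_left (max_le le_rfl ?_) L.2
    change (0 : ℝ) - -1 ≤ T + 1
    linarith
  obtain ⟨α, hα0, hα⟩ := hPL.exists_eq_forall_mem_Icc_hasDerivWithinAt₀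
  refine ⟨α, hα0, fun t ht => ?_⟩
  exact (hα t ⟨by linarith [ht.1], by linarith [ht.2]⟩).hasDerivAt
    (Icc_mem_nhds (by linarith [ht.1]) (by linarith [ht.2]))

/-- The four-body vector field with softened forces and truncated velocities. -/
def softField (m : Fin 4 → ℝ) (r R : ℝ) (p : (Fin 4 → V3) × (Fin 4 → V3)) :
    (Fin 4 → V3) × (Fin 4 → V3) :=
  (fun j => radialClamp R (p.2 j),
    fun j => ∑ i ∈ Finset.univ.filter (fun i => i ≠ j), m i • softKepler r (p.1 i - p.1 j))

lemma exists_softened_solution {m : Fin 4 → ℝ} (hm : ∀ j, 0 < m j) {r R T : ℝ} (hr : 0 < r)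
    (hR : 0 < R) (hT : 0 ≤ T) (x₀ v₀ : Fin 4 → V3) :
    ∃ x v : Fin 4 → ℝ → V3, (∀ j, x j 0 = x₀ j) ∧ (∀ j, v j 0 = v₀ j) ∧
      ∀ t ∈ Icc 0 T, ∀ j, HasDerivAt (x j) (radialClamp R (v j t)) t ∧
        HasDerivAt (v j) (∑ i ∈ Finset.univ.filter (fun i => i ≠ j),
          m i • softKepler r (x i t - x j t)) t := by
  set μ := ∑ i, m i with hμ
  have hμ0 : 0 ≤ μ := Finset.sum_nonneg fun i _ => (hm i).le
  have hsum : ∀ (j : Fin 4) (B : ℝ), 0 ≤ B →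
      ∑ i ∈ Finset.univ.filter (fun i => i ≠ j), m i * B ≤ μ * B := by
    intro j B hB
    rw [← Finset.sum_mul]
    gcongr
    exact Finset.sum_le_sum_of_subset_of_nonneg (Finset.filter_subset _ _)
      fun i _ _ => (hm i).le
  have hlip : LipschitzWith (Real.toNNReal (2 + μ * (8 * r⁻¹ ^ 3))) (softField m r R) := by
    refine LipschitzWith.of_dist_le' fun p q => ?_
    have h1 : 0 ≤ dist p q := dist_nonneg
    have hp1 : ∀ i, ‖p.1 i - q.1 i‖ ≤ dist p q := fun i => by
      rw [← dist_eq_norm]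
      exact (dist_le_pi_dist p.1 q.1 i).trans (le_max_left _ _)
    have hp2 : ∀ i, ‖p.2 i - q.2 i‖ ≤ dist p q := fun i => by
      rw [← dist_eq_norm]
      exact (dist_le_pi_dist p.2 q.2 i).trans (le_max_right _ _)
    have hμr : 0 ≤ μ * (8 * r⁻¹ ^ 3) := by positivity
    refine max_le ?_ ?_
    · refine (dist_pi_le_iff (by positivity)).2 fun j => ?_
      rw [dist_eq_norm]
      refine (radialClamp_sub_le hR _ _).trans ?_
      nlinarith [hp2 j]
    · refine (dist_pi_le_iff (by positivity)).2 fun j => ?_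
      rw [dist_eq_norm]
      simp only [softField, ← Finset.sum_sub_distrib]
      have hterm : ∀ i, ‖m i • softKepler r (p.1 i - p.1 j) - m i • softKepler r (q.1 i - q.1 j)‖
          ≤ m i * (8 * r⁻¹ ^ 3 * dist p q) := by
        intro i
        rw [← smul_sub, norm_smul, Real.norm_eq_abs, abs_of_pos (hm i)]
        have := (hm i).le
        gcongr
        refine (softKepler_sub_le hr _ _).trans ?_
        have : ‖p.1 i - p.1 j - (q.1 i - q.1 j)‖ ≤ 2 * dist p q := by
          have e : p.1 i - p.1 j - (q.1 i - q.1 j) = (p.1 i - q.1 i) - (p.1 j - q.1 j) := by abel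
          rw [e]
          refine (norm_sub_le _ _).trans ?_
          linarith [hp1 i, hp1 j]
        calc 4 * r⁻¹ ^ 3 * ‖p.1 i - p.1 j - (q.1 i - q.1 j)‖
            ≤ 4 * r⁻¹ ^ 3 * (2 * dist p q) := by gcongr
          _ = _ := by ring
      refine (norm_sum_le_of_le _ fun i _ => hterm i).trans ?_
      refine (hsum j _ (by positivity)).trans ?_
      nlinarith
  have hbdd : ∀ p, ‖softField m r R p‖ ≤ Real.toNNReal (R + μ * r⁻¹ ^ 2) := by
    intro p
    have hpos : 0 ≤ μ * r⁻¹ ^ 2 := by positivity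
    rw [Real.coe_toNNReal _ (by positivity)]
    refine max_le ?_ ?_
    · refine (pi_norm_le_iff_of_nonneg (by positivity)).2 fun j => ?_
      exact (norm_radialClamp_le hR _).trans (by linarith)
    · refine (pi_norm_le_iff_of_nonneg (by positivity)).2 fun j => ?_
      have hterm : ∀ i, ‖m i • softKepler r (p.1 i - p.1 j)‖ ≤ m i * r⁻¹ ^ 2 := by
        intro i
        rw [norm_smul, Real.norm_eq_abs, abs_of_pos (hm i)]
        have := (hm i).le
        gcongr
        exact norm_softKepler_le hr _
      refine (norm_sum_le_of_le _ fun i _ => hterm i).trans ?_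
      exact (hsum j _ (by positivity)).trans (by linarith)
  obtain ⟨α, hα0, hα⟩ := exists_solution_of_lipschitz_of_bounded hlip hbdd (x₀, v₀) hT
  refine ⟨fun j t => (α t).1 j, fun j t => (α t).2 j, fun j => by simp [hα0],
    fun j => by simp [hα0], fun t ht j => ?_⟩
  have h := hα t ht
  have h1 : HasDerivAt (fun s => (α s).1) (softField m r R (α t)).1 t := h.fst
  have h2 : HasDerivAt (fun s => (α s).2) (softField m r R (α t)).2 t := h.snd
  exact ⟨(hasDerivAt_pi.1 h1) j, (hasDerivAt_pi.1 h2) j⟩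

/-- Continuation principle: finitely many continuous inequalities, each improved whenever all
of them hold up to a given time, hold throughout. -/
lemma forall_neg_of_bootstrap {ι : Type*} [Finite ι] {T : ℝ} {φ : ι → ℝ → ℝ}
    (hφ : ∀ i, ∀ t ∈ Icc 0 T, ContinuousAt (φ i) t) (h0 : ∀ i, φ i 0 < 0)
    (hstep : ∀ t ∈ Icc 0 T, (∀ s ∈ Icc 0 t, ∀ i, φ i s ≤ 0) → ∀ i, φ i t < 0) :
    ∀ t ∈ Icc 0 T, ∀ i, φ i t < 0 := by
  by_contra! hne
  set B := {t | t ∈ Icc 0 T ∧ ∃ i, 0 ≤ φ i t} with hB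
  have hBne : B.Nonempty := hne
  have hBbdd : BddBelow B := ⟨0, fun t ht => ht.1.1⟩
  set τ := sInf B with hτ
  have hτ0 : 0 ≤ τ := le_csInf hBne fun t ht => ht.1.1
  have hτT : τ ≤ T := by
    obtain ⟨b, hb⟩ := hBne
    exact (csInf_le hBbdd hb).trans hb.1.2
  have hlt : ∀ s ∈ Ico 0 τ, ∀ i, φ i s < 0 := fun s hs i => by
    by_contra! hsU
    exact absurd (csInf_le hBbdd (show s ∈ B from ⟨⟨hs.1, by linarith [hs.2]⟩, i, hsU⟩))
      (not_le.2 hs.2)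
  have hτU : ∀ i, φ i τ < 0 := by
    refine hstep τ ⟨hτ0, hτT⟩ fun s hs i => ?_
    rcases hs.2.eq_or_lt with h' | h'
    · rw [h']
      rcases hτ0.eq_or_lt with h | h
      · rw [← h]
        exact (h0 i).le
      · refine le_of_tendsto ((hφ i τ ⟨hτ0, hτT⟩).tendsto.mono_left
          (nhdsWithin_le_nhds (s := Iio τ))) ?_
        filter_upwards [Ioo_mem_nhdsLT h] with s hs using (hlt s ⟨hs.1.le, hs.2⟩ i).le
    · exact (hlt s ⟨hs.1, h'⟩ i).le
  have hev : ∀ᶠ s in 𝓝 τ, ∀ i, φ i s < 0 :=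
    eventually_all.2 fun i => (hφ i τ ⟨hτ0, hτT⟩).eventually_lt_const (hτU i)
  obtain ⟨l, u, hlu, hsub⟩ := mem_nhds_iff_exists_Ioo_subset.1 hev
  obtain ⟨c, hc, hcu⟩ := exists_lt_of_csInf_lt hBne hlu.2
  obtain ⟨i, hi⟩ := hc.2
  exact absurd (hsub ⟨hlu.1.trans_le (csInf_le hBbdd hc), hcu⟩ i) (not_lt.2 hi)

/-! ### Nearly rectilinear perturbed Kepler motions -/

lemma norm_image_sub_le_of_hasDerivAt {E : Type*} [NormedAddCommGroup E] [NormedSpace ℝ E]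
    {F F' : ℝ → E} {a b C : ℝ} (hF : ∀ t ∈ Icc a b, HasDerivAt F (F' t) t)
    (hC : ∀ t ∈ Icc a b, ‖F' t‖ ≤ C) {t : ℝ} (ht : t ∈ Icc a b) :
    ‖F t - F a‖ ≤ C * (t - a) :=
  norm_image_sub_le_of_norm_deriv_le_segment' (fun x hx => (hF x hx).hasDerivWithinAt)
    (fun x hx => hC x (Ico_subset_Icc_self hx)) t ht

/-- `r`, with velocity `u`, is a perturbed Kepler motion on `[0, T]` with perturbing
acceleration `f` of size at most `ε`, starting at an apocentre in the unit direction `d`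
with velocity `g • e`, and subject to a priori bounds. -/
structure PertKepler (r u f : ℝ → V3) (d e : V3) (g κ ε T : ℝ) : Prop where
  pos_deriv : ∀ t ∈ Icc 0 T, HasDerivAt r (u t) t
  vel_deriv : ∀ t ∈ Icc 0 T, HasDerivAt u (-(1 / ‖r t‖ ^ 3) • r t + f t) t
  ne_zero : ∀ t ∈ Icc 0 T, r t ≠ 0
  force_le : ∀ t ∈ Icc 0 T, ‖f t‖ ≤ ε
  pos_le : ∀ t ∈ Icc 0 T, ‖r t‖ ≤ 2
  vel_le : ∀ t ∈ Icc 0 T, ‖u t‖ ≤ 6 / g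
  pos_zero : r 0 = d
  vel_zero : u 0 = g • e
  norm_dir : ‖d‖ = 1
  norm_vel_dir : ‖e‖ = 1
  inner_dir : ⟪d, e⟫ = 0
  g_pos : 0 < g
  g_le : g ≤ 1 / 100
  kappa_nonneg : 0 ≤ κ
  kappa_le : κ ≤ 1 / 10000
  eps_le : ε ≤ 1 / 100
  eps_mul_le : ε * T ≤ κ * g

namespace PertKepler

variable {r u f : ℝ → V3} {d e : V3} {g κ ε T : ℝ}

lemma norm_deriv (H : PertKepler r u f d e g κ ε T) {t : ℝ} (ht : t ∈ Icc 0 T) :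
    HasDerivAt (fun s => ‖r s‖) (⟪r t, u t⟫ / ‖r t‖) t := by
  have h := (H.pos_deriv t ht).norm_sq
  have hr : ‖r t‖ ^ 2 ≠ 0 := pow_ne_zero 2 (norm_ne_zero_iff.2 (H.ne_zero t ht))
  have h2 := h.sqrt hr
  simp only [Real.sqrt_sq (norm_nonneg _)] at h2
  refine h2.congr_deriv ?_
  field_simp

lemma inv_norm_deriv (H : PertKepler r u f d e g κ ε T) {t : ℝ} (ht : t ∈ Icc 0 T) :
    HasDerivAt (fun s => 1 / ‖r s‖) (-(⟪r t, u t⟫ / ‖r t‖ ^ 3)) t := by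
  have hr : ‖r t‖ ≠ 0 := norm_ne_zero_iff.2 (H.ne_zero t ht)
  have h := (H.norm_deriv ht).inv hr
  simp only [one_div]
  refine h.congr_deriv ?_
  field_simp

lemma angMom_deriv (H : PertKepler r u f d e g κ ε T) {t : ℝ} (ht : t ∈ Icc 0 T) :
    HasDerivAt (fun s => cross3 (r s) (u s)) (cross3 (r t) (f t)) t := by
  have h := (H.pos_deriv t ht).cross3 (H.vel_deriv t ht)
  refine h.congr_deriv ?_
  rw [cross3_self, cross3_add_right, cross3_smul_right, cross3_self]
  simp

lemma radial_deriv (H : PertKepler r u f d e g κ ε T) {t : ℝ} (ht : t ∈ Icc 0 T) :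
    HasDerivAt (fun s => ⟪r s, u s⟫) (‖u t‖ ^ 2 - 1 / ‖r t‖ + ⟪r t, f t⟫) t := by
  have hr : ‖r t‖ ≠ 0 := norm_ne_zero_iff.2 (H.ne_zero t ht)
  have h := (H.pos_deriv t ht).inner ℝ (H.vel_deriv t ht)
  refine h.congr_deriv ?_
  simp only [inner_add_right, inner_smul_right, real_inner_self_eq_norm_sq]
  field_simp
  ring

lemma vel_sq_deriv (H : PertKepler r u f d e g κ ε T) {t : ℝ} (ht : t ∈ Icc 0 T) :
    HasDerivAt (fun s => ‖u s‖ ^ 2)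
      (2 * ⟪u t, f t⟫ - 2 * (⟪r t, u t⟫ / ‖r t‖ ^ 3)) t := by
  have h := (H.vel_deriv t ht).norm_sq
  refine h.congr_deriv ?_
  simp only [inner_add_right, inner_smul_right, real_inner_comm (u t) (r t)]
  rw [real_inner_comm]
  ring

lemma energy_deriv (H : PertKepler r u f d e g κ ε T) {t : ℝ} (ht : t ∈ Icc 0 T) :
    HasDerivAt (fun s => ‖u s‖ ^ 2 / 2 - 1 / ‖r s‖) ⟪u t, f t⟫ t := by
  have h := ((H.vel_sq_deriv ht).div_const 2).sub (H.inv_norm_deriv ht)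
  refine h.congr_deriv ?_
  ring

lemma lrl_deriv (H : PertKepler r u f d e g κ ε T) {t : ℝ} (ht : t ∈ Icc 0 T) :
    HasDerivAt (fun s => (‖u s‖ ^ 2 - 1 / ‖r s‖) • r s - ⟪r s, u s⟫ • u s)
      ((2 * ⟪u t, f t⟫) • r t - ⟪r t, f t⟫ • u t - ⟪r t, u t⟫ • f t) t := by
  have h := (((H.vel_sq_deriv ht).sub (H.inv_norm_deriv ht)).smul (H.pos_deriv t ht)).sub
    ((H.radial_deriv ht).smul (H.vel_deriv t ht))
  refine h.congr_deriv ?_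
  simp only [Pi.sub_apply]
  module

lemma force_mul_le (H : PertKepler r u f d e g κ ε T) {t C : ℝ} (ht : t ∈ Icc 0 T) (hC : 0 ≤ C) :
    C * ε * (t - 0) ≤ C * (κ * g) := by
  have hε : 0 ≤ ε := (norm_nonneg _).trans (H.force_le t ht)
  rw [sub_zero, mul_assoc]
  exact mul_le_mul_of_nonneg_left ((mul_le_mul_of_nonneg_left ht.2 hε).trans H.eps_mul_le) hC

lemma angMom_sub_le (H : PertKepler r u f d e g κ ε T) {t : ℝ} (ht : t ∈ Icc 0 T) :
    ‖cross3 (r t) (u t) - g • cross3 d e‖ ≤ 2 * κ * g := by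
  have h := norm_image_sub_le_of_hasDerivAt (C := 2 * ε) (fun s hs => H.angMom_deriv hs)
    (fun s hs => (norm_cross3_le _ _).trans
      (mul_le_mul (H.pos_le s hs) (H.force_le s hs) (norm_nonneg _) (by norm_num))) ht
  rw [H.pos_zero, H.vel_zero, cross3_smul_right] at h
  linarith [H.force_mul_le ht (C := 2) (by norm_num)]

lemma energy_sub_le (H : PertKepler r u f d e g κ ε T) {t : ℝ} (ht : t ∈ Icc 0 T) :
    |‖u t‖ ^ 2 / 2 - 1 / ‖r t‖ - (g ^ 2 / 2 - 1)| ≤ 6 * κ := by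
  have hg := H.g_pos
  have h := norm_image_sub_le_of_hasDerivAt (C := 6 / g * ε) (fun s hs => H.energy_deriv hs)
    (fun s hs => (norm_inner_le_norm _ _).trans
      (mul_le_mul (H.vel_le s hs) (H.force_le s hs) (norm_nonneg _) (by positivity))) ht
  rw [H.pos_zero, H.vel_zero, H.norm_dir, norm_smul, H.norm_vel_dir, Real.norm_eq_abs,
    Real.norm_eq_abs, mul_one, sq_abs, div_one] at h
  have := H.force_mul_le ht (C := 6 / g) (by positivity)
  have e : 6 / g * (κ * g) = 6 * κ := by field_simp
  linarith

lemma lrl_sub_le (H : PertKepler r u f d e g κ ε T) {t : ℝ} (ht : t ∈ Icc 0 T) :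
    ‖(‖u t‖ ^ 2 - 1 / ‖r t‖) • r t - ⟪r t, u t⟫ • u t - (g ^ 2 - 1) • d‖ ≤ 48 * κ := by
  have hg := H.g_pos
  have h := norm_image_sub_le_of_hasDerivAt (C := 48 / g * ε) (fun s hs => H.lrl_deriv hs)
    (fun s hs => by
      have h1 := norm_inner_le_norm (𝕜 := ℝ) (u s) (f s)
      have h2 := norm_inner_le_norm (𝕜 := ℝ) (r s) (f s)
      have h3 := norm_inner_le_norm (𝕜 := ℝ) (r s) (u s)
      have key : ‖r s‖ * (‖u s‖ * ‖f s‖) ≤ 2 * (6 / g * ε) :=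
        mul_le_mul (H.pos_le s hs) (mul_le_mul (H.vel_le s hs) (H.force_le s hs) (norm_nonneg _)
          (by positivity)) (by positivity) (by norm_num)
      refine (norm_sub_le _ _).trans ((add_le_add_left (norm_sub_le _ _) _).trans ?_)
      rw [norm_smul, norm_smul, norm_smul, norm_mul, Real.norm_ofNat]
      have e1 := mul_le_mul_of_nonneg_right h1 (norm_nonneg (r s))
      have e2 := mul_le_mul_of_nonneg_right h2 (norm_nonneg (u s))
      have e3 := mul_le_mul_of_nonneg_right h3 (norm_nonneg (f s))
      have e4 : 48 / g * ε = 4 * (2 * (6 / g * ε)) := by ring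
      rw [e4]
      linarith) ht
  rw [H.pos_zero, H.vel_zero, H.norm_dir, norm_smul, H.norm_vel_dir, Real.norm_eq_abs,
    mul_one, sq_abs, div_one, inner_smul_right, H.inner_dir, mul_zero, zero_smul, sub_zero] at h
  have := H.force_mul_le ht (C := 48 / g) (by positivity)
  have e : 48 / g * (κ * g) = 48 * κ := by field_simp
  linarith

lemma angMom_sq (r u : V3) (hr : r ≠ 0) : ‖cross3 r u‖ ^ 2 =
    ‖r‖ + ⟪r, (‖u‖ ^ 2 - 1 / ‖r‖) • r - ⟪r, u⟫ • u⟫ := by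
  have hr : ‖r‖ ≠ 0 := norm_ne_zero_iff.2 hr
  rw [norm_cross3_sq, inner_sub_right, inner_smul_right, inner_smul_right,
    real_inner_self_eq_norm_sq]
  field_simp
  ring

lemma norm_cross3_dir (H : PertKepler r u f d e g κ ε T) : ‖cross3 d e‖ = 1 := by
  have h := norm_cross3_sq d e
  rw [H.norm_dir, H.norm_vel_dir, H.inner_dir] at h
  nlinarith [norm_nonneg (cross3 d e)]

lemma angMom_norm_bounds (H : PertKepler r u f d e g κ ε T) {t : ℝ} (ht : t ∈ Icc 0 T) :
    (1 - 2 * κ) * g ≤ ‖cross3 (r t) (u t)‖ ∧ ‖cross3 (r t) (u t)‖ ≤ (1 + 2 * κ) * g := by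
  have h := (abs_norm_sub_norm_le _ _).trans (H.angMom_sub_le ht)
  rw [norm_smul, H.norm_cross3_dir, Real.norm_eq_abs, abs_of_pos H.g_pos, mul_one, abs_le] at h
  constructor <;> linarith

lemma norm_le (H : PertKepler r u f d e g κ ε T) {t : ℝ} (ht : t ∈ Icc 0 T) :
    ‖r t‖ ≤ 51 / 50 := by
  have hr : 0 < ‖r t‖ := norm_pos_iff.2 (H.ne_zero t ht)
  have h := (abs_le.1 (H.energy_sub_le ht)).2
  have h1 : 50 / 51 ≤ 1 / ‖r t‖ := by
    nlinarith [sq_nonneg ‖u t‖, H.g_pos, H.g_le, H.kappa_le]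
  rw [le_div_iff₀ hr] at h1
  linarith

lemma norm_ge (H : PertKepler r u f d e g κ ε T) {t : ℝ} (ht : t ∈ Icc 0 T) :
    g ^ 2 / 3 ≤ ‖r t‖ := by
  have hG := (H.angMom_norm_bounds ht).1
  have hA := H.lrl_sub_le ht
  set A := (‖u t‖ ^ 2 - 1 / ‖r t‖) • r t - ⟪r t, u t⟫ • u t with hAdef
  have e := angMom_sq (r t) (u t) (H.ne_zero t ht)
  rw [← hAdef] at e
  have hg := H.g_pos
  have hg1 := H.g_le
  have hk := H.kappa_le
  have hk0 := H.kappa_nonneg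
  have hAn : ‖A‖ ≤ 21 / 20 := by
    have h1 : ‖A‖ ≤ ‖A - (g ^ 2 - 1) • d‖ + ‖(g ^ 2 - 1) • d‖ := norm_le_norm_sub_add _ _
    rw [norm_smul, H.norm_dir, Real.norm_eq_abs, abs_of_neg (by nlinarith)] at h1
    nlinarith
  have hi := real_inner_le_norm (r t) A
  have h2 : ‖r t‖ * ‖A‖ ≤ ‖r t‖ * (21 / 20) := by gcongr
  have h3 : ((1 - 2 * κ) * g) ^ 2 ≤ ‖cross3 (r t) (u t)‖ ^ 2 := by
    have : 0 ≤ (1 - 2 * κ) * g := mul_nonneg (by linarith) hg.le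
    gcongr
  have h4 : (9 / 10) * g ^ 2 ≤ ((1 - 2 * κ) * g) ^ 2 := by
    rw [mul_pow]
    gcongr
    nlinarith
  nlinarith

lemma vel_sq_le (H : PertKepler r u f d e g κ ε T) {t : ℝ} (ht : t ∈ Icc 0 T) :
    ‖u t‖ ^ 2 ≤ 2 / ‖r t‖ - 19 / 10 := by
  have h := (abs_le.1 (H.energy_sub_le ht)).2
  have e : 2 / ‖r t‖ = 2 * (1 / ‖r t‖) := by ring
  nlinarith [H.g_pos, H.g_le, H.kappa_le]

lemma norm_vel_lt (H : PertKepler r u f d e g κ ε T) {t : ℝ} (ht : t ∈ Icc 0 T) :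
    ‖u t‖ ≤ 5 / (2 * g) := by
  have hr : 0 < ‖r t‖ := norm_pos_iff.2 (H.ne_zero t ht)
  have hg := H.g_pos
  refine abs_le_of_sq_le_sq' ?_ (by positivity) |>.2
  have h1 := H.vel_sq_le ht
  have h2 : 2 / ‖r t‖ ≤ 2 / (g ^ 2 / 3) :=
    div_le_div_of_nonneg_left (by norm_num) (by positivity) (H.norm_ge ht)
  have h3 : 2 / (g ^ 2 / 3) = 6 / g ^ 2 := by field_simp; norm_num
  have h4 : (5 / (2 * g)) ^ 2 = 6 / g ^ 2 + (1 / 4) / g ^ 2 := by field_simp; norm_num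
  have : 0 < (1 / 4) / g ^ 2 := by positivity
  linarith

lemma abs_radial_le (H : PertKepler r u f d e g κ ε T) {t : ℝ} (ht : t ∈ Icc 0 T) :
    ⟪r t, u t⟫ ^ 2 ≤ 2 * ‖r t‖ := by
  have hr : 0 < ‖r t‖ := norm_pos_iff.2 (H.ne_zero t ht)
  have h := abs_real_inner_le_norm (r t) (u t)
  have h1 : ⟪r t, u t⟫ ^ 2 ≤ (‖r t‖ * ‖u t‖) ^ 2 := by
    rw [← sq_abs]
    gcongr
  have h2 : ‖r t‖ ^ 2 * ‖u t‖ ^ 2 ≤ ‖r t‖ ^ 2 * (2 / ‖r t‖) := by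
    gcongr
    linarith [H.vel_sq_le ht]
  have h3 : ‖r t‖ ^ 2 * (2 / ‖r t‖) = 2 * ‖r t‖ := by field_simp
  nlinarith

/-- The motion is nearly rectilinear along `d`. -/
lemma inner_dir_ge (H : PertKepler r u f d e g κ ε T) {t : ℝ} (ht : t ∈ Icc 0 T) :
    ‖r t‖ - 1 / 100 ≤ ⟪r t, d⟫ := by
  have hr : 0 < ‖r t‖ := norm_pos_iff.2 (H.ne_zero t ht)
  have hG := (H.angMom_norm_bounds ht).2
  have hA := H.lrl_sub_le ht
  set A := (‖u t‖ ^ 2 - 1 / ‖r t‖) • r t - ⟪r t, u t⟫ • u t with hAdef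
  have e := angMom_sq (r t) (u t) (H.ne_zero t ht)
  rw [← hAdef] at e
  have hg := H.g_pos
  have hg1 := H.g_le
  have hk := H.kappa_le
  have hk0 := H.kappa_nonneg
  have e2 : ⟪r t, A⟫ = ⟪r t, A - (g ^ 2 - 1) • d⟫ + (g ^ 2 - 1) * ⟪r t, d⟫ := by
    rw [inner_sub_right _ A, inner_smul_right]; ring
  have h1 := (abs_le.1 (abs_real_inner_le_norm (r t) (A - (g ^ 2 - 1) • d))).1
  have h2 : ‖r t‖ * ‖A - (g ^ 2 - 1) • d‖ ≤ 51 / 50 * (48 * κ) := by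
    have := H.norm_le ht
    gcongr
  have h3 : ‖cross3 (r t) (u t)‖ ^ 2 ≤ ((1 + 2 * κ) * g) ^ 2 := by gcongr
  have h5 : (1 + 2 * κ) * g ≤ 1 / 50 := by nlinarith
  have h6 : ((1 + 2 * κ) * g) ^ 2 ≤ (1 / 50) ^ 2 := by gcongr
  have h7 := (abs_le.1 (abs_real_inner_le_norm (r t) d)).2
  rw [H.norm_dir, mul_one] at h7
  have h8 := (abs_le.1 (abs_real_inner_le_norm (r t) d)).1
  rw [H.norm_dir, mul_one] at h8
  have h9 := H.norm_le ht
  have h10 : g ^ 2 ≤ 1 / 10000 := by nlinarith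
  have h11 : 0 ≤ g ^ 2 := by positivity
  nlinarith

lemma exists_norm_gt (H : PertKepler r u f d e g κ ε T) {a : ℝ} (ha : 0 ≤ a) (haT : a + 5 ≤ T) :
    ∃ t ∈ Icc a (a + 5), 2 / 5 < ‖r t‖ := by
  by_contra! hne
  have hsub : ∀ t ∈ Icc a (a + 5), t ∈ Icc 0 T := fun t ht =>
    ⟨ha.trans ht.1, ht.2.trans haT⟩
  have hσ : ∀ t ∈ Icc a (a + 5), |⟪r t, u t⟫| < 1 := fun t ht => by
    rw [← sq_lt_one_iff_abs_lt_one]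
    linarith [H.abs_radial_le (hsub t ht), hne t ht]
  have hderiv : ∀ t ∈ Icc a (a + 5), 2 / 5 ≤ ‖u t‖ ^ 2 - 1 / ‖r t‖ + ⟪r t, f t⟫ := by
    intro t ht
    have hr : 0 < ‖r t‖ := norm_pos_iff.2 (H.ne_zero t (hsub t ht))
    have h1 := (abs_le.1 (H.energy_sub_le (hsub t ht))).1
    have h2 : 5 / 2 ≤ 1 / ‖r t‖ := by
      rw [le_div_iff₀ hr]
      linarith [hne t ht]
    have h3 := (abs_le.1 (abs_real_inner_le_norm (r t) (f t))).1
    have h4 : ‖r t‖ * ‖f t‖ ≤ 2 / 5 * (1 / 100) :=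
      mul_le_mul (hne t ht) ((H.force_le t (hsub t ht)).trans H.eps_le) (norm_nonneg _)
        (by norm_num)
    nlinarith [H.kappa_le, sq_nonneg g]
  have hmono : MonotoneOn (fun t => ⟪r t, u t⟫ - 2 / 5 * t) (Icc a (a + 5)) := by
    refine monotoneOn_of_hasDerivWithinAt_nonneg (convex_Icc _ _)
      (f' := fun t => ‖u t‖ ^ 2 - 1 / ‖r t‖ + ⟪r t, f t⟫ - 2 / 5 * 1)
      (fun t ht => ?_) (fun t ht => ?_) (fun t ht => ?_)
    · exact ((H.radial_deriv (hsub t ht)).sub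
        ((hasDerivAt_id t).const_mul (2 / 5))).continuousAt.continuousWithinAt
    · exact ((H.radial_deriv (hsub t (interior_subset ht))).sub
        ((hasDerivAt_id t).const_mul (2 / 5))).hasDerivWithinAt
    · linarith [hderiv t (interior_subset ht)]
  have h := hmono (left_mem_Icc.2 (by linarith)) (right_mem_Icc.2 (by linarith)) (by linarith)
  have h1 := abs_lt.1 (hσ a (left_mem_Icc.2 (by linarith)))
  have h2 := abs_lt.1 (hσ (a + 5) (right_mem_Icc.2 (by linarith)))
  simp only at h
  linarith [h1.1, h2.2]

lemma vel_inner_deriv (H : PertKepler r u f d e g κ ε T) {t : ℝ} (ht : t ∈ Icc 0 T) :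
    HasDerivAt (fun s => ⟪u s, d⟫) (-(1 / ‖r t‖ ^ 3) * ⟪r t, d⟫ + ⟪f t, d⟫) t := by
  have h := (H.vel_deriv t ht).inner ℝ (hasDerivAt_const t d)
  refine h.congr_deriv ?_
  rw [inner_zero_right, zero_add, inner_add_left, real_inner_smul_left]

lemma exists_norm_lt (H : PertKepler r u f d e g κ ε T) {a : ℝ} (ha : 0 ≤ a)
    (haT : a + 50 ≤ T) : ∃ t ∈ Icc a (a + 50), ‖r t‖ < 1 / 5 := by
  by_contra! hne
  have hsub : ∀ t ∈ Icc a (a + 50), t ∈ Icc 0 T := fun t ht =>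
    ⟨ha.trans ht.1, ht.2.trans haT⟩
  have hσ : ∀ t ∈ Icc a (a + 50), |⟪u t, d⟫| < 7 / 2 := fun t ht => by
    have hr : 0 < ‖r t‖ := norm_pos_iff.2 (H.ne_zero t (hsub t ht))
    have h1 := H.vel_sq_le (hsub t ht)
    have h2 : 2 / ‖r t‖ ≤ 10 := by
      rw [div_le_iff₀ hr]
      linarith [hne t ht]
    have h3 := abs_real_inner_le_norm (u t) d
    rw [H.norm_dir, mul_one] at h3
    nlinarith [norm_nonneg (u t)]
  have hderiv : ∀ t ∈ Icc a (a + 50), -(1 / ‖r t‖ ^ 3) * ⟪r t, d⟫ + ⟪f t, d⟫ ≤ -(7 / 50) := by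
    intro t ht
    have hr : 0 < ‖r t‖ := norm_pos_iff.2 (H.ne_zero t (hsub t ht))
    have h1 := H.inner_dir_ge (hsub t ht)
    have h3 := (abs_le.1 (abs_real_inner_le_norm (f t) d)).2
    rw [H.norm_dir, mul_one] at h3
    have h4 := (H.force_le t (hsub t ht)).trans H.eps_le
    have h5 : (4 / 5 : ℝ) ≤ 1 / ‖r t‖ ^ 3 := by
      rw [le_div_iff₀ (by positivity)]
      have : ‖r t‖ ^ 3 ≤ (51 / 50) ^ 3 := by
        gcongr
        exact H.norm_le (hsub t ht)
      linarith
    have h6 : (19 / 100 : ℝ) ≤ ⟪r t, d⟫ := by linarith [hne t ht]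
    have h7 : (4 / 5 : ℝ) * (19 / 100) ≤ 1 / ‖r t‖ ^ 3 * ⟪r t, d⟫ := by gcongr
    linarith
  have hmono : AntitoneOn (fun t => ⟪u t, d⟫ + 7 / 50 * t) (Icc a (a + 50)) := by
    refine antitoneOn_of_hasDerivWithinAt_nonpos (convex_Icc _ _)
      (f' := fun t => -(1 / ‖r t‖ ^ 3) * ⟪r t, d⟫ + ⟪f t, d⟫ + 7 / 50 * 1)
      (fun t ht => ?_) (fun t ht => ?_) (fun t ht => ?_)
    · exact ((H.vel_inner_deriv (hsub t ht)).add
        ((hasDerivAt_id t).const_mul (7 / 50))).continuousAt.continuousWithinAt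
    · exact ((H.vel_inner_deriv (hsub t (interior_subset ht))).add
        ((hasDerivAt_id t).const_mul (7 / 50))).hasDerivWithinAt
    · linarith [hderiv t (interior_subset ht)]
  have h := hmono (left_mem_Icc.2 (by linarith)) (right_mem_Icc.2 (by linarith)) (by linarith)
  have h1 := abs_lt.1 (hσ a (left_mem_Icc.2 (by linarith)))
  have h2 := abs_lt.1 (hσ (a + 50) (right_mem_Icc.2 (by linarith)))
  simp only at h
  linarith [h1.2, h2.1]

/-- Every time interval of length `105` contains a time, close to an apocentre, at which the
velocity along `d` has a prescribed small value. -/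
lemma exists_event (H : PertKepler r u f d e g κ ε T) {a c : ℝ} (ha : 0 ≤ a)
    (haT : a + 105 ≤ T) (hc : |c| ≤ 1 / 2100) :
    ∃ t ∈ Icc a (a + 105), ⟪u t, d⟫ = c ∧ 1 / 4 ≤ ‖r t‖ := by
  obtain ⟨t₁, ht₁, h₁⟩ := H.exists_norm_lt ha (by linarith)
  obtain ⟨t₂, ht₂, h₂⟩ := H.exists_norm_gt (a := a + 50) (by linarith) (by linarith)
  obtain ⟨t₃, ht₃, h₃⟩ := H.exists_norm_lt (a := a + 55) (by linarith) (by linarith)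
  have h12 : t₁ ≤ t₂ := ht₁.2.trans ht₂.1
  have h23 : t₂ ≤ t₃ := by linarith [ht₂.2, ht₃.1]
  have hsub : ∀ t ∈ Icc t₁ t₃, t ∈ Icc 0 T := fun t ht =>
    ⟨by linarith [ht.1, ht₁.1], by linarith [ht.2, ht₃.2]⟩
  have hderiv : ∀ t ∈ Icc t₁ t₃,
      HasDerivAt (fun s => ⟪r s, d⟫ - c * s) (⟪u t, d⟫ - c * 1) t := fun t ht => by
    have h := (H.pos_deriv t (hsub t ht)).inner ℝ (hasDerivAt_const t d)
    rw [inner_zero_right, zero_add] at h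
    exact h.sub ((hasDerivAt_id t).const_mul c)
  obtain ⟨τ, hτ, hmax⟩ := isCompact_Icc.exists_isMaxOn (nonempty_Icc.2 (h12.trans h23))
    (fun t ht => (hderiv t ht).continuousAt.continuousWithinAt)
  have hle : ∀ t, ⟪r t, d⟫ ≤ ‖r t‖ := fun t => by
    have := real_inner_le_norm (r t) d
    rwa [H.norm_dir, mul_one] at this
  have hv2 := hmax (show t₂ ∈ Icc t₁ t₃ from ⟨h12, h23⟩)
  simp only [mem_ofPred_eq] at hv2
  have hy2 := H.inner_dir_ge (hsub t₂ ⟨h12, h23⟩)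
  have habs : |c * (τ - t₂)| ≤ 1 / 2100 * 105 := by
    rw [abs_mul]
    refine mul_le_mul hc ?_ (abs_nonneg _) (by norm_num)
    rw [abs_le]
    constructor <;> linarith [hτ.1, hτ.2, ht₁.1, ht₁.2, ht₂.1, ht₂.2, ht₃.1, ht₃.2]
  have hyτ : 1 / 4 ≤ ⟪r τ, d⟫ := by linarith [(abs_le.1 habs).1]
  have hne1 : τ ≠ t₁ := fun h => by rw [h] at hyτ; linarith [hle t₁]
  have hne3 : τ ≠ t₃ := fun h => by rw [h] at hyτ; linarith [hle t₃]
  have hIoo : τ ∈ Ioo t₁ t₃ := ⟨lt_of_le_of_ne hτ.1 hne1.symm, lt_of_le_of_ne hτ.2 hne3⟩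
  have hloc : IsLocalMax (fun s => ⟪r s, d⟫ - c * s) τ :=
    hmax.isLocalMax (Icc_mem_nhds hIoo.1 hIoo.2)
  have h0 := hloc.hasDerivAt_eq_zero (hderiv τ hτ)
  exact ⟨τ, ⟨by linarith [hτ.1, ht₁.1], by linarith [hτ.2, ht₃.2]⟩, by linarith,
    hyτ.trans (hle τ)⟩

lemma norm_vel_le_three (H : PertKepler r u f d e g κ ε T) {t : ℝ} (ht : t ∈ Icc 0 T)
    (hr : 1 / 4 ≤ ‖r t‖) : ‖u t‖ ≤ 3 := by
  have h1 := H.vel_sq_le ht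
  have h2 : 2 / ‖r t‖ ≤ 8 := by
    rw [div_le_iff₀ (by linarith)]
    linarith
  nlinarith [norm_nonneg (u t)]

lemma unit_eq (r u : V3) : (1 / ‖r‖) • r =
    cross3 u (cross3 r u) - ((‖u‖ ^ 2 - 1 / ‖r‖) • r - ⟪r, u⟫ • u) := by
  rw [cross3_cross3, real_inner_self_eq_norm_sq, real_inner_comm]
  module

lemma norm_unit_sub_le (H : PertKepler r u f d e g κ ε T) {t : ℝ} (ht : t ∈ Icc 0 T)
    (hr : 1 / 4 ≤ ‖r t‖) : ‖(1 / ‖r t‖) • r t - d‖ ≤ 4 * g + 48 * κ := by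
  have hA := H.lrl_sub_le ht
  rw [unit_eq]
  set A := (‖u t‖ ^ 2 - 1 / ‖r t‖) • r t - ⟪r t, u t⟫ • u t
  have e : cross3 (u t) (cross3 (r t) (u t)) - A - d =
      cross3 (u t) (cross3 (r t) (u t)) - (A - (g ^ 2 - 1) • d) - g ^ 2 • d := by module
  rw [e]
  refine (norm_sub_le _ _).trans ((add_le_add_left (norm_sub_le _ _) _).trans ?_)
  have h1 : ‖cross3 (u t) (cross3 (r t) (u t))‖ ≤ 3 * ((1 + 2 * κ) * g) :=
    (norm_cross3_le _ _).trans (mul_le_mul (H.norm_vel_le_three ht hr)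
      (H.angMom_norm_bounds ht).2 (norm_nonneg _) (by norm_num))
  have h2 : ‖g ^ 2 • d‖ = g ^ 2 := by
    rw [norm_smul, H.norm_dir, mul_one, Real.norm_eq_abs, abs_of_nonneg (sq_nonneg g)]
  nlinarith [H.g_pos, H.g_le, H.kappa_le]

/-- Away from the pericentre the velocity is nearly parallel to `d`. -/
lemma norm_vel_sub_le (H : PertKepler r u f d e g κ ε T) {t : ℝ} (ht : t ∈ Icc 0 T)
    (hr : 1 / 4 ≤ ‖r t‖) : ‖u t - ⟪u t, d⟫ • d‖ ≤ 17 * g + 144 * κ := by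
  have hd := H.norm_dir
  have h1 : ‖u t - ⟪u t, d⟫ • d‖ ^ 2 = ‖cross3 d (u t)‖ ^ 2 := by
    rw [norm_sub_sq_real, norm_smul, inner_smul_right, norm_cross3_sq, hd, Real.norm_eq_abs,
      mul_one, sq_abs, real_inner_comm d (u t)]
    ring
  have h2 : ‖u t - ⟪u t, d⟫ • d‖ = ‖cross3 d (u t)‖ := by
    rwa [sq_eq_sq₀ (norm_nonneg _) (norm_nonneg _)] at h1
  have e : cross3 d (u t) =
      (1 / ‖r t‖) • cross3 (r t) (u t) - cross3 ((1 / ‖r t‖) • r t - d) (u t) := by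
    rw [cross3_sub_left, cross3_smul_left]; module
  rw [h2, e]
  refine (norm_sub_le _ _).trans ?_
  have h3 : ‖cross3 ((1 / ‖r t‖) • r t - d) (u t)‖ ≤ (4 * g + 48 * κ) * 3 :=
    (norm_cross3_le _ _).trans (mul_le_mul (H.norm_unit_sub_le ht hr)
      (H.norm_vel_le_three ht hr) (norm_nonneg _) (by linarith [H.g_pos, H.kappa_nonneg]))
  have h4 : ‖(1 / ‖r t‖) • cross3 (r t) (u t)‖ ≤ 4 * ((1 + 2 * κ) * g) := by
    rw [norm_smul, Real.norm_eq_abs, abs_of_nonneg (by positivity)]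
    refine mul_le_mul ?_ (H.angMom_norm_bounds ht).2 (norm_nonneg _) (by norm_num)
    rw [div_le_iff₀ (by linarith)]
    linarith
  nlinarith [H.g_pos, H.g_le, H.kappa_le]

/-- Away from the pericentre position and velocity change slowly. -/
lemma drift_le (H : PertKepler r u f d e g κ ε T) {a t : ℝ} (ha : 0 ≤ a) (hat : a ≤ t)
    (htT : t ≤ T) (hw : t - a ≤ 1 / 200) (hr : 1 / 4 ≤ ‖r a‖) :
    ‖r t - r a‖ ≤ 4 * (t - a) ∧ ‖u t - u a‖ ≤ 26 * (t - a) := by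
  have hsub : ∀ s ∈ Icc a t, s ∈ Icc 0 T := fun s hs => ⟨ha.trans hs.1, hs.2.trans htT⟩
  have hlow : ∀ s ∈ Icc a t, 1 / 5 ≤ ‖r s‖ := by
    intro s hs
    have h := norm_image_sub_le_of_hasDerivAt (C := 3)
      (fun s hs => (H.pos_deriv s (hsub s hs)).norm_sq) (fun s hs => by
        have h1 := H.abs_radial_le (hsub s hs)
        have h2 := H.norm_le (hsub s hs)
        rw [Real.norm_eq_abs]
        refine abs_le_of_sq_le_sq (by nlinarith) (by norm_num)) hs
    rw [Real.norm_eq_abs] at h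
    have h1 := (abs_le.1 h).1
    have h2 := hs.2
    by_contra! hlt
    nlinarith [norm_nonneg (r s)]
  refine ⟨norm_image_sub_le_of_hasDerivAt (fun s hs => H.pos_deriv s (hsub s hs))
    (fun s hs => ?_) (right_mem_Icc.2 hat),
    norm_image_sub_le_of_hasDerivAt (fun s hs => H.vel_deriv s (hsub s hs))
    (fun s hs => ?_) (right_mem_Icc.2 hat)⟩
  · have h1 := H.vel_sq_le (hsub s hs)
    have h2 : 2 / ‖r s‖ ≤ 10 := by
      rw [div_le_iff₀ (by linarith [hlow s hs])]
      linarith [hlow s hs]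
    nlinarith [norm_nonneg (u s)]
  · have hpos : 0 < ‖r s‖ := by linarith [hlow s hs]
    refine (norm_add_le _ _).trans ?_
    rw [norm_smul, norm_neg, Real.norm_eq_abs, abs_of_nonneg (by positivity)]
    have h1 : 1 / ‖r s‖ ^ 3 * ‖r s‖ ≤ 25 := by
      have : 1 / ‖r s‖ ^ 3 * ‖r s‖ = 1 / ‖r s‖ ^ 2 := by field_simp
      rw [this, div_le_iff₀ (by positivity)]
      nlinarith [hlow s hs]
    linarith [H.force_le s (hsub s hs), H.eps_le]

end PertKepler

/-- The vector with the given coordinates. -/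
def vec3 (a b c : ℝ) : V3 := !₂[a, b, c]

@[simp] lemma vec3_zero_coord (a b c : ℝ) : vec3 a b c 0 = a := rfl
@[simp] lemma vec3_one_coord (a b c : ℝ) : vec3 a b c 1 = b := rfl
@[simp] lemma vec3_two_coord (a b c : ℝ) : vec3 a b c 2 = c := rfl

namespace PertKepler

variable {r u f : ℝ → V3} {g κ ε T : ℝ}

lemma angMom_sq_sub_le {d e : V3} (H : PertKepler r u f d e g κ ε T) {t : ℝ} (ht : t ∈ Icc 0 T) :
    |‖cross3 (r t) (u t)‖ ^ 2 - g ^ 2| ≤ κ := by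
  have hg := H.g_pos
  have hg1 := H.g_le
  have hk := H.kappa_le
  have hk0 := H.kappa_nonneg
  obtain ⟨h1, h2⟩ := H.angMom_norm_bounds ht
  have h3 : ‖cross3 (r t) (u t)‖ ^ 2 ≤ ((1 + 2 * κ) * g) ^ 2 := by gcongr
  have h4 : ((1 - 2 * κ) * g) ^ 2 ≤ ‖cross3 (r t) (u t)‖ ^ 2 := by
    have : 0 ≤ (1 - 2 * κ) * g := mul_nonneg (by linarith) hg.le
    gcongr
  have hg2 : g ^ 2 ≤ 1 / 10000 := by nlinarith
  have h5 : 5 * κ * g ^ 2 ≤ 5 * κ * (1 / 10000) := by gcongr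
  have h6 : (4 * κ + 4 * κ ^ 2) * g ^ 2 ≤ 5 * κ * g ^ 2 := by gcongr; nlinarith
  have h7 : 0 ≤ 4 * κ ^ 2 * g ^ 2 := by positivity
  rw [abs_le]
  constructor <;> linarith

set_option maxHeartbeats 800000 in
/-- Position near an apocentre of a nearly rectilinear orbit in the plane of the first and third
axes. -/
lemma position_near_apocentre
    (H : PertKepler r u f (vec3 1 0 0) (vec3 0 0 1) g κ ε T) {t b B : ℝ} (ht : t ∈ Icc 0 T)
    (hr : 1 / 4 ≤ ‖r t‖) (hu : ⟪u t, vec3 1 0 0⟫ = -(b * g)) (hb : |b| ≤ B) :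
    |r t 0 - 1| ≤ 8 * B ^ 2 * g ^ 2 + 100 * κ / g ^ 2 ∧ |r t 1| ≤ 60 * κ ∧
      |r t 2 - b * g ^ 2| ≤ 4 * B ^ 3 * g ^ 4 + (62 * B + 60) * κ := by
  have hg := H.g_pos
  have hg1 := H.g_le
  have hk := H.kappa_le
  have hk0 := H.kappa_nonneg
  have hB : 0 ≤ B := (abs_nonneg b).trans hb
  have hpos : 0 < ‖r t‖ := by linarith
  have hG := H.angMom_sub_le ht
  have hA := H.lrl_sub_le ht
  have hunit := unit_eq (r t) (u t)
  have hGsq := angMom_sq (r t) (u t) (H.ne_zero t ht)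
  have hu3 := H.norm_vel_le_three ht hr
  have hclose := H.norm_unit_sub_le ht hr
  have hR := H.norm_le ht
  set A := (‖u t‖ ^ 2 - 1 / ‖r t‖) • r t - ⟪r t, u t⟫ • u t
  set G := cross3 (r t) (u t)
  set w := (1 / ‖r t‖) • r t with hw
  have hrw : r t = ‖r t‖ • w := by
    rw [hw, smul_smul, mul_one_div_cancel hpos.ne', one_smul]
  have hu0 : u t 0 = -(b * g) := by
    rw [V3.inner_eq] at hu
    simpa using hu
  have hwn : w 0 ^ 2 + w 1 ^ 2 + w 2 ^ 2 = 1 := by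
    rw [← V3.norm_sq, hw, norm_smul, Real.norm_eq_abs, abs_of_pos (by positivity),
      one_div_mul_cancel hpos.ne', one_pow]
  have hdev : ‖w - vec3 (g * u t 2 + 1 - g ^ 2) 0 (b * g ^ 2)‖ ≤ 49 * κ := by
    have e : w - vec3 (g * u t 2 + 1 - g ^ 2) 0 (b * g ^ 2) =
        cross3 (u t) (G - g • cross3 (vec3 1 0 0) (vec3 0 0 1))
          - (A - (g ^ 2 - 1) • vec3 1 0 0) := by
      rw [hunit]
      apply V3.ext <;> simp [hu0] <;> ring
    rw [e]
    refine (norm_sub_le _ _).trans ?_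
    have h1 : ‖cross3 (u t) (G - g • cross3 (vec3 1 0 0) (vec3 0 0 1))‖ ≤ 3 * (2 * κ * g) :=
      (norm_cross3_le _ _).trans (mul_le_mul hu3 hG (norm_nonneg _) (by norm_num))
    nlinarith
  have hw1 : |w 1| ≤ 49 * κ := by
    simpa using (V3.abs_apply_le _ 1).trans hdev
  have hw2 : |w 2 - b * g ^ 2| ≤ 49 * κ := by
    simpa using (V3.abs_apply_le _ 2).trans hdev
  have hw0 : 9 / 10 ≤ w 0 := by
    have h := (V3.abs_apply_le _ 0).trans hclose
    have := (abs_le.1 h).1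
    simp only [PiLp.sub_apply, vec3_zero_coord] at this
    linarith
  have hbg : |b * g ^ 2| ≤ B * g ^ 2 := by
    rw [abs_mul, abs_of_nonneg (sq_nonneg g)]
    gcongr
  have hs : w 1 ^ 2 + w 2 ^ 2 ≤ 2 * B ^ 2 * g ^ 4 + κ := by
    have h1 : w 1 ^ 2 ≤ (49 * κ) ^ 2 := by
      rw [← sq_abs]; gcongr
    have h2 : |w 2| ≤ B * g ^ 2 + 49 * κ := by
      have := abs_sub_abs_le_abs_sub (w 2) (b * g ^ 2)
      linarith
    have h3 : w 2 ^ 2 ≤ (B * g ^ 2 + 49 * κ) ^ 2 := by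
      rw [← sq_abs]; gcongr
    nlinarith [sq_nonneg (B * g ^ 2 - 49 * κ)]
  set s := w 1 ^ 2 + w 2 ^ 2 with hsdef
  have hs0 : 0 ≤ s := by positivity
  have hw0le : w 0 ≤ 1 := by nlinarith
  have hdef : 1 - w 0 ≤ s := by nlinarith
  have hr0 : r t 0 = ‖r t‖ * w 0 := by conv_lhs => rw [hrw]; simp
  have hr1 : r t 1 = ‖r t‖ * w 1 := by conv_lhs => rw [hrw]; simp
  have hr2 : r t 2 = ‖r t‖ * w 2 := by conv_lhs => rw [hrw]; simp
  have hdef0 : 0 ≤ ‖r t‖ * (1 - w 0) := by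
    apply mul_nonneg hpos.le; linarith
  have hdef' : ‖r t‖ * (1 - w 0) ≤ 51 / 50 * s := by gcongr
  have hsize : g ^ 2 * |‖r t‖ - 1| ≤ 4 * B ^ 2 * g ^ 4 + 62 * κ := by
    have e : ⟪r t, A⟫ = ⟪r t, A - (g ^ 2 - 1) • vec3 1 0 0⟫ + (g ^ 2 - 1) * r t 0 := by
      rw [inner_sub_right _ A, inner_smul_right, V3.inner_eq (r t) (vec3 1 0 0)]
      simp
    have h1 := abs_real_inner_le_norm (r t) (A - (g ^ 2 - 1) • vec3 1 0 0)
    have h2 : ‖r t‖ * ‖A - (g ^ 2 - 1) • vec3 1 0 0‖ ≤ 51 / 50 * (48 * κ) := by gcongr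
    have hg2 : g ^ 2 ≤ (1 / 100) ^ 2 := by gcongr
    have hg20 : 0 ≤ g ^ 2 := by positivity
    have h5 : |‖G‖ ^ 2 - g ^ 2| ≤ κ := H.angMom_sq_sub_le ht
    have e2 : g ^ 2 * (‖r t‖ - 1) = (‖G‖ ^ 2 - g ^ 2) - (1 - g ^ 2) * (‖r t‖ * (1 - w 0))
        - ⟪r t, A - (g ^ 2 - 1) • vec3 1 0 0⟫ := by
      rw [hGsq, e, hr0]; ring
    have h6 := abs_le.1 (h1.trans h2)
    have h7 := abs_le.1 h5
    have h8 : 0 ≤ (1 - g ^ 2) * (‖r t‖ * (1 - w 0)) := mul_nonneg (by linarith) hdef0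
    have h9 : (1 - g ^ 2) * (‖r t‖ * (1 - w 0)) ≤ 51 / 50 * s :=
      (mul_le_of_le_one_left hdef0 (by linarith)).trans hdef'
    have h10 : |g ^ 2 * (‖r t‖ - 1)| ≤ 4 * B ^ 2 * g ^ 4 + 62 * κ := by
      rw [e2, abs_le]
      constructor <;> linarith [h6.1, h6.2, h7.1, h7.2]
    rwa [abs_mul, abs_of_nonneg hg20] at h10
  have hsize' : |‖r t‖ - 1| ≤ 4 * B ^ 2 * g ^ 2 + 62 * κ / g ^ 2 := by
    have e : 4 * B ^ 2 * g ^ 2 + 62 * κ / g ^ 2 = (4 * B ^ 2 * g ^ 4 + 62 * κ) / g ^ 2 := by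
      field_simp
    rw [e, le_div_iff₀ (by positivity)]
    linarith
  refine ⟨?_, ?_, ?_⟩
  · have e : r t 0 - 1 = (‖r t‖ - 1) - ‖r t‖ * (1 - w 0) := by rw [hr0]; ring
    rw [e]
    have h1 : κ ≤ κ / g ^ 2 := by
      rw [le_div_iff₀ (by positivity)]
      exact mul_le_of_le_one_right hk0 (pow_le_one₀ hg.le (by linarith))
    have h2 : B ^ 2 * g ^ 4 ≤ B ^ 2 * g ^ 2 := by
      have : g ^ 4 ≤ g ^ 2 := pow_le_pow_of_le_one hg.le (by linarith) (by norm_num)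
      gcongr
    have h3 := abs_le.1 hsize'
    have e1 : 62 * κ / g ^ 2 = 62 * (κ / g ^ 2) := by ring
    have e2 : 100 * κ / g ^ 2 = 100 * (κ / g ^ 2) := by ring
    have h4 : 0 ≤ B ^ 2 * g ^ 2 := by positivity
    rw [abs_le]
    constructor <;> linarith [h3.1, h3.2]
  · rw [hr1, abs_mul, abs_of_pos hpos]
    have h1 : ‖r t‖ * |w 1| ≤ 51 / 50 * (49 * κ) := by gcongr
    linarith
  · have e : r t 2 - b * g ^ 2 = ‖r t‖ * (w 2 - b * g ^ 2) + b * (g ^ 2 * (‖r t‖ - 1)) := by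
      rw [hr2]; ring
    rw [e]
    refine (abs_add_le _ _).trans ?_
    rw [abs_mul, abs_mul b, abs_of_pos hpos, abs_mul, abs_of_nonneg (sq_nonneg g)]
    have h1 : ‖r t‖ * |w 2 - b * g ^ 2| ≤ 51 / 50 * (49 * κ) := by gcongr
    have h2 : |b| * (g ^ 2 * |‖r t‖ - 1|) ≤ B * (4 * B ^ 2 * g ^ 4 + 62 * κ) := by gcongr
    nlinarith

end PertKepler

/-! ### Two binaries -/

/-- Relative vector of the binary formed by bodies `0` and `2`. -/
def binA (p : Fin 4 → V3) : V3 := p 2 - p 0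

/-- Relative vector of the binary formed by bodies `1` and `3`. -/
def binB (p : Fin 4 → V3) : V3 := p 3 - p 1

/-- Relative vector of the centres of mass of the two binaries. -/
def sep (m : Fin 4 → ℝ) (p : Fin 4 → V3) : V3 :=
  (m 1 / (m 1 + m 3)) • p 1 + (m 3 / (m 1 + m 3)) • p 3
    - (m 0 / (m 0 + m 2)) • p 0 - (m 2 / (m 0 + m 2)) • p 2

/-- Centre of mass. -/
def com (m : Fin 4 → ℝ) (p : Fin 4 → V3) : V3 :=
  (1 / Mtot3 m) • (m 0 • p 0 + m 1 • p 1 + m 2 • p 2 + m 3 • p 3)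

/-- The configuration with prescribed relative vectors and centre of mass. -/
def assemble (m : Fin 4 → ℝ) (z ζ S c : V3) : Fin 4 → V3 :=
  ![c - ((m 1 + m 3) / Mtot3 m) • S - (m 2 / (m 0 + m 2)) • z,
    c + ((m 0 + m 2) / Mtot3 m) • S - (m 3 / (m 1 + m 3)) • ζ,
    c - ((m 1 + m 3) / Mtot3 m) • S + (m 0 / (m 0 + m 2)) • z,
    c + ((m 0 + m 2) / Mtot3 m) • S + (m 1 / (m 1 + m 3)) • ζ]

lemma ne_A {m : Fin 4 → ℝ} (hm : ∀ j, 0 < m j) : m 0 + m 2 ≠ 0 := (add_pos (hm 0) (hm 2)).ne'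

lemma ne_B {m : Fin 4 → ℝ} (hm : ∀ j, 0 < m j) : m 1 + m 3 ≠ 0 := (add_pos (hm 1) (hm 3)).ne'

lemma Mtot3_pos {m : Fin 4 → ℝ} (hm : ∀ j, 0 < m j) : 0 < Mtot3 m := by
  have := hm 0; have := hm 1; have := hm 2; have := hm 3
  unfold Mtot3; positivity

lemma Mtot2_pos {m : Fin 4 → ℝ} (hm : ∀ j, 0 < m j) : 0 < Mtot2 m := by
  have := hm 0; have := hm 1; have := hm 2
  unfold Mtot2; positivity

lemma Mtot1_pos {m : Fin 4 → ℝ} (hm : ∀ j, 0 < m j) : 0 < Mtot1 m := add_pos (hm 0) (hm 1)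
lemma binA_assemble {m : Fin 4 → ℝ} (hm : ∀ j, 0 < m j) (z ζ S c : V3) :
    binA (assemble m z ζ S c) = z := by
  have := ne_A hm
  simp only [binA, assemble, Matrix.cons_val]
  match_scalars <;> field_simp <;> ring

lemma binB_assemble {m : Fin 4 → ℝ} (hm : ∀ j, 0 < m j) (z ζ S c : V3) :
    binB (assemble m z ζ S c) = ζ := by
  have := ne_B hm
  simp only [binB, assemble, Matrix.cons_val]
  match_scalars <;> field_simp <;> ring

lemma sep_assemble {m : Fin 4 → ℝ} (hm : ∀ j, 0 < m j) (z ζ S c : V3) :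
    sep m (assemble m z ζ S c) = S := by
  have := ne_A hm
  have := ne_B hm
  have := (Mtot3_pos hm).ne'
  simp only [sep, assemble, Matrix.cons_val]
  match_scalars <;> field_simp <;> (try simp only [Mtot3]) <;> ring

lemma com_assemble {m : Fin 4 → ℝ} (hm : ∀ j, 0 < m j) (z ζ S c : V3) :
    com m (assemble m z ζ S c) = c := by
  have := ne_A hm
  have := ne_B hm
  have := (Mtot3_pos hm).ne'
  simp only [com, assemble, Matrix.cons_val]
  match_scalars <;> field_simp <;> (try simp only [Mtot3]) <;> ring

lemma eq_assemble {m : Fin 4 → ℝ} (hm : ∀ j, 0 < m j) (p : Fin 4 → V3) :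
    p = assemble m (binA p) (binB p) (sep m p) (com m p) := by
  have := ne_A hm
  have := ne_B hm
  have := (Mtot3_pos hm).ne'
  funext i
  fin_cases i <;>
  simp only [com, binA, binB, sep, assemble, Matrix.cons_val, Fin.zero_eta, Fin.mk_one,
    Fin.reduceFinMk] <;>
  match_scalars <;> field_simp <;> (try simp only [Mtot3]) <;> ring

/-- Newtonian accelerations. -/
def newtonAcc (m : Fin 4 → ℝ) (p : Fin 4 → V3) (j : Fin 4) : V3 :=
  ∑ i ∈ Finset.univ.filter (fun i => i ≠ j), (m i / ‖p i - p j‖ ^ 3) • (p i - p j)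

/-- The unit Kepler field. -/
def keplerField (x : V3) : V3 := (1 / ‖x‖ ^ 3) • x

lemma keplerField_neg (x : V3) : keplerField (-x) = -keplerField x := by
  simp [keplerField]

lemma keplerField_sub_comm (x y : V3) : keplerField (x - y) = -keplerField (y - x) := by
  rw [← keplerField_neg, neg_sub]

lemma newtonAcc_eq (m : Fin 4 → ℝ) (p : Fin 4 → V3) (j : Fin 4) : newtonAcc m p j =
    ∑ i ∈ Finset.univ.filter (fun i => i ≠ j), m i • keplerField (p i - p j) := by
  refine Finset.sum_congr rfl fun i _ => ?_
  rw [keplerField, smul_smul, mul_one_div]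

/-- Tidal acceleration on the binary `0, 2`. -/
def tideA (m : Fin 4 → ℝ) (p : Fin 4 → V3) : V3 :=
  m 1 • (keplerField (p 1 - p 2) - keplerField (p 1 - p 0))
    + m 3 • (keplerField (p 3 - p 2) - keplerField (p 3 - p 0))

/-- Tidal acceleration on the binary `1, 3`. -/
def tideB (m : Fin 4 → ℝ) (p : Fin 4 → V3) : V3 :=
  m 0 • (keplerField (p 0 - p 3) - keplerField (p 0 - p 1))
    + m 2 • (keplerField (p 2 - p 3) - keplerField (p 2 - p 1))

/-- Tidal acceleration on the relative motion of the two binaries. -/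
def tideS (m : Fin 4 → ℝ) (p : Fin 4 → V3) : V3 :=
  -(Mtot3 m / ((m 0 + m 2) * (m 1 + m 3))) •
    ((m 0 * m 1) • (keplerField (p 1 - p 0) - keplerField (sep m p))
      + (m 0 * m 3) • (keplerField (p 3 - p 0) - keplerField (sep m p))
      + (m 2 * m 1) • (keplerField (p 1 - p 2) - keplerField (sep m p))
      + (m 2 * m 3) • (keplerField (p 3 - p 2) - keplerField (sep m p)))

lemma newtonAcc_zero (m : Fin 4 → ℝ) (p : Fin 4 → V3) : newtonAcc m p 0 =
    m 1 • keplerField (p 1 - p 0) + m 2 • keplerField (p 2 - p 0)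
      + m 3 • keplerField (p 3 - p 0) := by
  rw [newtonAcc_eq, Finset.sum_filter, Fin.sum_univ_four]
  simp

lemma newtonAcc_one (m : Fin 4 → ℝ) (p : Fin 4 → V3) : newtonAcc m p 1 =
    m 0 • keplerField (p 0 - p 1) + m 2 • keplerField (p 2 - p 1)
      + m 3 • keplerField (p 3 - p 1) := by
  rw [newtonAcc_eq, Finset.sum_filter, Fin.sum_univ_four]
  simp

lemma newtonAcc_two (m : Fin 4 → ℝ) (p : Fin 4 → V3) : newtonAcc m p 2 =
    m 0 • keplerField (p 0 - p 2) + m 1 • keplerField (p 1 - p 2)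
      + m 3 • keplerField (p 3 - p 2) := by
  rw [newtonAcc_eq, Finset.sum_filter, Fin.sum_univ_four]
  simp

lemma newtonAcc_three (m : Fin 4 → ℝ) (p : Fin 4 → V3) : newtonAcc m p 3 =
    m 0 • keplerField (p 0 - p 3) + m 1 • keplerField (p 1 - p 3)
      + m 2 • keplerField (p 2 - p 3) := by
  rw [newtonAcc_eq, Finset.sum_filter, Fin.sum_univ_four]
  simp

lemma binA_newtonAcc (m : Fin 4 → ℝ) (p : Fin 4 → V3) :
    binA (newtonAcc m p) = -(m 0 + m 2) • keplerField (binA p) + tideA m p := by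
  rw [binA, newtonAcc_zero, newtonAcc_two, binA, tideA, keplerField_sub_comm (p 0) (p 2)]
  module

lemma binB_newtonAcc (m : Fin 4 → ℝ) (p : Fin 4 → V3) :
    binB (newtonAcc m p) = -(m 1 + m 3) • keplerField (binB p) + tideB m p := by
  rw [binB, newtonAcc_one, newtonAcc_three, binB, tideB, keplerField_sub_comm (p 1) (p 3)]
  module

lemma sep_newtonAcc {m : Fin 4 → ℝ} (hm : ∀ j, 0 < m j) (p : Fin 4 → V3) :
    sep m (newtonAcc m p) = -Mtot3 m • keplerField (sep m p) + tideS m p := by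
  have := ne_A hm
  have := ne_B hm
  rw [tideS]
  generalize hk : keplerField (sep m p) = K
  rw [sep, newtonAcc_zero, newtonAcc_one, newtonAcc_two, newtonAcc_three,
    keplerField_sub_comm (p 0) (p 1), keplerField_sub_comm (p 0) (p 2),
    keplerField_sub_comm (p 0) (p 3), keplerField_sub_comm (p 2) (p 1),
    keplerField_sub_comm (p 2) (p 3), keplerField_sub_comm (p 1) (p 3)]
  match_scalars <;> field_simp <;> (try simp only [Mtot3]) <;> ring

lemma com_newtonAcc (m : Fin 4 → ℝ) (p : Fin 4 → V3) : com m (newtonAcc m p) = 0 := by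
  rw [com, newtonAcc_zero, newtonAcc_one, newtonAcc_two, newtonAcc_three,
    keplerField_sub_comm (p 0) (p 1), keplerField_sub_comm (p 0) (p 2),
    keplerField_sub_comm (p 0) (p 3), keplerField_sub_comm (p 2) (p 1),
    keplerField_sub_comm (p 2) (p 3), keplerField_sub_comm (p 1) (p 3)]
  module

lemma norm_smul_le_of_mem_Icc {a : ℝ} (h0 : 0 ≤ a) (h1 : a ≤ 1) (x : V3) : ‖a • x‖ ≤ ‖x‖ := by
  rw [norm_smul, Real.norm_eq_abs, abs_of_nonneg h0]
  exact mul_le_of_le_one_left (norm_nonneg _) h1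

lemma cross_sub_sep_10 {m : Fin 4 → ℝ} (hm : ∀ j, 0 < m j) (p : Fin 4 → V3) :
    ‖p 1 - p 0 - sep m p‖ ≤ ‖binA p‖ + ‖binB p‖ := by
  have h0 := hm 0; have h1 := hm 1; have h2 := hm 2; have h3 := hm 3
  have e : p 1 - p 0 - sep m p = (m 2 / (m 0 + m 2)) • binA p - (m 3 / (m 1 + m 3)) • binB p := by
    simp only [sep, binA, binB]
    match_scalars <;> field_simp <;> ring
  rw [e]
  refine (norm_sub_le _ _).trans (add_le_add ?_ ?_) <;>
  refine norm_smul_le_of_mem_Icc (by positivity) ?_ _ <;>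
  rw [div_le_one (by positivity)] <;> linarith

lemma cross_sub_sep_30 {m : Fin 4 → ℝ} (hm : ∀ j, 0 < m j) (p : Fin 4 → V3) :
    ‖p 3 - p 0 - sep m p‖ ≤ ‖binA p‖ + ‖binB p‖ := by
  have h0 := hm 0; have h1 := hm 1; have h2 := hm 2; have h3 := hm 3
  have e : p 3 - p 0 - sep m p = (m 2 / (m 0 + m 2)) • binA p + (m 1 / (m 1 + m 3)) • binB p := by
    simp only [sep, binA, binB]
    match_scalars <;> field_simp <;> ring
  rw [e]
  refine (norm_add_le _ _).trans (add_le_add ?_ ?_) <;>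
  refine norm_smul_le_of_mem_Icc (by positivity) ?_ _ <;>
  rw [div_le_one (by positivity)] <;> linarith

lemma cross_sub_sep_12 {m : Fin 4 → ℝ} (hm : ∀ j, 0 < m j) (p : Fin 4 → V3) :
    ‖p 1 - p 2 - sep m p‖ ≤ ‖binA p‖ + ‖binB p‖ := by
  have h0 := hm 0; have h1 := hm 1; have h2 := hm 2; have h3 := hm 3
  have e : p 1 - p 2 - sep m p =
      -((m 0 / (m 0 + m 2)) • binA p) - (m 3 / (m 1 + m 3)) • binB p := by
    simp only [sep, binA, binB]
    match_scalars <;> field_simp <;> ring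
  rw [e]
  refine (norm_sub_le _ _).trans (add_le_add ((norm_neg _).le.trans ?_) ?_) <;>
  refine norm_smul_le_of_mem_Icc (by positivity) ?_ _ <;>
  rw [div_le_one (by positivity)] <;> linarith

lemma cross_sub_sep_32 {m : Fin 4 → ℝ} (hm : ∀ j, 0 < m j) (p : Fin 4 → V3) :
    ‖p 3 - p 2 - sep m p‖ ≤ ‖binA p‖ + ‖binB p‖ := by
  have h0 := hm 0; have h1 := hm 1; have h2 := hm 2; have h3 := hm 3
  have e : p 3 - p 2 - sep m p =
      -((m 0 / (m 0 + m 2)) • binA p) + (m 1 / (m 1 + m 3)) • binB p := by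
    simp only [sep, binA, binB]
    match_scalars <;> field_simp <;> ring
  rw [e]
  refine (norm_add_le _ _).trans (add_le_add ((norm_neg _).le.trans ?_) ?_) <;>
  refine norm_smul_le_of_mem_Icc (by positivity) ?_ _ <;>
  rw [div_le_one (by positivity)] <;> linarith

lemma le_cross_dist {m : Fin 4 → ℝ} (hm : ∀ j, 0 < m j) {p : Fin 4 → V3} {D : ℝ}
    (hp : D + ‖binA p‖ + ‖binB p‖ ≤ ‖sep m p‖) :
    D ≤ ‖p 1 - p 0‖ ∧ D ≤ ‖p 3 - p 0‖ ∧ D ≤ ‖p 1 - p 2‖ ∧ D ≤ ‖p 3 - p 2‖ := by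
  have key : ∀ y : V3, ‖y - sep m p‖ ≤ ‖binA p‖ + ‖binB p‖ → D ≤ ‖y‖ := fun y hy => by
    have := norm_sub_norm_le (sep m p) y
    rw [norm_sub_rev] at this
    linarith
  exact ⟨key _ (cross_sub_sep_10 hm p), key _ (cross_sub_sep_30 hm p),
    key _ (cross_sub_sep_12 hm p), key _ (cross_sub_sep_32 hm p)⟩

lemma norm_tideA_le {m : Fin 4 → ℝ} (hm : ∀ j, 0 < m j) {p : Fin 4 → V3} {D : ℝ}
    (hp : D + ‖binA p‖ + ‖binB p‖ ≤ ‖sep m p‖) (hD : 0 < D) :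
    ‖tideA m p‖ ≤ 4 * (m 1 + m 3) * D⁻¹ ^ 3 * ‖binA p‖ := by
  obtain ⟨h10, h30, h12, h32⟩ := le_cross_dist hm hp
  have h1 := hm 1; have h3 := hm 3
  have k1 := kepler_sub_le hD h12 h10
  have k3 := kepler_sub_le hD h32 h30
  have e1 : p 1 - p 2 - (p 1 - p 0) = -binA p := by rw [binA]; abel
  have e3 : p 3 - p 2 - (p 3 - p 0) = -binA p := by rw [binA]; abel
  rw [e1, norm_neg] at k1
  rw [e3, norm_neg] at k3
  refine (norm_add_le _ _).trans ?_
  rw [norm_smul, norm_smul, Real.norm_eq_abs, Real.norm_eq_abs, abs_of_pos h1, abs_of_pos h3]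
  have := mul_le_mul_of_nonneg_left k1 h1.le
  have := mul_le_mul_of_nonneg_left k3 h3.le
  simp only [keplerField]
  linarith

lemma norm_tideB_le {m : Fin 4 → ℝ} (hm : ∀ j, 0 < m j) {p : Fin 4 → V3} {D : ℝ}
    (hp : D + ‖binA p‖ + ‖binB p‖ ≤ ‖sep m p‖) (hD : 0 < D) :
    ‖tideB m p‖ ≤ 4 * (m 0 + m 2) * D⁻¹ ^ 3 * ‖binB p‖ := by
  obtain ⟨h10, h30, h12, h32⟩ := le_cross_dist hm hp
  have h0 := hm 0; have h2 := hm 2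
  rw [norm_sub_rev] at h10 h30 h12 h32
  have k0 := kepler_sub_le hD h30 h10
  have k2 := kepler_sub_le hD h32 h12
  have e0 : p 0 - p 3 - (p 0 - p 1) = -binB p := by rw [binB]; abel
  have e2 : p 2 - p 3 - (p 2 - p 1) = -binB p := by rw [binB]; abel
  rw [e0, norm_neg] at k0
  rw [e2, norm_neg] at k2
  refine (norm_add_le _ _).trans ?_
  rw [norm_smul, norm_smul, Real.norm_eq_abs, Real.norm_eq_abs, abs_of_pos h0, abs_of_pos h2]
  have := mul_le_mul_of_nonneg_left k0 h0.le
  have := mul_le_mul_of_nonneg_left k2 h2.le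
  simp only [keplerField]
  linarith

lemma norm_tideS_le {m : Fin 4 → ℝ} (hm : ∀ j, 0 < m j) {p : Fin 4 → V3} {D : ℝ}
    (hp : D + ‖binA p‖ + ‖binB p‖ ≤ ‖sep m p‖) (hD : 0 < D) :
    ‖tideS m p‖ ≤ 4 * Mtot3 m * D⁻¹ ^ 3 * (‖binA p‖ + ‖binB p‖) := by
  obtain ⟨h10, h30, h12, h32⟩ := le_cross_dist hm hp
  have h0 := hm 0; have h1 := hm 1; have h2 := hm 2; have h3 := hm 3
  have hM := Mtot3_pos hm
  have hS : D ≤ ‖sep m p‖ := by linarith [norm_nonneg (binA p), norm_nonneg (binB p)]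
  set L := 4 * D⁻¹ ^ 3 * (‖binA p‖ + ‖binB p‖) with hL
  have key : ∀ y : V3, D ≤ ‖y‖ → ‖y - sep m p‖ ≤ ‖binA p‖ + ‖binB p‖ →
      ‖keplerField y - keplerField (sep m p)‖ ≤ L := fun y hy hy' =>
    (kepler_sub_le hD hy hS).trans
      (mul_le_mul_of_nonneg_left hy' (by positivity))
  have b10 := key _ h10 (cross_sub_sep_10 hm p)
  have b30 := key _ h30 (cross_sub_sep_30 hm p)
  have b12 := key _ h12 (cross_sub_sep_12 hm p)
  have b32 := key _ h32 (cross_sub_sep_32 hm p)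
  have hsm : ∀ (a : ℝ) (y : V3), 0 ≤ a → ‖y‖ ≤ L → ‖a • y‖ ≤ a * L := fun a y ha hy => by
    rw [norm_smul, Real.norm_eq_abs, abs_of_nonneg ha]
    gcongr
  rw [tideS, norm_smul, norm_neg, Real.norm_eq_abs, abs_of_pos (by positivity)]
  have hsum := norm_add_le_of_le (norm_add_le_of_le (norm_add_le_of_le
    (hsm (m 0 * m 1) _ (by positivity) b10) (hsm (m 0 * m 3) _ (by positivity) b30))
    (hsm (m 2 * m 1) _ (by positivity) b12)) (hsm (m 2 * m 3) _ (by positivity) b32)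
  refine (mul_le_mul_of_nonneg_left hsum (by positivity)).trans (le_of_eq ?_)
  rw [hL]
  field_simp
  ring

/-! ### Rescaled arcs and the hierarchical solution -/

/-- Parameters of a nearly rectilinear Kepler arc: mass `k`, scale `l`, dimensionless initial
speed `g`, tolerance `kap`, and the directions of the initial position and velocity. -/
structure ArcParam where
  k : ℝ
  l : ℝ
  g : ℝ
  kap : ℝ
  d : V3
  e : V3

namespace ArcParam

/-- Rescaled position. -/
def pos (P : ArcParam) (r : ℝ → V3) (s : ℝ) : V3 := (1 / (P.k * P.l ^ 2)) • r (P.k * P.l ^ 3 * s)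

/-- Rescaled velocity. -/
def vel (P : ArcParam) (u : ℝ → V3) (s : ℝ) : V3 := P.l • u (P.k * P.l ^ 3 * s)

/-- Rescaled perturbing acceleration. -/
def force (P : ArcParam) (f : ℝ → V3) (s : ℝ) : V3 := (P.k * P.l ^ 4) • f (P.k * P.l ^ 3 * s)

/-- The arc tolerates a perturbation of size `F` during a time `T`. -/
structure Admissible (P : ArcParam) (F T : ℝ) : Prop where
  k_pos : 0 < P.k
  l_pos : 0 < P.l
  g_pos : 0 < P.g
  g_le : P.g ≤ 1 / 100
  kap_nonneg : 0 ≤ P.kap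
  kap_le : P.kap ≤ 1 / 10000
  norm_d : ‖P.d‖ = 1
  norm_e : ‖P.e‖ = 1
  inner_d_e : ⟪P.d, P.e⟫ = 0
  F_nonneg : 0 ≤ F
  force_le : P.k * P.l ^ 4 * F ≤ 1 / 100
  force_mul_le : P.l * F * T ≤ P.kap * P.g

/-- The state `(r, u)` satisfies the a priori bounds when this is nonpositive. -/
def slack (P : ArcParam) (r u : V3) : ℝ :=
  max (max (‖r‖ - 2 * (P.k * P.l ^ 2)) (P.k * P.l ^ 2 * P.g ^ 2 / 4 - ‖r‖))
    (‖u‖ - 6 / (P.g * P.l))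

variable {P : ArcParam} {F T τ : ℝ} {r u f : ℝ → V3}

lemma slack_le_iff {a b : V3} : P.slack a b ≤ 0 ↔ ‖a‖ ≤ 2 * (P.k * P.l ^ 2) ∧
    P.k * P.l ^ 2 * P.g ^ 2 / 4 ≤ ‖a‖ ∧ ‖b‖ ≤ 6 / (P.g * P.l) := by
  simp only [slack, max_le_iff, sub_nonpos, and_assoc]

lemma slack_lt_iff {a b : V3} : P.slack a b < 0 ↔ ‖a‖ < 2 * (P.k * P.l ^ 2) ∧
    P.k * P.l ^ 2 * P.g ^ 2 / 4 < ‖a‖ ∧ ‖b‖ < 6 / (P.g * P.l) := by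
  simp only [slack, max_lt_iff, sub_neg, and_assoc]

lemma pertKepler (hP : P.Admissible F T) (hτT : τ ≤ T)
    (hr : ∀ t ∈ Icc 0 τ, HasDerivAt r (u t) t)
    (hu : ∀ t ∈ Icc 0 τ, HasDerivAt u (-P.k • keplerField (r t) + f t) t)
    (hf : ∀ t ∈ Icc 0 τ, ‖f t‖ ≤ F) (hs : ∀ t ∈ Icc 0 τ, P.slack (r t) (u t) ≤ 0)
    (hr0 : r 0 = (P.k * P.l ^ 2) • P.d) (hu0 : u 0 = (P.g / P.l) • P.e) :
    PertKepler (P.pos r) (P.vel u) (P.force f) P.d P.e P.g P.kap (P.k * P.l ^ 4 * F)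
      (τ / (P.k * P.l ^ 3)) := by
  have hk := hP.k_pos
  have hl := hP.l_pos
  have hg := hP.g_pos
  have hmem : ∀ s ∈ Icc 0 (τ / (P.k * P.l ^ 3)), P.k * P.l ^ 3 * s ∈ Icc 0 τ := fun s hs => by
    refine ⟨mul_nonneg (by positivity) hs.1, ?_⟩
    have := (le_div_iff₀ (by positivity)).1 hs.2
    linarith
  have hlin : ∀ s : ℝ, HasDerivAt (fun s => P.k * P.l ^ 3 * s) (P.k * P.l ^ 3) s := fun s => by
    simpa using (hasDerivAt_id s).const_mul (P.k * P.l ^ 3)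
  have hnorm : ∀ s, ‖P.pos r s‖ = ‖r (P.k * P.l ^ 3 * s)‖ / (P.k * P.l ^ 2) := fun s => by
    rw [pos, norm_smul, Real.norm_eq_abs, abs_of_pos (by positivity)]
    ring
  refine
    { pos_deriv := fun s hs' => ?_
      vel_deriv := fun s hs' => ?_
      ne_zero := fun s hs' => ?_
      force_le := fun s hs' => ?_
      pos_le := fun s hs' => ?_
      vel_le := fun s hs' => ?_
      pos_zero := ?_
      vel_zero := ?_
      norm_dir := hP.norm_d
      norm_vel_dir := hP.norm_e
      inner_dir := hP.inner_d_e
      g_pos := hg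
      g_le := hP.g_le
      kappa_nonneg := hP.kap_nonneg
      kappa_le := hP.kap_le
      eps_le := hP.force_le
      eps_mul_le := ?_ }
  · have h := ((hr _ (hmem s hs')).scomp s (hlin s)).const_smul (1 / (P.k * P.l ^ 2))
    refine h.congr_deriv ?_
    rw [vel, smul_smul]
    congr 1
    field_simp
  · have h := ((hu _ (hmem s hs')).scomp s (hlin s)).const_smul P.l
    refine h.congr_deriv ?_
    have hr' : ‖r (P.k * P.l ^ 3 * s)‖ ≠ 0 := by
      have := (slack_le_iff.1 (hs _ (hmem s hs'))).2.1
      have : 0 < P.k * P.l ^ 2 * P.g ^ 2 / 4 := by positivity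
      linarith
    rw [hnorm, pos, force, keplerField]
    match_scalars
    · field_simp
    · field_simp
  · rw [← norm_pos_iff, hnorm]
    have h1 := (slack_le_iff.1 (hs _ (hmem s hs'))).2.1
    have : 0 < P.k * P.l ^ 2 * P.g ^ 2 / 4 := by positivity
    have : 0 < ‖r (P.k * P.l ^ 3 * s)‖ := by linarith
    positivity
  · rw [force, norm_smul, Real.norm_eq_abs, abs_of_pos (by positivity)]
    exact mul_le_mul_of_nonneg_left (hf _ (hmem s hs')) (by positivity)
  · rw [hnorm, div_le_iff₀ (by positivity)]
    exact (slack_le_iff.1 (hs _ (hmem s hs'))).1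
  · have h1 := (slack_le_iff.1 (hs _ (hmem s hs'))).2.2
    rw [vel, norm_smul, Real.norm_eq_abs, abs_of_pos hl]
    calc P.l * ‖u (P.k * P.l ^ 3 * s)‖ ≤ P.l * (6 / (P.g * P.l)) := by gcongr
      _ = 6 / P.g := by field_simp
  · rw [pos, mul_zero, hr0, smul_smul, one_div, inv_mul_cancel₀ (by positivity), one_smul]
  · rw [vel, mul_zero, hu0, smul_smul, mul_div_cancel₀ _ hl.ne']
  · have h := hP.force_mul_le
    have : P.k * P.l ^ 4 * F * (τ / (P.k * P.l ^ 3)) = P.l * F * τ := by field_simp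
    rw [this]
    refine le_trans ?_ h
    have := hP.F_nonneg
    gcongr

lemma slack_lt (hP : P.Admissible F T) (hτ : 0 ≤ τ)
    (H : PertKepler (P.pos r) (P.vel u) (P.force f) P.d P.e P.g P.kap (P.k * P.l ^ 4 * F)
      (τ / (P.k * P.l ^ 3))) : P.slack (r τ) (u τ) < 0 := by
  have hk := hP.k_pos
  have hl := hP.l_pos
  have hg := hP.g_pos
  have hmem : τ / (P.k * P.l ^ 3) ∈ Icc 0 (τ / (P.k * P.l ^ 3)) := ⟨by positivity, le_rfl⟩
  have e : P.k * P.l ^ 3 * (τ / (P.k * P.l ^ 3)) = τ := by field_simp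
  have h1 := H.norm_le hmem
  have h2 := H.norm_ge hmem
  have h3 := H.norm_vel_lt hmem
  rw [pos, e, norm_smul, Real.norm_eq_abs, abs_of_pos (by positivity), one_div_mul_eq_div] at h1 h2
  rw [vel, e, norm_smul, Real.norm_eq_abs, abs_of_pos hl] at h3
  rw [div_le_iff₀ (by positivity)] at h1
  rw [le_div_iff₀ (by positivity)] at h2
  have hkl : 0 < P.k * P.l ^ 2 := by positivity
  refine slack_lt_iff.2 ⟨by linarith, ?_, ?_⟩
  · have : 0 < P.g ^ 2 * (P.k * P.l ^ 2) := by positivity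
    linarith
  · rw [lt_div_iff₀ (by positivity)]
    have h4 := mul_le_mul_of_nonneg_right h3 hg.le
    have : 5 / (2 * P.g) * P.g = 5 / 2 := by field_simp
    linarith

lemma continuousAt_slack {t : ℝ} (hr : ContinuousAt r t) (hu : ContinuousAt u t) :
    ContinuousAt (fun s => P.slack (r s) (u s)) t := by
  unfold slack
  fun_prop

end ArcParam

lemma HasDerivAt.binA {x : Fin 4 → ℝ → V3} {x' : Fin 4 → V3} {t : ℝ}
    (h : ∀ j, HasDerivAt (x j) (x' j) t) :
    HasDerivAt (fun s => _root_.binA (posAt x s)) (_root_.binA x') t :=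
  (h 2).sub (h 0)

lemma HasDerivAt.binB {x : Fin 4 → ℝ → V3} {x' : Fin 4 → V3} {t : ℝ}
    (h : ∀ j, HasDerivAt (x j) (x' j) t) :
    HasDerivAt (fun s => _root_.binB (posAt x s)) (_root_.binB x') t :=
  (h 3).sub (h 1)

lemma HasDerivAt.sep {m : Fin 4 → ℝ} {x : Fin 4 → ℝ → V3} {x' : Fin 4 → V3} {t : ℝ}
    (h : ∀ j, HasDerivAt (x j) (x' j) t) :
    HasDerivAt (fun s => _root_.sep m (posAt x s)) (_root_.sep m x') t :=
  ((((h 1).const_smul (m 1 / (m 1 + m 3))).add ((h 3).const_smul (m 3 / (m 1 + m 3)))).sub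
    ((h 0).const_smul (m 0 / (m 0 + m 2)))).sub ((h 2).const_smul (m 2 / (m 0 + m 2)))

lemma HasDerivAt.com {m : Fin 4 → ℝ} {x : Fin 4 → ℝ → V3} {x' : Fin 4 → V3} {t : ℝ}
    (h : ∀ j, HasDerivAt (x j) (x' j) t) :
    HasDerivAt (fun s => _root_.com m (posAt x s)) (_root_.com m x') t :=
  (((((h 0).const_smul (m 0)).add ((h 1).const_smul (m 1))).add ((h 2).const_smul (m 2))).add
    ((h 3).const_smul (m 3))).const_smul (1 / Mtot3 m)

lemma norm_apply_le {m : Fin 4 → ℝ} (hm : ∀ j, 0 < m j) (p : Fin 4 → V3) (j : Fin 4) :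
    ‖p j‖ ≤ ‖com m p‖ + ‖sep m p‖ + ‖binA p‖ + ‖binB p‖ := by
  have h0 := hm 0; have h1 := hm 1; have h2 := hm 2; have h3 := hm 3
  have hM : m 0 + m 1 + m 2 + m 3 = Mtot3 m := rfl
  have hMp := Mtot3_pos hm
  rw [congrFun (eq_assemble hm p) j]
  have hA := norm_nonneg (binA p)
  have hB := norm_nonneg (binB p)
  have key : ∀ (c S z : V3) (a b : ℝ), |a| ≤ 1 → |b| ≤ 1 →
      ‖c + a • S + b • z‖ ≤ ‖c‖ + ‖S‖ + ‖z‖ := fun c S z a b ha hb => by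
    refine (norm_add₃_le).trans ?_
    rw [norm_smul, norm_smul]
    gcongr <;> exact mul_le_of_le_one_left (norm_nonneg _) ‹_›
  have hq : ∀ a b : ℝ, 0 < a → a ≤ b → |a / b| ≤ 1 := fun a b ha hab => by
    rw [abs_of_pos (by have := ha.trans_le hab; positivity), div_le_one (by linarith)]
    exact hab
  have hq' : ∀ a b : ℝ, 0 < a → a ≤ b → |-(a / b)| ≤ 1 := fun a b ha hab => by
    rw [abs_neg]; exact hq a b ha hab
  fin_cases j <;> simp only [assemble, Matrix.cons_val, Fin.zero_eta, Fin.mk_one,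
    Fin.reduceFinMk, sub_eq_add_neg, ← neg_smul]
  · have := key (com m p) (sep m p) (binA p) _ _ (hq' (m 1 + m 3) (Mtot3 m) (by linarith)
      (by linarith)) (hq' (m 2) (m 0 + m 2) h2 (by linarith))
    linarith
  · have := key (com m p) (sep m p) (binB p) _ _ (hq (m 0 + m 2) (Mtot3 m) (by linarith)
      (by linarith)) (hq' (m 3) (m 1 + m 3) h3 (by linarith))
    linarith
  · have := key (com m p) (sep m p) (binA p) _ _ (hq' (m 1 + m 3) (Mtot3 m) (by linarith)
      (by linarith)) (hq (m 0) (m 0 + m 2) h0 (by linarith))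
    linarith
  · have := key (com m p) (sep m p) (binB p) _ _ (hq (m 0 + m 2) (Mtot3 m) (by linarith)
      (by linarith)) (hq (m 1) (m 1 + m 3) h1 (by linarith))
    linarith

/-- All mutual distances are bounded below in a hierarchical configuration. -/
lemma le_dist_of_hierarchy {m : Fin 4 → ℝ} (hm : ∀ j, 0 < m j) {p : Fin 4 → V3} {D ρ : ℝ}
    (hp : D + ‖binA p‖ + ‖binB p‖ ≤ ‖sep m p‖) (hD : ρ ≤ D) (hA : ρ ≤ ‖binA p‖)
    (hB : ρ ≤ ‖binB p‖) (i j : Fin 4) (hij : i ≠ j) : ρ ≤ ‖p i - p j‖ := by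
  obtain ⟨h10, h30, h12, h32⟩ := le_cross_dist hm hp
  have h01 := h10; have h03 := h30; have h21 := h12; have h23 := h32
  rw [norm_sub_rev] at h01 h03 h21 h23
  have hA' := hA; have hB' := hB
  rw [binA] at hA hA'
  rw [binB] at hB hB'
  rw [norm_sub_rev] at hA' hB'
  fin_cases i <;> fin_cases j <;> first | exact absurd rfl hij | assumption |
    (refine hD.trans ?_; assumption)

lemma ArcParam.Admissible.slack_init {P : ArcParam} {F T : ℝ} (hP : P.Admissible F T) :
    P.slack ((P.k * P.l ^ 2) • P.d) ((P.g / P.l) • P.e) < 0 := by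
  have := hP.k_pos; have := hP.l_pos; have := hP.g_pos; have := hP.g_le
  have hkl : 0 < P.k * P.l ^ 2 := by positivity
  have hg2 : P.g ^ 2 < 1 := by nlinarith
  rw [ArcParam.slack_lt_iff, norm_smul, norm_smul, hP.norm_d, hP.norm_e, mul_one, mul_one,
    Real.norm_eq_abs, Real.norm_eq_abs, abs_of_pos (by positivity), abs_of_pos (by positivity)]
  refine ⟨by linarith, by nlinarith, ?_⟩
  rw [div_lt_div_iff₀ (by positivity) (by positivity)]
  nlinarith

set_option maxHeartbeats 800000 in
/-- A pair of binaries on nearly rectilinear arcs of widely different scales: a genuine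
collision-free solution on `[0, T]`, with quantitative control of its three relative motions. -/
theorem exists_hierarchical_solution {m : Fin 4 → ℝ} (hm : ∀ j, 0 < m j) {PA PB PS : ArcParam}
    {D T : ℝ} (hkA : PA.k = m 0 + m 2) (hkB : PB.k = m 1 + m 3) (hkS : PS.k = Mtot3 m)
    (hD : 0 < D) (hT : 0 ≤ T)
    (hsep : D + 2 * (PA.k * PA.l ^ 2) + 2 * (PB.k * PB.l ^ 2) ≤ PS.k * PS.l ^ 2 * PS.g ^ 2 / 4)
    (hA : PA.Admissible (4 * PB.k * D⁻¹ ^ 3 * (2 * (PA.k * PA.l ^ 2))) T)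
    (hB : PB.Admissible (4 * PA.k * D⁻¹ ^ 3 * (2 * (PB.k * PB.l ^ 2))) T)
    (hS : PS.Admissible
      (4 * PS.k * D⁻¹ ^ 3 * (2 * (PA.k * PA.l ^ 2) + 2 * (PB.k * PB.l ^ 2))) T) (w : V3) :
    ∃ x v : Fin 4 → ℝ → V3, IsFourBodySolution m (Icc 0 T) x v ∧
      (∀ t ∈ Icc 0 T, com m (posAt v t) = w) ∧
      (∃ f ε, PertKepler (PA.pos fun t => binA (posAt x t)) (PA.vel fun t => binA (posAt v t)) f
        PA.d PA.e PA.g PA.kap ε (T / (PA.k * PA.l ^ 3))) ∧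
      (∃ f ε, PertKepler (PB.pos fun t => binB (posAt x t)) (PB.vel fun t => binB (posAt v t)) f
        PB.d PB.e PB.g PB.kap ε (T / (PB.k * PB.l ^ 3))) ∧
      (∃ f ε, PertKepler (PS.pos fun t => sep m (posAt x t)) (PS.vel fun t => sep m (posAt v t)) f
        PS.d PS.e PS.g PS.kap ε (T / (PS.k * PS.l ^ 3))) := by
  have hkAp := hA.k_pos; have hkBp := hB.k_pos; have hkSp := hS.k_pos
  have hlA := hA.l_pos; have hlB := hB.l_pos; have hlS := hS.l_pos
  have hgA := hA.g_pos; have hgB := hB.g_pos; have hgS := hS.g_pos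
  set ρ := min D (min (PA.k * PA.l ^ 2 * PA.g ^ 2 / 4) (PB.k * PB.l ^ 2 * PB.g ^ 2 / 4)) with hρ
  have hρ0 : 0 < ρ := lt_min hD (lt_min (by positivity) (by positivity))
  set R := (‖w‖ + 1) + 6 / (PS.g * PS.l) + 6 / (PA.g * PA.l) + 6 / (PB.g * PB.l) with hR
  have hR0 : 0 < R := by positivity
  obtain ⟨x, v, hx0, hv0, hxv⟩ := exists_softened_solution hm hρ0 hR0 hT
    (assemble m ((PA.k * PA.l ^ 2) • PA.d) ((PB.k * PB.l ^ 2) • PB.d) ((PS.k * PS.l ^ 2) • PS.d) 0)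
    (assemble m ((PA.g / PA.l) • PA.e) ((PB.g / PB.l) • PB.e) ((PS.g / PS.l) • PS.e) w)
  replace hx0 : posAt x 0 = _ := funext hx0
  replace hv0 : posAt v 0 = _ := funext hv0
  set φ : ℝ → ℝ := fun t =>
    max (max (PA.slack (binA (posAt x t)) (binA (posAt v t)))
      (PB.slack (binB (posAt x t)) (binB (posAt v t))))
    (max (PS.slack (sep m (posAt x t)) (sep m (posAt v t))) (‖com m (posAt v t) - w‖ - 1)) with hφ
  have loose : ∀ {t}, φ t ≤ 0 → PA.slack (binA (posAt x t)) (binA (posAt v t)) ≤ 0 ∧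
      PB.slack (binB (posAt x t)) (binB (posAt v t)) ≤ 0 ∧
      PS.slack (sep m (posAt x t)) (sep m (posAt v t)) ≤ 0 ∧ ‖com m (posAt v t) - w‖ ≤ 1 := by
    intro t ht
    simpa only [hφ, max_le_iff, sub_nonpos, and_assoc] using ht
  have hier : ∀ {t}, φ t ≤ 0 →
      D + ‖binA (posAt x t)‖ + ‖binB (posAt x t)‖ ≤ ‖sep m (posAt x t)‖ := by
    intro t ht
    obtain ⟨hA', hB', hS', -⟩ := loose ht
    linarith [(ArcParam.slack_le_iff.1 hA').1, (ArcParam.slack_le_iff.1 hB').1,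
      (ArcParam.slack_le_iff.1 hS').2.1]
  have hdist : ∀ {t}, φ t ≤ 0 → ∀ i j : Fin 4, i ≠ j → ρ ≤ ‖x i t - x j t‖ := by
    intro t ht
    obtain ⟨hA', hB', -, -⟩ := loose ht
    refine le_dist_of_hierarchy hm (hier ht) (min_le_left _ _) ?_ ?_
    · exact ((min_le_right _ _).trans (min_le_left _ _)).trans (ArcParam.slack_le_iff.1 hA').2.1
    · exact ((min_le_right _ _).trans (min_le_right _ _)).trans (ArcParam.slack_le_iff.1 hB').2.1
  have hvelR : ∀ {t}, φ t ≤ 0 → ∀ j, ‖v j t‖ ≤ R := by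
    intro t ht j
    obtain ⟨hA', hB', hS', hc⟩ := loose ht
    have h1 := norm_apply_le hm (posAt v t) j
    have h2 : ‖com m (posAt v t)‖ ≤ ‖w‖ + 1 := by
      have := norm_sub_norm_le (com m (posAt v t)) w
      linarith
    have h3 := (ArcParam.slack_le_iff.1 hA').2.2
    have h4 := (ArcParam.slack_le_iff.1 hB').2.2
    have h5 := (ArcParam.slack_le_iff.1 hS').2.2
    have h6 : posAt v t j = v j t := rfl
    rw [h6] at h1
    linarith
  have hnewt : ∀ t ∈ Icc 0 T, φ t ≤ 0 → (∀ j, HasDerivAt (x j) (posAt v t j) t) ∧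
      ∀ j, HasDerivAt (v j) (newtonAcc m (posAt x t) j) t := by
    intro t ht hφt
    refine ⟨fun j => ?_, fun j => ?_⟩
    · exact (hxv t ht j).1.congr_deriv (radialClamp_of_le hR0 (hvelR hφt j))
    · refine (hxv t ht j).2.congr_deriv ?_
      rw [newtonAcc_eq]
      refine Finset.sum_congr rfl fun i hi => ?_
      rw [softKepler_of_le (hdist hφt i j (Finset.mem_filter.1 hi).2)]
      rfl
  have arcs : ∀ τ ∈ Icc 0 T, (∀ s ∈ Icc 0 τ, φ s ≤ 0) →
      (PertKepler (PA.pos fun t => binA (posAt x t)) (PA.vel fun t => binA (posAt v t))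
        (PA.force fun t => tideA m (posAt x t)) PA.d PA.e PA.g PA.kap
        (PA.k * PA.l ^ 4 * (4 * PB.k * D⁻¹ ^ 3 * (2 * (PA.k * PA.l ^ 2))))
        (τ / (PA.k * PA.l ^ 3))) ∧
      (PertKepler (PB.pos fun t => binB (posAt x t)) (PB.vel fun t => binB (posAt v t))
        (PB.force fun t => tideB m (posAt x t)) PB.d PB.e PB.g PB.kap
        (PB.k * PB.l ^ 4 * (4 * PA.k * D⁻¹ ^ 3 * (2 * (PB.k * PB.l ^ 2))))
        (τ / (PB.k * PB.l ^ 3))) ∧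
      (PertKepler (PS.pos fun t => sep m (posAt x t)) (PS.vel fun t => sep m (posAt v t))
        (PS.force fun t => tideS m (posAt x t)) PS.d PS.e PS.g PS.kap
        (PS.k * PS.l ^ 4 *
          (4 * PS.k * D⁻¹ ^ 3 * (2 * (PA.k * PA.l ^ 2) + 2 * (PB.k * PB.l ^ 2))))
        (τ / (PS.k * PS.l ^ 3))) ∧ com m (posAt v τ) = w := by
    intro τ hτ hs
    have hN : ∀ t ∈ Icc 0 τ, (∀ j, HasDerivAt (x j) (posAt v t j) t) ∧
        ∀ j, HasDerivAt (v j) (newtonAcc m (posAt x t) j) t := fun t ht =>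
      hnewt t ⟨ht.1, ht.2.trans hτ.2⟩ (hs t ht)
    have hDi : 0 ≤ D⁻¹ ^ 3 := by positivity
    refine ⟨ArcParam.pertKepler hA hτ.2 (fun t ht => .binA (hN t ht).1) (fun t ht => ?_)
        (fun t ht => ?_) (fun t ht => (loose (hs t ht)).1) ?_ ?_,
      ArcParam.pertKepler hB hτ.2 (fun t ht => .binB (hN t ht).1) (fun t ht => ?_)
        (fun t ht => ?_) (fun t ht => (loose (hs t ht)).2.1) ?_ ?_,
      ArcParam.pertKepler hS hτ.2 (fun t ht => .sep (hN t ht).1) (fun t ht => ?_)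
        (fun t ht => ?_) (fun t ht => (loose (hs t ht)).2.2.1) ?_ ?_, ?_⟩
    · rw [hkA, ← binA_newtonAcc]
      exact .binA (hN t ht).2
    · refine (norm_tideA_le hm (hier (hs t ht)) hD).trans ?_
      rw [← hkB]
      have := (ArcParam.slack_le_iff.1 (loose (hs t ht)).1).1
      gcongr
    · rw [hx0, binA_assemble hm]
    · rw [hv0, binA_assemble hm]
    · rw [hkB, ← binB_newtonAcc]
      exact .binB (hN t ht).2
    · refine (norm_tideB_le hm (hier (hs t ht)) hD).trans ?_
      rw [← hkA]
      have := (ArcParam.slack_le_iff.1 (loose (hs t ht)).2.1).1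
      gcongr
    · rw [hx0, binB_assemble hm]
    · rw [hv0, binB_assemble hm]
    · rw [hkS, ← sep_newtonAcc hm]
      exact .sep (hN t ht).2
    · refine (norm_tideS_le hm (hier (hs t ht)) hD).trans ?_
      rw [← hkS]
      have := (ArcParam.slack_le_iff.1 (loose (hs t ht)).1).1
      have := (ArcParam.slack_le_iff.1 (loose (hs t ht)).2.1).1
      gcongr
    · rw [hx0, sep_assemble hm]
    · rw [hv0, sep_assemble hm]
    · have h := norm_image_sub_le_of_hasDerivAt (C := 0) (a := 0) (b := τ)
        (fun t ht => (HasDerivAt.com (m := m) (hN t ht).2).congr_deriv (com_newtonAcc m _))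
        (fun t _ => by simp) (t := τ) ⟨hτ.1, le_rfl⟩
      rw [hv0, com_assemble hm, zero_mul, norm_le_zero_iff, sub_eq_zero] at h
      exact h
  have tight : ∀ τ ∈ Icc 0 T, (∀ s ∈ Icc 0 τ, φ s ≤ 0) → φ τ < 0 := by
    intro τ hτ hs
    obtain ⟨h1, h2, h3, h4⟩ := arcs τ hτ hs
    have a1 := ArcParam.slack_lt hA hτ.1 h1
    have a2 := ArcParam.slack_lt hB hτ.1 h2
    have a3 := ArcParam.slack_lt hS hτ.1 h3
    simp only [hφ, max_lt_iff]
    refine ⟨⟨a1, a2⟩, a3, ?_⟩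
    rw [h4]; simp
  have hstart : φ 0 < 0 := by
    simp only [hφ, max_lt_iff, hx0, hv0, binA_assemble hm, binB_assemble hm, sep_assemble hm,
      com_assemble hm]
    exact ⟨⟨hA.slack_init, hB.slack_init⟩, hS.slack_init, by simp⟩
  have hall := forall_neg_of_bootstrap (ι := Unit) (φ := fun _ => φ) (T := T) (fun _ t ht => by
      have hx : ∀ j, HasDerivAt (x j) _ t := fun j => (hxv t ht j).1
      have hv : ∀ j, HasDerivAt (v j) _ t := fun j => (hxv t ht j).2
      exact ((ArcParam.continuousAt_slack (HasDerivAt.binA hx).continuousAt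
        (HasDerivAt.binA hv).continuousAt).max (ArcParam.continuousAt_slack
        (HasDerivAt.binB hx).continuousAt (HasDerivAt.binB hv).continuousAt)).max
        ((ArcParam.continuousAt_slack (HasDerivAt.sep hx).continuousAt
        (HasDerivAt.sep hv).continuousAt).max
        (((HasDerivAt.com hv).continuousAt.sub continuousAt_const).norm.sub continuousAt_const)))
    (fun _ => hstart) (fun t ht hs _ => tight t ht fun s hs' => hs s hs' ())
  have hle : ∀ t ∈ Icc 0 T, φ t ≤ 0 := fun t ht => (hall t ht ()).le
  obtain ⟨h1, h2, h3, -⟩ := arcs T ⟨hT, le_rfl⟩ hle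
  refine ⟨x, v, ⟨fun t ht i j hij hc => ?_, fun j t ht => (hnewt t ht (hle t ht)).1 j,
    fun j t ht => (hnewt t ht (hle t ht)).2 j⟩, fun t ht => ?_, ⟨_, _, h1⟩, ⟨_, _, h2⟩, ⟨_, _, h3⟩⟩
  · have := hdist (hle t ht) i j hij
    rw [hc, sub_self, norm_zero] at this
    linarith
  · exact (arcs t ht fun s hs => hle s ⟨hs.1, hs.2.trans ht.2⟩).2.2.2

/-! ### The family of solutions -/

/-- Direction of the two inner arcs, slightly tilted out of the horizontal plane. -/
def tiltDir (g : ℝ) : V3 := vec3 0 (√(1 - (g ^ 2) ^ 2)) (g ^ 2)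

/-- Arc of the binary `0, 2`. -/
def arcA (m : Fin 4 → ℝ) (g X : ℝ) : ArcParam :=
  ⟨m 0 + m 2, 1, X⁻¹ ^ 8, X⁻¹ ^ 8, tiltDir g, vec3 1 0 0⟩

/-- Arc of the binary `1, 3`. -/
def arcB (m : Fin 4 → ℝ) (g X : ℝ) : ArcParam :=
  ⟨m 1 + m 3, X ^ 4, X⁻¹ ^ 4, X⁻¹ ^ 4, tiltDir g, vec3 1 0 0⟩

/-- Arc of the relative motion of the two binaries. -/
def arcS (m : Fin 4 → ℝ) (g X : ℝ) : ArcParam :=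
  ⟨Mtot3 m, X ^ 7, g, X⁻¹ ^ 5, vec3 1 0 0, vec3 0 0 1⟩

lemma norm_vec3_sq (a b c : ℝ) : ‖vec3 a b c‖ ^ 2 = a ^ 2 + b ^ 2 + c ^ 2 := by
  rw [V3.norm_sq]
  simp

lemma norm_vec3_eq_one {a b c : ℝ} (h : a ^ 2 + b ^ 2 + c ^ 2 = 1) : ‖vec3 a b c‖ = 1 := by
  have := norm_vec3_sq a b c
  rw [h] at this
  exact (pow_eq_one_iff_of_nonneg (norm_nonneg _) two_ne_zero).1 this

lemma norm_tiltDir {g : ℝ} (hg : 0 < g) (hg1 : g ≤ 1 / 100) : ‖tiltDir g‖ = 1 := by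
  refine norm_vec3_eq_one ?_
  have : g ^ 2 ≤ 1 := by nlinarith
  rw [Real.sq_sqrt (by nlinarith [sq_nonneg g])]
  ring

lemma eventually_le_const_mul (C : ℝ) {c : ℝ} (hc : 0 < c) : ∀ᶠ X : ℝ in atTop, C ≤ c * X :=
  (tendsto_id.const_mul_atTop hc).eventually_ge_atTop C

lemma mul_inv_pow_le {C c X : ℝ} {a b : ℕ} (hX : 1 ≤ X) (hC : C ≤ c * X) (hab : b + 1 ≤ a)
    (hC0 : 0 ≤ C) : C * X⁻¹ ^ a ≤ c * X⁻¹ ^ b := by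
  have hX0 : 0 < X := by linarith
  calc C * X⁻¹ ^ a ≤ C * X⁻¹ ^ (b + 1) := by
        gcongr ?_ * ?_
        exact pow_le_pow_of_le_one (by positivity) (inv_le_one_of_one_le₀ hX) hab
    _ ≤ c * X * X⁻¹ ^ (b + 1) := by gcongr
    _ = c * X⁻¹ ^ b := by rw [pow_succ]; field_simp

/-- Length of the time interval for `n` units of the slow time scale. -/
def horizon (m : Fin 4 → ℝ) (n X : ℝ) : ℝ := n * (Mtot3 m * X ^ 21)

lemma eventually_exists_solution {m : Fin 4 → ℝ} (hm : ∀ j, 0 < m j) {g n : ℝ} (hg : 0 < g)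
    (hg1 : g ≤ 1 / 100) (hn : 0 ≤ n) : ∀ᶠ X : ℝ in atTop, ∀ w : V3,
    ∃ x v : Fin 4 → ℝ → V3, IsFourBodySolution m (Icc 0 (horizon m n X)) x v ∧
      (∀ t ∈ Icc 0 (horizon m n X), com m (posAt v t) = w) ∧
      (∃ f ε, PertKepler ((arcA m g X).pos fun t => binA (posAt x t))
        ((arcA m g X).vel fun t => binA (posAt v t)) f
        (tiltDir g) (vec3 1 0 0) (X⁻¹ ^ 8) (X⁻¹ ^ 8) ε
        (horizon m n X / ((arcA m g X).k * (arcA m g X).l ^ 3))) ∧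
      (∃ f ε, PertKepler ((arcB m g X).pos fun t => binB (posAt x t))
        ((arcB m g X).vel fun t => binB (posAt v t)) f
        (tiltDir g) (vec3 1 0 0) (X⁻¹ ^ 4) (X⁻¹ ^ 4) ε
        (horizon m n X / ((arcB m g X).k * (arcB m g X).l ^ 3))) ∧
      (∃ f ε, PertKepler ((arcS m g X).pos fun t => sep m (posAt x t))
        ((arcS m g X).vel fun t => sep m (posAt v t)) f
        (vec3 1 0 0) (vec3 0 0 1) g (X⁻¹ ^ 5) ε
        (horizon m n X / ((arcS m g X).k * (arcS m g X).l ^ 3))) := by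
  have hMp := Mtot3_pos hm
  have hM : Mtot3 m = (m 0 + m 2) + (m 1 + m 3) := by rw [Mtot3]; ring
  have hA : 0 < m 0 + m 2 := add_pos (hm 0) (hm 2)
  have hB : 0 < m 1 + m 3 := add_pos (hm 1) (hm 3)
  generalize hk1 : m 0 + m 2 = k1 at hM hA
  generalize hk2 : m 1 + m 3 = k2 at hM hB
  generalize hMM : Mtot3 m = M at hM hMp
  have hk1M : k1 ≤ M := by linarith
  have hk2M : k2 ≤ M := by linarith
  set K := 4096 / g ^ 6 with hK
  have hK0 : 0 ≤ K := by positivity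
  set C1 := K * (1 + n) with hC1
  have hC10 : 0 ≤ C1 := by positivity
  filter_upwards [eventually_ge_atTop 1, eventually_le_const_mul (2 * M) (c := M * g ^ 2 / 8)
      (by positivity), eventually_le_const_mul C1 (c := 1 / 100) (by norm_num),
    eventually_le_const_mul C1 hg, eventually_le_const_mul C1 one_pos,
    eventually_le_const_mul 1 (c := 1 / 10000) (by norm_num)] with X hX1 hXs hXF hXg hXo hXk w
  have hX0 : 0 < X := by linarith
  have hXi : ∀ a : ℕ, 1 ≤ a → X⁻¹ ^ a ≤ 1 / 10000 := fun a ha => by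
    have := mul_inv_pow_le (a := a) (b := 0) hX1 hXk ha zero_le_one
    simpa using this
  have hX8 : X ≤ X ^ 6 := le_self_pow₀ hX1 (by norm_num)
  set D := M * X ^ 14 * g ^ 2 / 8 with hD
  have hD0 : 0 < D := by positivity
  have hKn : K ≤ C1 := by
    have h1 : 0 ≤ K * n := by positivity
    linarith
  have hKn' : K * n ≤ C1 := by linarith
  have norm_e1 : ‖vec3 1 0 0‖ = 1 := norm_vec3_eq_one (by norm_num)
  have norm_e3 : ‖vec3 0 0 1‖ = 1 := norm_vec3_eq_one (by norm_num)
  have hX8' : (1 : ℝ) ≤ X ^ 8 := one_le_pow₀ hX1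
  have hF : ∀ k k' : ℝ, 0 < k → 0 < k' → k ≤ M → k' ≤ M →
      4 * k * D⁻¹ ^ 3 * (2 * (k' * (X ^ 4) ^ 2)) ≤ K / M * X⁻¹ ^ 34 := by
    intro k k' hk hk' hkM hkM'
    calc 4 * k * D⁻¹ ^ 3 * (2 * (k' * (X ^ 4) ^ 2))
        ≤ 4 * M * D⁻¹ ^ 3 * (2 * (M * (X ^ 4) ^ 2)) := by gcongr
      _ = K / M * X⁻¹ ^ 34 := by rw [hK, hD]; field_simp; norm_num
  have hFA : 4 * k2 * D⁻¹ ^ 3 * (2 * (k1 * 1 ^ 2)) ≤ K / M * X⁻¹ ^ 42 := by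
    calc 4 * k2 * D⁻¹ ^ 3 * (2 * (k1 * 1 ^ 2)) ≤ 4 * M * D⁻¹ ^ 3 * (2 * (M * 1 ^ 2)) := by gcongr
      _ = K / M * X⁻¹ ^ 42 := by rw [hK, hD]; field_simp; norm_num
  have hFS : 4 * M * D⁻¹ ^ 3 * (2 * (k1 * 1 ^ 2) + 2 * (k2 * (X ^ 4) ^ 2)) ≤ K / M * X⁻¹ ^ 34 := by
    refine le_trans ?_ (hF M M hMp hMp le_rfl le_rfl)
    gcongr
    rw [hM]
    nlinarith
  have hhor : horizon m n X = n * (M * X ^ 21) := by rw [horizon, hMM]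
  have hAadm : (arcA m g X).Admissible (4 * k2 * D⁻¹ ^ 3 * (2 * (k1 * 1 ^ 2)))
      (horizon m n X) := by
    refine ⟨by simpa [arcA, hk1] using hA, one_pos, ?_, ?_, ?_, hXi 8 (by norm_num),
      norm_tiltDir hg hg1, norm_e1, ?_, by positivity, ?_, ?_⟩
    · simp only [arcA]; positivity
    · exact (hXi 8 (by norm_num)).trans (by norm_num)
    · simp only [arcA]; positivity
    · simp [arcA, tiltDir, V3.inner_eq]
    · simp only [arcA, hk1]
      calc k1 * 1 ^ 4 * (4 * k2 * D⁻¹ ^ 3 * (2 * (k1 * 1 ^ 2)))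
          ≤ M * 1 ^ 4 * (K / M * X⁻¹ ^ 42) := by gcongr
        _ = K * X⁻¹ ^ 42 := by field_simp
        _ ≤ C1 * X⁻¹ ^ 42 := by gcongr
        _ ≤ 1 / 100 * X⁻¹ ^ 0 := mul_inv_pow_le hX1 hXF (by norm_num) hC10
        _ = 1 / 100 := by simp
    · simp only [arcA]
      rw [hhor]
      calc 1 * (4 * k2 * D⁻¹ ^ 3 * (2 * (k1 * 1 ^ 2))) * (n * (M * X ^ 21))
          ≤ 1 * (K / M * X⁻¹ ^ 42) * (n * (M * X ^ 21)) := by gcongr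
        _ = K * n * X⁻¹ ^ 21 := by field_simp
        _ ≤ C1 * X⁻¹ ^ 21 := by gcongr
        _ ≤ 1 * X⁻¹ ^ 16 := mul_inv_pow_le hX1 hXo (by norm_num) hC10
        _ = X⁻¹ ^ 8 * X⁻¹ ^ 8 := by ring
  have hBadm : (arcB m g X).Admissible (4 * k1 * D⁻¹ ^ 3 * (2 * (k2 * (X ^ 4) ^ 2)))
      (horizon m n X) := by
    refine ⟨by simpa [arcB, hk2] using hB, by simp only [arcB]; positivity, ?_, ?_, ?_,
      hXi 4 (by norm_num), norm_tiltDir hg hg1, norm_e1, ?_, by positivity, ?_, ?_⟩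
    · simp only [arcB]; positivity
    · exact (hXi 4 (by norm_num)).trans (by norm_num)
    · simp only [arcB]; positivity
    · simp [arcB, tiltDir, V3.inner_eq]
    · simp only [arcB, hk2]
      calc k2 * (X ^ 4) ^ 4 * (4 * k1 * D⁻¹ ^ 3 * (2 * (k2 * (X ^ 4) ^ 2)))
          ≤ M * (X ^ 4) ^ 4 * (K / M * X⁻¹ ^ 34) := by
            have := hF k1 k2 hA hB hk1M hk2M
            gcongr
        _ = K * X⁻¹ ^ 18 := by field_simp
        _ ≤ C1 * X⁻¹ ^ 18 := by gcongr
        _ ≤ 1 / 100 * X⁻¹ ^ 0 := mul_inv_pow_le hX1 hXF (by norm_num) hC10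
        _ = 1 / 100 := by simp
    · simp only [arcB]
      rw [hhor]
      calc X ^ 4 * (4 * k1 * D⁻¹ ^ 3 * (2 * (k2 * (X ^ 4) ^ 2))) * (n * (M * X ^ 21))
          ≤ X ^ 4 * (K / M * X⁻¹ ^ 34) * (n * (M * X ^ 21)) := by
            have := hF k1 k2 hA hB hk1M hk2M
            gcongr
        _ = K * n * X⁻¹ ^ 9 := by field_simp
        _ ≤ C1 * X⁻¹ ^ 9 := by gcongr
        _ ≤ 1 * X⁻¹ ^ 8 := mul_inv_pow_le hX1 hXo (by norm_num) hC10
        _ = X⁻¹ ^ 4 * X⁻¹ ^ 4 := by ring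
  have hSadm : (arcS m g X).Admissible
      (4 * M * D⁻¹ ^ 3 * (2 * (k1 * 1 ^ 2) + 2 * (k2 * (X ^ 4) ^ 2))) (horizon m n X) := by
    refine ⟨by simpa [arcS, hMM] using hMp, by simp only [arcS]; positivity, hg, hg1, ?_,
      hXi 5 (by norm_num), norm_e1, norm_e3, ?_, by positivity, ?_, ?_⟩
    · simp only [arcS]; positivity
    · simp [arcS, V3.inner_eq]
    · simp only [arcS, hMM]
      calc M * (X ^ 7) ^ 4 * (4 * M * D⁻¹ ^ 3 * (2 * (k1 * 1 ^ 2) + 2 * (k2 * (X ^ 4) ^ 2)))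
          ≤ M * (X ^ 7) ^ 4 * (K / M * X⁻¹ ^ 34) := by gcongr
        _ = K * X⁻¹ ^ 6 := by field_simp
        _ ≤ C1 * X⁻¹ ^ 6 := by gcongr
        _ ≤ 1 / 100 * X⁻¹ ^ 0 := mul_inv_pow_le hX1 hXF (by norm_num) hC10
        _ = 1 / 100 := by simp
    · simp only [arcS]
      rw [hhor]
      calc X ^ 7 * (4 * M * D⁻¹ ^ 3 * (2 * (k1 * 1 ^ 2) + 2 * (k2 * (X ^ 4) ^ 2)))
            * (n * (M * X ^ 21))
          ≤ X ^ 7 * (K / M * X⁻¹ ^ 34) * (n * (M * X ^ 21)) := by gcongr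
        _ = K * n * X⁻¹ ^ 6 := by field_simp
        _ ≤ C1 * X⁻¹ ^ 6 := by gcongr
        _ ≤ g * X⁻¹ ^ 5 := mul_inv_pow_le hX1 hXg (by norm_num) hC10
        _ = X⁻¹ ^ 5 * g := by ring
  have hsep : D + 2 * (k1 * 1 ^ 2) + 2 * (k2 * (X ^ 4) ^ 2) ≤ M * (X ^ 7) ^ 2 * g ^ 2 / 4 := by
    have h1 : 2 * M * X ^ 8 ≤ M * g ^ 2 / 8 * X ^ 14 := by
      calc 2 * M * X ^ 8 ≤ M * g ^ 2 / 8 * X * X ^ 8 := by gcongr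
        _ ≤ M * g ^ 2 / 8 * X ^ 6 * X ^ 8 := by gcongr
        _ = _ := by ring
    have h2 : k1 * 1 ≤ k1 * X ^ 8 := by gcongr
    have h3 : 2 * (k1 * 1 ^ 2) + 2 * (k2 * (X ^ 4) ^ 2) ≤ 2 * M * X ^ 8 := by
      rw [hM]; linarith
    rw [hD]
    linarith
  exact exists_hierarchical_solution hm (PA := arcA m g X) (PB := arcB m g X)
    (PS := arcS m g X) (D := D) (T := horizon m n X) rfl rfl rfl hD0 (by rw [hhor]; positivity)
    (by simpa only [arcA, arcB, arcS, hk1, hk2, hMM] using hsep)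
    (by simpa only [arcA, arcB, arcS, hk1, hk2, hMM] using hAadm)
    (by simpa only [arcA, arcB, arcS, hk1, hk2, hMM] using hBadm)
    (by simpa only [arcA, arcB, arcS, hk1, hk2, hMM] using hSadm) w

/-! ### Simultaneous events -/

/-- Three motions with well separated time scales `tA ≪ tB ≪ tS` pass simultaneously, up to
small errors, through prescribed radial velocities. -/
lemma exists_simultaneous_event {rA uA fA rB uB fB rS uS fS : ℝ → V3} {dA eA dB eB dS eS : V3}
    {gA κA εA gB κB εB gS κS εS T tA tB tS a cA cB cS : ℝ}
    (HA : PertKepler rA uA fA dA eA gA κA εA (T / tA))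
    (HB : PertKepler rB uB fB dB eB gB κB εB (T / tB))
    (HS : PertKepler rS uS fS dS eS gS κS εS (T / tS))
    (hA : 0 < tA) (hB : 0 < tB) (hS : 0 < tS) (ha : 0 ≤ a)
    (haT : tS * (a + 105) + 105 * tB + 105 * tA ≤ T)
    (hAB : 105 * tA / tB ≤ 1 / 200) (hBS : 105 * (tA + tB) / tS ≤ 1 / 200)
    (hcA : |cA| ≤ 1 / 2100) (hcB : |cB| ≤ 1 / 2100) (hcS : |cS| ≤ 1 / 2100) :
    ∃ t, tS * a ≤ t ∧ t ≤ tS * (a + 105) + 105 * tB + 105 * tA ∧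
      ‖uA (t / tA) - cA • dA‖ ≤ 17 * gA + 144 * κA ∧
      ‖uB (t / tB) - cB • dB‖ ≤ 17 * gB + 144 * κB + 26 * (105 * tA / tB) ∧
      ∃ s ∈ Icc 0 (T / tS), ⟪uS s, dS⟫ = cS ∧ 1 / 4 ≤ ‖rS s‖ ∧
        ‖rS (t / tS) - rS s‖ ≤ 4 * (105 * (tA + tB) / tS) ∧
        ‖uS (t / tS) - uS s‖ ≤ 26 * (105 * (tA + tB) / tS) := by
  obtain ⟨s, hs, hsc, hsr⟩ := HS.exists_event ha (c := cS)
    (by rw [le_div_iff₀ hS]; linarith) hcS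
  have hs0 : 0 ≤ s := ha.trans hs.1
  have hsS : tS * s ≤ tS * (a + 105) := by gcongr; exact hs.2
  have haS : tS * a ≤ tS * s := by gcongr; exact hs.1
  obtain ⟨s', hs', hsc', hsr'⟩ := HB.exists_event (a := tS * s / tB) (c := cB) (by positivity)
    (by rw [le_div_iff₀ hB, add_mul, div_mul_cancel₀ _ hB.ne']; linarith) hcB
  have hs'l : tS * s ≤ tB * s' := by
    have := (div_le_iff₀ hB).1 hs'.1
    linarith
  have hs'u : tB * s' ≤ tS * s + 105 * tB := by
    have := mul_le_mul_of_nonneg_left hs'.2 hB.le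
    rw [mul_add, mul_div_cancel₀ _ hB.ne'] at this
    linarith
  have hs'0 : 0 ≤ s' := le_trans (by positivity) hs'.1
  obtain ⟨s'', hs'', hsc'', hsr''⟩ := HA.exists_event (a := tB * s' / tA) (c := cA)
    (by positivity) (by rw [le_div_iff₀ hA, add_mul, div_mul_cancel₀ _ hA.ne']; linarith) hcA
  have hs''l : tB * s' ≤ tA * s'' := by
    have := (div_le_iff₀ hA).1 hs''.1
    linarith
  have hs''u : tA * s'' ≤ tB * s' + 105 * tA := by
    have := mul_le_mul_of_nonneg_left hs''.2 hA.le
    rw [mul_add, mul_div_cancel₀ _ hA.ne'] at this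
    linarith
  have hs''0 : 0 ≤ s'' := le_trans (by positivity) hs''.1
  refine ⟨tA * s'', by linarith, by linarith, ?_, ?_, s, ⟨hs0, ?_⟩, hsc, hsr, ?_⟩
  · rw [mul_div_cancel_left₀ _ hA.ne', ← hsc'']
    exact HA.norm_vel_sub_le ⟨hs''0, by rw [le_div_iff₀ hA]; linarith⟩ hsr''
  · have hwait : tA * s'' / tB - s' ≤ 105 * tA / tB := by
      rw [sub_le_iff_le_add, div_le_iff₀ hB, add_mul, div_mul_cancel₀ _ hB.ne']
      linarith
    have h1 := (HB.drift_le (a := s') (t := tA * s'' / tB) hs'0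
      (by rw [le_div_iff₀ hB]; linarith) (by gcongr; linarith) (by linarith) hsr').2
    have h2 := HB.norm_vel_sub_le (t := s') ⟨hs'0, by rw [le_div_iff₀ hB]; linarith⟩ hsr'
    rw [hsc'] at h2
    have h3 := norm_add_le (uB (tA * s'' / tB) - uB s') (uB s' - cB • dB)
    rw [sub_add_sub_cancel] at h3
    linarith
  · rw [le_div_iff₀ hS]; linarith
  · have hwait : tA * s'' / tS - s ≤ 105 * (tA + tB) / tS := by
      rw [sub_le_iff_le_add, div_le_iff₀ hS, add_mul, div_mul_cancel₀ _ hS.ne']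
      linarith
    have h1 := HS.drift_le (a := s) (t := tA * s'' / tS) hs0
      (by rw [le_div_iff₀ hS]; linarith) (by gcongr; linarith) (by linarith) hsr
    exact ⟨h1.1.trans (by linarith), h1.2.trans (by linarith)⟩

/-! ### Jacobi coordinates of a pair of binaries -/

lemma jq2_eq {m : Fin 4 → ℝ} (hm : ∀ j, 0 < m j) (p : Fin 4 → V3) : jq2 m p =
    (m 0 / (m 0 + m 2) + sig01 m * (m 2 / (m 0 + m 2))) • binA p - sig11 m • sep m p
      + (sig11 m * (m 3 / (m 1 + m 3))) • binB p := by
  have := ne_A hm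
  have := ne_B hm
  have h1 : m 0 + m 1 ≠ 0 := (Mtot1_pos hm).ne'
  simp only [jq2, binA, binB, sep, sig01, sig11, Mtot1]
  match_scalars <;> field_simp <;> ring

lemma jq3_eq {m : Fin 4 → ℝ} (hm : ∀ j, 0 < m j) (p : Fin 4 → V3) : jq3 m p =
    ((m 0 + m 2) / Mtot2 m) • sep m p
      + (m 1 / (m 1 + m 3) + sig12 m * (m 3 / (m 1 + m 3))) • binB p := by
  have := ne_A hm
  have := ne_B hm
  have h1 : m 0 + m 1 + m 2 ≠ 0 := (Mtot2_pos hm).ne'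
  simp only [jq3, binB, sep, sig02, sig12, sig22, Mtot2]
  match_scalars <;> field_simp <;> ring

/-- Weight of the velocity of the centre of mass in the second Jacobi momentum. -/
def comWeight (m : Fin 4 → ℝ) : ℝ := m 2 + sig22 m * m 3

/-- Weight of the separation velocity in the second Jacobi momentum, up to sign. -/
def sepWeight (m : Fin 4 → ℝ) : ℝ := m 1 * m 2 / Mtot2 m

lemma jp2_eq {m : Fin 4 → ℝ} (hm : ∀ j, 0 < m j) (q : Fin 4 → V3) : jp2 m q =
    (m 2 * m 0 / (m 0 + m 2)) • binA q + (sig22 m * (m 3 * m 1 / (m 1 + m 3))) • binB q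
      + comWeight m • com m q - sepWeight m • sep m q := by
  have := ne_A hm
  have := ne_B hm
  have h1 : m 0 + m 1 + m 2 ≠ 0 := (Mtot2_pos hm).ne'
  have h2 : m 0 + m 1 + m 2 + m 3 ≠ 0 := (Mtot3_pos hm).ne'
  simp only [jp2, lmom, binA, binB, sep, com, comWeight, sepWeight, sig22, Mtot2, Mtot3]
  match_scalars <;> field_simp <;> ring

lemma jp3_eq {m : Fin 4 → ℝ} (hm : ∀ j, 0 < m j) (q : Fin 4 → V3) : jp3 m q =
    m 3 • com m q + (m 3 * ((m 0 + m 2) / Mtot3 m)) • sep m q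
      + (m 3 * m 1 / (m 1 + m 3)) • binB q := by
  have := ne_A hm
  have := ne_B hm
  have h2 : m 0 + m 1 + m 2 + m 3 ≠ 0 := (Mtot3_pos hm).ne'
  simp only [jp3, lmom, binB, sep, com, Mtot3]
  match_scalars <;> field_simp <;> ring

lemma ArcParam.pos_div {P : ArcParam} (hk : 0 < P.k) (hl : 0 < P.l) (r : ℝ → V3)
    (t : ℝ) : P.pos r (t / (P.k * P.l ^ 3)) = (1 / (P.k * P.l ^ 2)) • r t := by
  rw [ArcParam.pos, mul_div_cancel₀ _ (by positivity)]

lemma ArcParam.vel_div {P : ArcParam} (hk : 0 < P.k) (hl : 0 < P.l) (u : ℝ → V3)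
    (t : ℝ) : P.vel u (t / (P.k * P.l ^ 3)) = P.l • u t := by
  rw [ArcParam.vel, mul_div_cancel₀ _ (by positivity)]

/-- The rescaled Jacobi coordinates `Q₂, P₂, Q₃, P₃` and the rescaled separation `r, u` are close
to the state with parameters `κ, ν, τ`. -/
structure NearState (m : Fin 4 → ℝ) (g κ ν τ B E : ℝ) (r u Q₂ P₂ Q₃ P₃ : V3) : Prop where
  pos_zero : |r 0 - 1| ≤ 8 * B ^ 2 * g ^ 2 + E
  pos_one : |r 1| ≤ E
  pos_two : |r 2 - κ * g ^ 2| ≤ 4 * B ^ 3 * g ^ 4 + E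
  angMom : ‖cross3 r u - g • cross3 (vec3 1 0 0) (vec3 0 0 1)‖ ≤ E
  vel : ‖u‖ ≤ (17 + B) * g + E
  jacobi_pos_two : ‖Q₂ + sig11 m • r‖ ≤ E
  jacobi_mom_two :
    ‖P₂ - (τ • tiltDir g + (sepWeight m * g) • vec3 0 0 1 - sepWeight m • u)‖ ≤ E
  jacobi_pos_three : ‖Q₃ - ((m 0 + m 2) / Mtot2 m) • r‖ ≤ E
  jacobi_mom_three :
    ‖P₃ - ((g * ν) • tiltDir g + (m 3 * (sepWeight m / comWeight m * g)) • vec3 0 0 1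
      + (m 3 * ((m 0 + m 2) / Mtot3 m)) • u)‖ ≤ E

lemma norm_smul_add_smul_le {a b A B : ℝ} {x y : V3} (hx : ‖x‖ ≤ A) (hy : ‖y‖ ≤ B)
    (ha : 0 ≤ a) (hb : 0 ≤ b) : ‖a • x + b • y‖ ≤ a * A + b * B := by
  refine (norm_add_le _ _).trans ?_
  rw [norm_smul, norm_smul, Real.norm_eq_abs, Real.norm_eq_abs, abs_of_nonneg ha, abs_of_nonneg hb]
  gcongr

lemma norm_smul_le_of_le {a A : ℝ} {x : V3} (hx : ‖x‖ ≤ A) (ha : 0 ≤ a) :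
    ‖a • x‖ ≤ a * A := by
  rw [norm_smul, Real.norm_eq_abs, abs_of_nonneg ha]
  gcongr

/-- State of the separation close to an apocentre passage. -/
lemma PertKepler.near_apocentre {r u f : ℝ → V3} {g κ ε T b B s t w : ℝ}
    (H : PertKepler r u f (vec3 1 0 0) (vec3 0 0 1) g κ ε T) (hs : s ∈ Icc 0 T) (ht : t ∈ Icc 0 T)
    (hr : 1 / 4 ≤ ‖r s‖) (hu : ⟪u s, vec3 1 0 0⟫ = -(b * g)) (hb : |b| ≤ B)
    (hrt : ‖r t - r s‖ ≤ 4 * w) (hut : ‖u t - u s‖ ≤ 26 * w) :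
    |r t 0 - 1| ≤ 8 * B ^ 2 * g ^ 2 + (100 * κ / g ^ 2 + 4 * w) ∧ |r t 1| ≤ 60 * κ + 4 * w ∧
    |r t 2 - b * g ^ 2| ≤ 4 * B ^ 3 * g ^ 4 + ((62 * B + 60) * κ + 4 * w) ∧
    ‖cross3 (r t) (u t) - g • cross3 (vec3 1 0 0) (vec3 0 0 1)‖ ≤ 2 * κ * g ∧
    ‖u t‖ ≤ (17 + B) * g + (144 * κ + 26 * w) := by
  obtain ⟨h0, h1, h2⟩ := H.position_near_apocentre hs hr hu hb
  have hc : ∀ i, |r t i - r s i| ≤ 4 * w := fun i => by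
    have := V3.abs_apply_le (r t - r s) i
    simp only [PiLp.sub_apply] at this
    exact this.trans hrt
  have hg := H.g_pos
  refine ⟨?_, ?_, ?_, H.angMom_sub_le ht, ?_⟩
  · have := abs_sub_le (r t 0) (r s 0) 1
    linarith [hc 0]
  · have := abs_sub_le (r t 1) (r s 1) 0
    simp only [sub_zero] at this
    linarith [hc 1]
  · have := abs_sub_le (r t 2) (r s 2) (b * g ^ 2)
    linarith [hc 2]
  · have h3 := H.norm_vel_sub_le hs hr
    rw [hu] at h3
    have h4 : ‖u t‖ ≤ ‖u t - u s‖ + ‖u s - (-(b * g)) • vec3 1 0 0‖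
        + ‖(-(b * g)) • vec3 1 0 0‖ := by
      have e : u t = (u t - u s) + (u s - (-(b * g)) • vec3 1 0 0)
        + (-(b * g)) • vec3 1 0 0 := by abel
      conv_lhs => rw [e]
      exact norm_add₃_le
    have h5 : ‖(-(b * g)) • vec3 1 0 0‖ ≤ B * g := by
      rw [norm_smul, H.norm_dir, mul_one, Real.norm_eq_abs, abs_neg, abs_mul, abs_of_pos hg]
      gcongr
    linarith

lemma norm_rescaled_jq2_le {m : Fin 4 → ℝ} (hm : ∀ j, 0 < m j) {p : Fin 4 → V3} {X E : ℝ}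
    (hX : 1 ≤ X) (hA : ‖binA p‖ ≤ 2 * (m 0 + m 2)) (hB : ‖binB p‖ ≤ 2 * ((m 1 + m 3) * X ^ 8))
    (hE : 2 * (m 0 / (m 0 + m 2) + sig01 m * (m 2 / (m 0 + m 2))) * (m 0 + m 2) / Mtot3 m +
      2 * (sig11 m * (m 3 / (m 1 + m 3))) * (m 1 + m 3) / Mtot3 m ≤ E * X) :
    ‖(1 / (Mtot3 m * X ^ 14)) • jq2 m p + sig11 m • ((1 / (Mtot3 m * X ^ 14)) • sep m p)‖ ≤ E := by
  have hM := Mtot3_pos hm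
  have hM1 := Mtot1_pos hm
  have m0 := hm 0
  have m1 := hm 1
  have m2 := hm 2
  have m3 := hm 3
  have hX0 : 0 < X := by linarith
  rw [jq2_eq hm]
  obtain ⟨α, hα⟩ : ∃ c, c = m 0 / (m 0 + m 2) + sig01 m * (m 2 / (m 0 + m 2)) := ⟨_, rfl⟩
  obtain ⟨β, hβ⟩ : ∃ c, c = sig11 m * (m 3 / (m 1 + m 3)) := ⟨_, rfl⟩
  have hα0 : 0 ≤ α := by rw [hα]; unfold sig01; positivity
  have hβ0 : 0 ≤ β := by rw [hβ]; unfold sig11; positivity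
  rw [← hα, ← hβ] at hE ⊢
  have e : (1 / (Mtot3 m * X ^ 14)) • (α • binA p - sig11 m • sep m p + β • binB p) +
      sig11 m • ((1 / (Mtot3 m * X ^ 14)) • sep m p) =
      (α / (Mtot3 m * X ^ 14)) • binA p + (β / (Mtot3 m * X ^ 14)) • binB p := by module
  rw [e]
  refine (norm_smul_add_smul_le hA hB (by positivity) (by positivity)).trans ?_
  have h := mul_inv_pow_le (a := 6) (b := 0) hX hE (by norm_num) (by positivity)
  rw [pow_zero, mul_one] at h
  refine le_trans ?_ h
  have h8 : 1 ≤ X ^ 8 := one_le_pow₀ hX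
  have e1 : α / (Mtot3 m * X ^ 14) * (2 * (m 0 + m 2)) +
      β / (Mtot3 m * X ^ 14) * (2 * ((m 1 + m 3) * X ^ 8)) =
      (2 * α * (m 0 + m 2) / Mtot3 m / X ^ 8 + 2 * β * (m 1 + m 3) / Mtot3 m) * X⁻¹ ^ 6 := by
    field_simp
  rw [e1]
  have h9 : 2 * α * (m 0 + m 2) / Mtot3 m / X ^ 8 ≤ 2 * α * (m 0 + m 2) / Mtot3 m :=
    div_le_self (by positivity) h8
  gcongr

lemma norm_rescaled_jq3_le {m : Fin 4 → ℝ} (hm : ∀ j, 0 < m j) {p : Fin 4 → V3} {X E : ℝ}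
    (hX : 1 ≤ X) (hB : ‖binB p‖ ≤ 2 * ((m 1 + m 3) * X ^ 8))
    (hE : 2 * (m 1 / (m 1 + m 3) + sig12 m * (m 3 / (m 1 + m 3))) * (m 1 + m 3) / Mtot3 m ≤ E * X) :
    ‖(1 / (Mtot3 m * X ^ 14)) • jq3 m p
      - ((m 0 + m 2) / Mtot2 m) • ((1 / (Mtot3 m * X ^ 14)) • sep m p)‖ ≤ E := by
  have hM := Mtot3_pos hm
  have hM2 := Mtot2_pos hm
  have m1 := hm 1
  have m3 := hm 3
  have hX0 : 0 < X := by linarith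
  rw [jq3_eq hm]
  obtain ⟨γ, hγ⟩ : ∃ c, c = m 1 / (m 1 + m 3) + sig12 m * (m 3 / (m 1 + m 3)) := ⟨_, rfl⟩
  have hγ0 : 0 ≤ γ := by rw [hγ]; unfold sig12; positivity
  rw [← hγ] at hE ⊢
  obtain ⟨k, hk⟩ : ∃ c, c = (m 0 + m 2) / Mtot2 m := ⟨_, rfl⟩
  rw [← hk]
  have e : (1 / (Mtot3 m * X ^ 14)) • (k • sep m p + γ • binB p) -
      k • ((1 / (Mtot3 m * X ^ 14)) • sep m p) = (γ / (Mtot3 m * X ^ 14)) • binB p := by module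
  rw [e]
  refine (norm_smul_le_of_le hB (by positivity)).trans ?_
  have h := mul_inv_pow_le (a := 6) (b := 0) hX hE (by norm_num) (by positivity)
  rw [pow_zero, mul_one] at h
  refine le_trans (le_of_eq ?_) h
  field_simp

lemma norm_rescaled_jp2_le {m : Fin 4 → ℝ} (hm : ∀ j, 0 < m j) {q : Fin 4 → V3} {d w : V3}
    {X E L c₁ c₂ τ c : ℝ} (hX : 1 ≤ X) (hL : 0 ≤ L)
    (hA : ‖binA q - (c₁ * X⁻¹ ^ 7) • d‖ ≤ 161 * X⁻¹ ^ 8)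
    (hB : ‖X ^ 4 • binB q - (c₂ * X⁻¹ ^ 3) • d‖ ≤ L * X⁻¹ ^ 4)
    (hcom : com m q = (X⁻¹ ^ 7 * (sepWeight m / comWeight m * c)) • w)
    (hτ : m 2 * m 0 / (m 0 + m 2) * c₁ + sig22 m * (m 3 * m 1 / (m 1 + m 3)) * c₂ = τ)
    (hE : 161 * (m 2 * m 0 / (m 0 + m 2)) + sig22 m * (m 3 * m 1 / (m 1 + m 3)) * L ≤ E * X) :
    ‖X ^ 7 • jp2 m q - (τ • d + (sepWeight m * c) • w
      - sepWeight m • (X ^ 7 • sep m q))‖ ≤ E := by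
  have hM2 := Mtot2_pos hm
  have m0 := hm 0
  have m1 := hm 1
  have m2 := hm 2
  have m3 := hm 3
  have hX0 : 0 < X := by linarith
  have hcw : comWeight m ≠ 0 := by
    have : 0 < comWeight m := by unfold comWeight sig22; positivity
    exact this.ne'
  rw [jp2_eq hm, hcom]
  obtain ⟨α, hα⟩ : ∃ c, c = m 2 * m 0 / (m 0 + m 2) := ⟨_, rfl⟩
  obtain ⟨β, hβ⟩ : ∃ c, c = sig22 m * (m 3 * m 1 / (m 1 + m 3)) := ⟨_, rfl⟩
  have hα0 : 0 ≤ α := by rw [hα]; positivity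
  have hβ0 : 0 ≤ β := by rw [hβ]; unfold sig22; positivity
  rw [← hα, ← hβ] at hτ hE ⊢
  have e : X ^ 7 • (α • binA q + β • binB q
      + comWeight m • ((X⁻¹ ^ 7 * (sepWeight m / comWeight m * c)) • w) - sepWeight m • sep m q)
      - (τ • d + (sepWeight m * c) • w - sepWeight m • (X ^ 7 • sep m q)) =
      (α * X ^ 7) • (binA q - (c₁ * X⁻¹ ^ 7) • d) +
      (β * X ^ 3) • (X ^ 4 • binB q - (c₂ * X⁻¹ ^ 3) • d) := by
    rw [← hτ]
    match_scalars <;> field_simp <;> ring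
  rw [e]
  refine (norm_smul_add_smul_le hA hB (by positivity) (by positivity)).trans ?_
  have h := mul_inv_pow_le (a := 1) (b := 0) hX hE (by norm_num) (by positivity)
  rw [pow_zero, mul_one] at h
  refine le_trans (le_of_eq ?_) h
  field_simp

lemma norm_rescaled_jp3_le {m : Fin 4 → ℝ} (hm : ∀ j, 0 < m j) {q : Fin 4 → V3} {d w : V3}
    {X E L c₂ τ c : ℝ} (hX : 1 ≤ X) (hL : 0 ≤ L)
    (hB : ‖X ^ 4 • binB q - (c₂ * X⁻¹ ^ 3) • d‖ ≤ L * X⁻¹ ^ 4)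
    (hcom : com m q = (X⁻¹ ^ 7 * (sepWeight m / comWeight m * c)) • w)
    (hτ : m 3 * m 1 / (m 1 + m 3) * c₂ = τ) (hE : m 3 * m 1 / (m 1 + m 3) * L ≤ E * X) :
    ‖X ^ 7 • jp3 m q - (τ • d + (m 3 * (sepWeight m / comWeight m * c)) • w
      + (m 3 * ((m 0 + m 2) / Mtot3 m)) • (X ^ 7 • sep m q))‖ ≤ E := by
  have m1 := hm 1
  have m3 := hm 3
  have hX0 : 0 < X := by linarith
  rw [jp3_eq hm, hcom]
  obtain ⟨γ, hγ⟩ : ∃ c, c = m 3 * m 1 / (m 1 + m 3) := ⟨_, rfl⟩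
  have hγ0 : 0 ≤ γ := by rw [hγ]; positivity
  obtain ⟨k, hk⟩ : ∃ c, c = m 3 * ((m 0 + m 2) / Mtot3 m) := ⟨_, rfl⟩
  obtain ⟨l, hl⟩ : ∃ l, l = sepWeight m / comWeight m * c := ⟨_, rfl⟩
  rw [← hγ] at hτ hE ⊢
  rw [← hk, ← hl]
  have e : X ^ 7 • (m 3 • ((X⁻¹ ^ 7 * l) • w) + k • sep m q + γ • binB q) -
      (τ • d + (m 3 * l) • w + k • (X ^ 7 • sep m q)) =
      (γ * X ^ 3) • (X ^ 4 • binB q - (c₂ * X⁻¹ ^ 3) • d) := by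
    rw [← hτ]
    match_scalars <;> field_simp <;> ring
  rw [e]
  refine (norm_smul_le_of_le hB (by positivity)).trans ?_
  have h := mul_inv_pow_le (a := 1) (b := 0) hX hE (by norm_num) (by positivity)
  rw [pow_zero, mul_one] at h
  refine le_trans (le_of_eq ?_) h
  field_simp

set_option maxHeartbeats 1600000 in
lemma eventually_exists_nearState {m : Fin 4 → ℝ} (hm : ∀ j, 0 < m j) {g B E κ n : ℝ} (ν τ : ℝ)
    (hg : 0 < g) (hκ : |κ| ≤ B) (hBg : B * g ≤ 1 / 2100) (hE : 0 < E) :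
    ∀ᶠ X : ℝ in atTop, ∀ x v : Fin 4 → ℝ → V3,
      (∀ t ∈ Icc 0 (horizon m n X), com m (posAt v t) =
        (X⁻¹ ^ 7 * (sepWeight m / comWeight m * g)) • vec3 0 0 1) →
      (∃ f ε, PertKepler ((arcA m g X).pos fun t => binA (posAt x t))
        ((arcA m g X).vel fun t => binA (posAt v t)) f
        (tiltDir g) (vec3 1 0 0) (X⁻¹ ^ 8) (X⁻¹ ^ 8) ε
        (horizon m n X / ((arcA m g X).k * (arcA m g X).l ^ 3))) →
      (∃ f ε, PertKepler ((arcB m g X).pos fun t => binB (posAt x t))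
        ((arcB m g X).vel fun t => binB (posAt v t)) f
        (tiltDir g) (vec3 1 0 0) (X⁻¹ ^ 4) (X⁻¹ ^ 4) ε
        (horizon m n X / ((arcB m g X).k * (arcB m g X).l ^ 3))) →
      (∃ f ε, PertKepler ((arcS m g X).pos fun t => sep m (posAt x t))
        ((arcS m g X).vel fun t => sep m (posAt v t)) f
        (vec3 1 0 0) (vec3 0 0 1) g (X⁻¹ ^ 5) ε
        (horizon m n X / ((arcS m g X).k * (arcS m g X).l ^ 3))) →
      ∀ a : ℝ, 0 ≤ a → a + 106 ≤ n → ∃ t, Mtot3 m * X ^ 21 * a ≤ t ∧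
        t ≤ Mtot3 m * X ^ 21 * (a + 106) ∧ ∃ r u : V3, NearState m g κ ν τ B E r u
          ((1 / (Mtot3 m * X ^ 14)) • jq2 m (posAt x t)) (X ^ 7 • jp2 m (posAt v t))
          ((1 / (Mtot3 m * X ^ 14)) • jq3 m (posAt x t)) (X ^ 7 • jp3 m (posAt v t)) := by
  have hMp := Mtot3_pos hm
  have hM1 := Mtot1_pos hm
  have hM2 := Mtot2_pos hm
  have hM : Mtot3 m = (m 0 + m 2) + (m 1 + m 3) := by rw [Mtot3]; ring
  have hA : 0 < m 0 + m 2 := add_pos (hm 0) (hm 2)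
  have hB : 0 < m 1 + m 3 := add_pos (hm 1) (hm 3)
  have m0 := hm 0
  have m1 := hm 1
  have m2 := hm 2
  have m3 := hm 3
  have hcw : 0 < comWeight m := by unfold comWeight sig22; positivity
  have hB0 : 0 ≤ B := (abs_nonneg κ).trans hκ
  obtain ⟨k1, hk1⟩ : ∃ k1, k1 = m 0 + m 2 := ⟨_, rfl⟩
  obtain ⟨k2, hk2⟩ : ∃ k2, k2 = m 1 + m 3 := ⟨_, rfl⟩
  obtain ⟨M, hMM⟩ : ∃ M, M = Mtot3 m := ⟨_, rfl⟩
  rw [← hk1] at hA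
  rw [← hk2] at hB
  rw [← hMM] at hMp
  rw [← hk1, ← hk2, ← hMM] at hM
  obtain ⟨αq, hαq⟩ : ∃ c, c = m 0 / k1 + sig01 m * (m 2 / k1) := ⟨_, rfl⟩
  obtain ⟨βq, hβq⟩ : ∃ c, c = sig11 m * (m 3 / k2) := ⟨_, rfl⟩
  obtain ⟨γq, hγq⟩ : ∃ c, c = m 1 / k2 + sig12 m * (m 3 / k2) := ⟨_, rfl⟩
  obtain ⟨αp, hαp⟩ : ∃ c, c = m 2 * m 0 / k1 := ⟨_, rfl⟩
  obtain ⟨γp, hγp⟩ : ∃ c, c = m 3 * m 1 / k2 := ⟨_, rfl⟩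
  obtain ⟨βp, hβp⟩ : ∃ c, c = sig22 m * γp := ⟨_, rfl⟩
  have hαq0 : 0 ≤ αq := by rw [hαq]; unfold sig01; positivity
  have hβq0 : 0 ≤ βq := by rw [hβq]; unfold sig11; positivity
  have hγq0 : 0 ≤ γq := by rw [hγq]; unfold sig12; positivity
  have hαp0 : 0 < αp := by rw [hαp]; positivity
  have hγp0 : 0 < γp := by rw [hγp]; positivity
  have hβp0 : 0 ≤ βp := by rw [hβp]; unfold sig22; positivity
  set c2 := g * ν / γp with hc2
  set c1 := (τ - βp * c2) / αp with hc1
  set L := 161 + 26 * (105 * k1 / k2) with hL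
  have hL0 : 0 ≤ L := by positivity
  set C := 100 / g ^ 2 + (62 * B + 60) + 144 + 2 * g + 2730 with hC
  have hC0 : 0 ≤ C := by positivity
  filter_upwards [eventually_ge_atTop 1, eventually_le_const_mul |c1| (c := 1 / 2100) (by norm_num),
    eventually_le_const_mul |c2| (c := 1 / 2100) (by norm_num),
    eventually_le_const_mul (105 * k1 / k2) (c := 1 / 200) (by norm_num),
    eventually_le_const_mul 105 (c := 1 / 200) (by norm_num),
    eventually_le_const_mul C hE, eventually_le_const_mul (2 * αq * k1 / M + 2 * βq * k2 / M) hE,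
    eventually_le_const_mul (2 * γq * k2 / M) hE, eventually_le_const_mul (161 * αp + βp * L) hE,
    eventually_le_const_mul (γp * L) hE]
    with X hX1 hXc1 hXc2 hXAB hXBS hXC hXq2 hXq3 hXp2 hXp3 x v hcom HA HB HS a ha han
  obtain ⟨fA, εA, HA⟩ := HA
  obtain ⟨fB, εB, HB⟩ := HB
  obtain ⟨fS, εS, HS⟩ := HS
  have hX0 : 0 < X := by linarith
  have htA : (arcA m g X).k * (arcA m g X).l ^ 3 = k1 := by simp [arcA, hk1]
  have htB : (arcB m g X).k * (arcB m g X).l ^ 3 = k2 * X ^ 12 := by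
    simp only [arcB, hk2]; ring
  have htS : (arcS m g X).k * (arcS m g X).l ^ 3 = M * X ^ 21 := by
    simp only [arcS, hMM]; ring
  have hyle : ∀ j : ℕ, 1 ≤ j → X⁻¹ ^ j ≤ X⁻¹ := fun j hj =>
    pow_le_of_le_one (by positivity) (inv_le_one_of_one_le₀ hX1) (by omega)
  have hAB : 105 * k1 / (k2 * X ^ 12) ≤ 1 / 200 := by
    have := mul_inv_pow_le (a := 12) (b := 0) hX1 hXAB (by norm_num) (by positivity)
    refine le_trans (le_of_eq ?_) (this.trans (by simp))
    field_simp
  have hBS' : 105 * (k1 + k2 * X ^ 12) / (M * X ^ 21) ≤ 105 * X⁻¹ ^ 9 := by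
    have h1 : (1 : ℝ) ≤ X ^ 12 := one_le_pow₀ hX1
    have h2 : k1 + k2 * X ^ 12 ≤ M * X ^ 12 := by rw [hM]; nlinarith
    rw [div_le_iff₀ (by positivity)]
    have e : 105 * X⁻¹ ^ 9 * (M * X ^ 21) = 105 * (M * X ^ 12) := by field_simp
    rw [e]
    linarith
  have hBS : 105 * (k1 + k2 * X ^ 12) / (M * X ^ 21) ≤ 1 / 200 := by
    have := mul_inv_pow_le (a := 9) (b := 0) hX1 hXBS (by norm_num) (by positivity)
    refine hBS'.trans (this.trans (by simp))
  have hhor : horizon m n X = n * (M * X ^ 21) := by rw [horizon, hMM]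
  have hfit : M * X ^ 21 * (a + 105) + 105 * (k2 * X ^ 12) + 105 * k1 ≤
      M * X ^ 21 * (a + 106) := by
    rw [div_le_iff₀ (by positivity)] at hBS
    have : 0 < M * X ^ 21 := by positivity
    linarith
  have hend : M * X ^ 21 * (a + 106) ≤ horizon m n X := by
    rw [hhor, mul_comm]
    gcongr
  rw [htA] at HA
  rw [htB] at HB
  rw [htS] at HS
  obtain ⟨t, hta, htb, hvA, hvB, s, hs, hus, hrs, hrt, hut⟩ := exists_simultaneous_event HA HB HS
    (a := a) (cA := c1 * X⁻¹ ^ 7) (cB := c2 * X⁻¹ ^ 3) (cS := -(κ * g)) hA (by positivity)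
    (by positivity) ha (hfit.trans hend) hAB hBS
    (by
      rw [abs_mul, abs_of_pos (by positivity : 0 < X⁻¹ ^ 7)]
      simpa using mul_inv_pow_le (a := 7) (b := 0) hX1 hXc1 (by norm_num) (abs_nonneg _))
    (by
      rw [abs_mul, abs_of_pos (by positivity : 0 < X⁻¹ ^ 3)]
      simpa using mul_inv_pow_le (a := 3) (b := 0) hX1 hXc2 (by norm_num) (abs_nonneg _))
    (by
      rw [abs_neg, abs_mul, abs_of_pos hg]
      exact (mul_le_mul_of_nonneg_right hκ hg.le).trans hBg)
  have ht0 : 0 ≤ t := le_trans (by positivity) hta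
  have htT : t ≤ horizon m n X := htb.trans (hfit.trans hend)
  have hpA := HA.pos_le (t / k1) ⟨by positivity, by gcongr⟩
  have hpB := HB.pos_le (t / (k2 * X ^ 12)) ⟨by positivity, by gcongr⟩
  have htS' : t / (M * X ^ 21) ∈ Icc 0 (horizon m n X / (M * X ^ 21)) :=
    ⟨by positivity, by gcongr⟩
  obtain ⟨n0, n1, n2, n3, n4⟩ := HS.near_apocentre hs htS' hrs hus hκ hrt hut
  have hkA : (arcA m g X).k = k1 := hk1.symm
  have hlA : (arcA m g X).l = 1 := rfl
  have hkB : (arcB m g X).k = k2 := hk2.symm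
  have hlB : (arcB m g X).l = X ^ 4 := rfl
  have hkS : (arcS m g X).k = M := hMM.symm
  have hlS : (arcS m g X).l = X ^ 7 := rfl
  have eA := ArcParam.pos_div (P := arcA m g X) (by rw [hkA]; exact hA) (by rw [hlA]; norm_num)
    (fun t => binA (posAt x t)) t
  have eA' := ArcParam.vel_div (P := arcA m g X) (by rw [hkA]; exact hA) (by rw [hlA]; norm_num)
    (fun t => binA (posAt v t)) t
  have eB := ArcParam.pos_div (P := arcB m g X) (by rw [hkB]; exact hB) (by rw [hlB]; positivity)
    (fun t => binB (posAt x t)) t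
  have eB' := ArcParam.vel_div (P := arcB m g X) (by rw [hkB]; exact hB) (by rw [hlB]; positivity)
    (fun t => binB (posAt v t)) t
  have eS := ArcParam.pos_div (P := arcS m g X) (by rw [hkS]; exact hMp) (by rw [hlS]; positivity)
    (fun t => sep m (posAt x t)) t
  have eS' := ArcParam.vel_div (P := arcS m g X) (by rw [hkS]; exact hMp) (by rw [hlS]; positivity)
    (fun t => sep m (posAt v t)) t
  rw [htA] at eA eA'
  rw [htB] at eB eB'
  rw [htS] at eS eS'
  rw [eA, hkA, hlA, one_pow, mul_one, norm_smul, Real.norm_eq_abs, abs_of_pos (by positivity),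
    one_div_mul_eq_div, div_le_iff₀ hA] at hpA
  rw [eB, hkB, hlB, norm_smul, Real.norm_eq_abs, abs_of_pos (by positivity),
    one_div_mul_eq_div, div_le_iff₀ (by positivity), ← pow_mul] at hpB
  rw [eA', hlA, one_smul] at hvA
  rw [eB', hlB] at hvB
  rw [eS, hkS, hlS, ← pow_mul] at n0 n1 n2 n3
  rw [eS', hlS] at n3 n4
  have hcomt := hcom t ⟨ht0, htT⟩
  have hvA' : ‖binA (posAt v t) - (c1 * X⁻¹ ^ 7) • tiltDir g‖ ≤ 161 * X⁻¹ ^ 8 := by linarith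
  have hvB' : ‖X ^ 4 • binB (posAt v t) - (c2 * X⁻¹ ^ 3) • tiltDir g‖ ≤ L * X⁻¹ ^ 4 := by
    have h12 : 105 * k1 / (k2 * X ^ 12) ≤ 105 * k1 / k2 * X⁻¹ ^ 4 := by
      have e : 105 * k1 / (k2 * X ^ 12) = 105 * k1 / k2 * X⁻¹ ^ 12 := by field_simp
      rw [e]
      refine mul_le_mul_of_nonneg_left ?_ (by positivity)
      exact pow_le_pow_of_le_one (by positivity) (inv_le_one_of_one_le₀ hX1) (by norm_num)
    rw [hL]
    linarith
  have hτ1 : γp * c2 = g * ν := by rw [hc2]; field_simp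
  have hτ2 : αp * c1 + βp * c2 = τ := by rw [hc1]; field_simp; ring
  have hCX := mul_inv_pow_le (a := 1) (b := 0) hX1 hXC (by norm_num) hC0
  rw [pow_zero, mul_one, pow_one, hC] at hCX
  have hy0 : 0 < X⁻¹ := by positivity
  have hw : 105 * (k1 + k2 * X ^ 12) / (M * X ^ 21) ≤ 105 * X⁻¹ :=
    hBS'.trans (by have := hyle 9 (by norm_num); linarith)
  have hy5 := hyle 5 (by norm_num)
  have hBy : 0 ≤ B * X⁻¹ := by positivity
  have hgy : 0 ≤ g * X⁻¹ := by positivity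
  have hgy2 : 0 ≤ X⁻¹ / g ^ 2 := by positivity
  have hB5 : B * X⁻¹ ^ 5 ≤ B * X⁻¹ := by gcongr
  have hg5 : X⁻¹ ^ 5 * g ≤ g * X⁻¹ := by rw [mul_comm]; gcongr
  have hg25 : X⁻¹ ^ 5 / g ^ 2 ≤ X⁻¹ / g ^ 2 := by gcongr
  have hCX' : 100 * (X⁻¹ / g ^ 2) + (62 * (B * X⁻¹) + 60 * X⁻¹) + 144 * X⁻¹ + 2 * (g * X⁻¹)
      + 2730 * X⁻¹ ≤ E := by
    refine le_trans (le_of_eq ?_) hCX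
    ring
  have e5 : 100 * X⁻¹ ^ 5 / g ^ 2 = 100 * (X⁻¹ ^ 5 / g ^ 2) := by ring
  rw [e5] at n0
  refine ⟨t, ?_, ?_, (1 / (M * X ^ (7 * 2))) • sep m (posAt x t), X ^ 7 • sep m (posAt v t), ?_⟩
  · rw [← hMM]; exact hta
  · rw [← hMM]; exact htb.trans hfit
  refine ⟨n0.trans ?_, n1.trans ?_, n2.trans ?_, n3.trans ?_, n4.trans ?_, ?_, ?_, ?_, ?_⟩
  · linarith
  · linarith
  · linarith
  · linarith
  · linarith
  · rw [hMM]
    refine norm_rescaled_jq2_le hm hX1 (by rw [← hk1]; linarith) (by rw [← hk2]; exact hpB) ?_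
    rw [← hk1, ← hk2, ← hαq, ← hβq, ← hMM]
    exact hXq2
  · refine norm_rescaled_jp2_le hm hX1 hL0 hvA' hvB' hcomt ?_ ?_
    · rw [← hk1, ← hk2, ← hαp, ← hγp, ← hβp]; exact hτ2
    · rw [← hk1, ← hk2, ← hαp, ← hγp, ← hβp]; exact hXp2
  · rw [hMM]
    refine norm_rescaled_jq3_le hm hX1 (by rw [← hk2]; exact hpB) ?_
    rw [← hk2, ← hγq, ← hMM]
    exact hXq3
  · refine norm_rescaled_jp3_le hm hX1 hL0 hvB' hcomt ?_ ?_
    · rw [← hk2, ← hγp]; exact hτ1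
    · rw [← hk2, ← hγp]; exact hXp3

/-- A solution following, up to rescaling, a prescribed itinerary of states. -/
lemma exists_itinerary {m : Fin 4 → ℝ} (hm : ∀ j, 0 < m j) {N : ℕ} (κ ν τ : Fin (N + 1) → ℝ)
    {g B E : ℝ} (hg : 0 < g) (hg1 : g ≤ 1 / 100) (hκ : ∀ k, |κ k| ≤ B) (hBg : B * g ≤ 1 / 2100)
    (hE : 0 < E) : ∃ T > 0, ∃ x v : Fin 4 → ℝ → V3, IsFourBodySolution m (Icc 0 T) x v ∧
      ∃ t : Fin (N + 1) → ℝ, StrictMono t ∧ (∀ k, t k ∈ Icc 0 T) ∧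
        ∃ a > 0, ∃ b > 0, a * b ^ 2 * Mtot3 m = 1 ∧ ∀ k, ∃ r u : V3,
          NearState m g (κ k) (ν k) (τ k) B E r u (a • jq2 m (posAt x (t k)))
            (b • jp2 m (posAt v (t k))) (a • jq3 m (posAt x (t k)))
            (b • jp3 m (posAt v (t k))) := by
  have hM := Mtot3_pos hm
  obtain ⟨X, hX, hsol, hstate⟩ := ((eventually_gt_atTop (0 : ℝ)).and
    ((eventually_exists_solution hm hg hg1 (n := 210 * (N + 1)) (by positivity)).and
      (eventually_all.2 fun k => eventually_exists_nearState hm (n := 210 * (N + 1)) (ν k) (τ k)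
        hg (hκ k) hBg hE))).exists
  obtain ⟨x, v, hxv, hcom, HA, HB, HS⟩ :=
    hsol ((X⁻¹ ^ 7 * (sepWeight m / comWeight m * g)) • vec3 0 0 1)
  have hk : ∀ k : Fin (N + 1), 210 * (k : ℝ) + 210 ≤ 210 * (N + 1) := fun k => by
    have : (k : ℝ) ≤ N := by exact_mod_cast Nat.le_of_lt_succ k.2
    linarith
  choose t ht1 ht2 r u hru using fun k => hstate k x v hcom HA HB HS (210 * (k : ℝ))
    (by positivity) (by linarith [hk k])
  have hMX : 0 < Mtot3 m * X ^ 21 := by positivity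
  refine ⟨horizon m (210 * (N + 1)) X, by rw [horizon]; positivity, x, v, hxv, t,
    fun i j hij => ?_, fun k => ⟨le_trans (by positivity) (ht1 k), (ht2 k).trans ?_⟩,
    1 / (Mtot3 m * X ^ 14), by positivity, X ^ 7, by positivity, by field_simp,
    fun k => ⟨r k, u k, hru k⟩⟩
  · refine (ht2 i).trans_lt (lt_of_lt_of_le ?_ (ht1 j))
    have : (i : ℝ) + 1 ≤ j := by exact_mod_cast hij
    gcongr
    linarith
  · rw [horizon, mul_comm]
    gcongr
    linarith [hk k]

lemma V3.tendsto_of_coords {ι : Type*} {F : Filter ι} {f : ι → V3} {a : V3}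
    (h0 : Tendsto (fun i => f i 0) F (𝓝 (a 0))) (h1 : Tendsto (fun i => f i 1) F (𝓝 (a 1)))
    (h2 : Tendsto (fun i => f i 2) F (𝓝 (a 2))) : Tendsto f F (𝓝 a) := by
  rw [tendsto_iff_norm_sub_tendsto_zero]
  have h : Tendsto (fun i => |f i 0 - a 0| + |f i 1 - a 1| + |f i 2 - a 2|) F (𝓝 0) := by
    have := (((h0.sub_const (a 0)).abs).add ((h1.sub_const (a 1)).abs)).add
      ((h2.sub_const (a 2)).abs)
    simpa using this
  exact squeeze_zero (fun _ => norm_nonneg _) (fun i => V3.norm_le_sum _) h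

lemma Filter.Tendsto.v3_apply {ι : Type*} {F : Filter ι} {f : ι → V3} {a : V3}
    (h : Tendsto f F (𝓝 a)) (j : Fin 3) : Tendsto (fun i => f i j) F (𝓝 (a j)) :=
  ((EuclideanSpace.proj (𝕜 := ℝ) j).continuous.tendsto a).comp h

lemma Filter.Tendsto.cross3 {ι : Type*} {F : Filter ι} {f f' : ι → V3} {a b : V3}
    (h : Tendsto f F (𝓝 a)) (h' : Tendsto f' F (𝓝 b)) :
    Tendsto (fun i => _root_.cross3 (f i) (f' i)) F (𝓝 (_root_.cross3 a b)) := by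
  apply V3.tendsto_of_coords <;> simp only [cross3_zero_coord, cross3_one_coord, cross3_two_coord]
  · exact ((h.v3_apply 1).mul (h'.v3_apply 2)).sub ((h.v3_apply 2).mul (h'.v3_apply 1))
  · exact ((h.v3_apply 2).mul (h'.v3_apply 0)).sub ((h.v3_apply 0).mul (h'.v3_apply 2))
  · exact ((h.v3_apply 0).mul (h'.v3_apply 1)).sub ((h.v3_apply 1).mul (h'.v3_apply 0))

/-- A family of near states with vanishing parameter. -/
structure NearFamily {ι : Type*} (F : Filter ι) (m : Fin 4 → ℝ) (κ ν τ B : ℝ) (g : ι → ℝ)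
    (r u Q₂ P₂ Q₃ P₃ : ι → V3) : Prop where
  tendsto : Tendsto g F (𝓝[>] 0)
  near : ∀ᶠ i in F, NearState m (g i) κ ν τ B (g i ^ 4) (r i) (u i) (Q₂ i) (P₂ i) (Q₃ i) (P₃ i)

namespace NearFamily

variable {ι : Type*} {F : Filter ι} {m : Fin 4 → ℝ} {κ ν τ B : ℝ} {g : ι → ℝ}
  {r u Q₂ P₂ Q₃ P₃ : ι → V3}

lemma tendsto_zero (H : NearFamily F m κ ν τ B g r u Q₂ P₂ Q₃ P₃) : Tendsto g F (𝓝 0) :=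
  H.tendsto.mono_right nhdsWithin_le_nhds

lemma eventually_pos (H : NearFamily F m κ ν τ B g r u Q₂ P₂ Q₃ P₃) : ∀ᶠ i in F, 0 < g i :=
  H.tendsto eventually_mem_nhdsWithin

lemma tendsto_pow (H : NearFamily F m κ ν τ B g r u Q₂ P₂ Q₃ P₃) {n : ℕ} (hn : n ≠ 0) :
    Tendsto (fun i => g i ^ n) F (𝓝 0) := by
  simpa [hn] using H.tendsto_zero.pow n

lemma tendsto_const_mul_pow (H : NearFamily F m κ ν τ B g r u Q₂ P₂ Q₃ P₃) {n : ℕ} (hn : n ≠ 0)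
    (c : ℝ) : Tendsto (fun i => c * g i ^ n) F (𝓝 0) := by
  simpa using (H.tendsto_pow hn).const_mul c

/-- An error bounded by the tolerance is negligible at second order. -/
lemma tendsto_div_sq_smul (H : NearFamily F m κ ν τ B g r u Q₂ P₂ Q₃ P₃) {w : ι → V3}
    (hw : ∀ᶠ i in F, ‖w i‖ ≤ g i ^ 4) : Tendsto (fun i => (1 / g i ^ 2) • w i) F (𝓝 0) := by
  refine squeeze_zero_norm' ?_ (H.tendsto_pow two_ne_zero)
  filter_upwards [hw, H.eventually_pos] with i hi hg
  rw [norm_smul, Real.norm_eq_abs, abs_of_pos (by positivity), one_div_mul_eq_div,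
    div_le_iff₀ (by positivity)]
  exact hi.trans (le_of_eq (by ring))

/-- An error bounded by the tolerance is negligible at first order. -/
lemma tendsto_div_smul (H : NearFamily F m κ ν τ B g r u Q₂ P₂ Q₃ P₃) {w : ι → V3}
    (hw : ∀ᶠ i in F, ‖w i‖ ≤ g i ^ 4) : Tendsto (fun i => (1 / g i) • w i) F (𝓝 0) := by
  refine squeeze_zero_norm' ?_ (H.tendsto_pow three_ne_zero)
  filter_upwards [hw, H.eventually_pos] with i hi hg
  rw [norm_smul, Real.norm_eq_abs, abs_of_pos (by positivity), one_div_mul_eq_div,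
    div_le_iff₀ (by positivity)]
  exact hi.trans (le_of_eq (by ring))

lemma tendsto_error (H : NearFamily F m κ ν τ B g r u Q₂ P₂ Q₃ P₃) {w : ι → V3}
    (hw : ∀ᶠ i in F, ‖w i‖ ≤ g i ^ 4) : Tendsto w F (𝓝 0) :=
  squeeze_zero_norm' hw (H.tendsto_pow four_ne_zero)

lemma tendsto_tiltDir (H : NearFamily F m κ ν τ B g r u Q₂ P₂ Q₃ P₃) :
    Tendsto (fun i => tiltDir (g i)) F (𝓝 (vec3 0 1 0)) := by
  have h := H.tendsto_pow two_ne_zero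
  apply V3.tendsto_of_coords <;> simp only [tiltDir, vec3_zero_coord, vec3_one_coord,
    vec3_two_coord]
  · exact tendsto_const_nhds
  · have := ((h.pow 2).const_sub 1).sqrt
    simpa using this
  · exact h

lemma tendsto_pos_zero_div (H : NearFamily F m κ ν τ B g r u Q₂ P₂ Q₃ P₃) :
    Tendsto (fun i => (r i 0 - 1) / g i) F (𝓝 0) := by
  have h : Tendsto (fun i => 8 * B ^ 2 * g i ^ 1 + g i ^ 3) F (𝓝 0) := by
    simpa using (H.tendsto_const_mul_pow one_ne_zero (8 * B ^ 2)).add (H.tendsto_pow three_ne_zero)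
  refine squeeze_zero_norm' ?_ h
  filter_upwards [H.near, H.eventually_pos] with i hi hg
  rw [Real.norm_eq_abs, abs_div, abs_of_pos hg, div_le_iff₀ hg]
  exact hi.pos_zero.trans (le_of_eq (by ring))

lemma tendsto_pos_zero (H : NearFamily F m κ ν τ B g r u Q₂ P₂ Q₃ P₃) :
    Tendsto (fun i => r i 0) F (𝓝 1) := by
  have h := (H.tendsto_pos_zero_div.mul H.tendsto_zero).add_const 1
  rw [zero_mul, zero_add] at h
  refine h.congr' ?_
  filter_upwards [H.eventually_pos] with i hg
  field_simp
  ring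

lemma tendsto_pos_one_div (H : NearFamily F m κ ν τ B g r u Q₂ P₂ Q₃ P₃) :
    Tendsto (fun i => r i 1 / g i) F (𝓝 0) := by
  refine squeeze_zero_norm' ?_ (H.tendsto_pow three_ne_zero)
  filter_upwards [H.near, H.eventually_pos] with i hi hg
  rw [Real.norm_eq_abs, abs_div, abs_of_pos hg, div_le_iff₀ hg]
  exact hi.pos_one.trans (le_of_eq (by ring))

lemma tendsto_pos_one (H : NearFamily F m κ ν τ B g r u Q₂ P₂ Q₃ P₃) :
    Tendsto (fun i => r i 1) F (𝓝 0) := by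
  refine squeeze_zero_norm' ?_ (H.tendsto_pow four_ne_zero)
  filter_upwards [H.near] with i hi
  exact hi.pos_one

lemma tendsto_pos_two_div (H : NearFamily F m κ ν τ B g r u Q₂ P₂ Q₃ P₃) :
    Tendsto (fun i => r i 2 / g i ^ 2) F (𝓝 κ) := by
  rw [tendsto_iff_norm_sub_tendsto_zero]
  refine squeeze_zero_norm' ?_ (H.tendsto_const_mul_pow two_ne_zero (4 * B ^ 3 + 1))
  filter_upwards [H.near, H.eventually_pos] with i hi hg
  have e : r i 2 / g i ^ 2 - κ = (r i 2 - κ * g i ^ 2) / g i ^ 2 := by field_simp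
  rw [norm_norm, Real.norm_eq_abs, e, abs_div, abs_of_pos (by positivity : 0 < g i ^ 2),
    div_le_iff₀ (by positivity)]
  exact hi.pos_two.trans (le_of_eq (by ring))

lemma tendsto_pos_two (H : NearFamily F m κ ν τ B g r u Q₂ P₂ Q₃ P₃) :
    Tendsto (fun i => r i 2) F (𝓝 0) := by
  have h := H.tendsto_pos_two_div.mul (H.tendsto_pow two_ne_zero)
  rw [mul_zero] at h
  refine h.congr' ?_
  filter_upwards [H.eventually_pos] with i hg
  field_simp

lemma tendsto_pos (H : NearFamily F m κ ν τ B g r u Q₂ P₂ Q₃ P₃) :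
    Tendsto r F (𝓝 (vec3 1 0 0)) :=
  V3.tendsto_of_coords H.tendsto_pos_zero H.tendsto_pos_one H.tendsto_pos_two

lemma tendsto_vel (H : NearFamily F m κ ν τ B g r u Q₂ P₂ Q₃ P₃) : Tendsto u F (𝓝 0) := by
  have h : Tendsto (fun i => (17 + B) * g i + g i ^ 4) F (𝓝 0) := by
    simpa using (H.tendsto_zero.const_mul (17 + B)).add (H.tendsto_pow four_ne_zero)
  refine squeeze_zero_norm' ?_ h
  filter_upwards [H.near] with i hi
  exact hi.vel

lemma tendsto_jacobi_pos_two (H : NearFamily F m κ ν τ B g r u Q₂ P₂ Q₃ P₃) :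
    Tendsto Q₂ F (𝓝 (-(sig11 m • vec3 1 0 0))) := by
  have h := (H.tendsto_error (H.near.mono fun i hi => hi.jacobi_pos_two)).sub
    (H.tendsto_pos.const_smul (sig11 m))
  simpa using h

lemma tendsto_jacobi_mom_two (H : NearFamily F m κ ν τ B g r u Q₂ P₂ Q₃ P₃) :
    Tendsto P₂ F (𝓝 (τ • vec3 0 1 0)) := by
  have h := (H.tendsto_error (H.near.mono fun i hi => hi.jacobi_mom_two)).add
    (((H.tendsto_tiltDir.const_smul τ).add ((H.tendsto_zero.const_mul (sepWeight m)).smul_const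
      (vec3 0 0 1))).sub (H.tendsto_vel.const_smul (sepWeight m)))
  simpa using h

lemma tendsto_jacobi_mom_three (H : NearFamily F m κ ν τ B g r u Q₂ P₂ Q₃ P₃) :
    Tendsto P₃ F (𝓝 0) := by
  have h := (H.tendsto_error (H.near.mono fun i hi => hi.jacobi_mom_three)).add
    (((((H.tendsto_zero.mul_const ν).smul H.tendsto_tiltDir)).add (((H.tendsto_zero.const_mul
      (sepWeight m / comWeight m)).const_mul (m 3)).smul_const (vec3 0 0 1))).add
      (H.tendsto_vel.const_smul (m 3 * ((m 0 + m 2) / Mtot3 m))))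
  simpa using h

end NearFamily

/-- Decomposition of the second angular momentum at a near state. -/
lemma cross3_jacobi_two (Q P r u d e : V3) (s τ b g : ℝ) :
    cross3 Q P = -(s * τ) • cross3 r d - (s * b * g) • cross3 r e + (s * b) • cross3 r u
      - s • cross3 r (P - (τ • d + (b * g) • e - b • u)) + cross3 (Q + s • r) P := by
  simp only [cross3_add_left, cross3_add_right, cross3_sub_right, cross3_smul_right,
    cross3_smul_left]
  module

/-- Decomposition of the third angular momentum at a near state. -/
lemma cross3_jacobi_three (Q P r u d e : V3) (k ν c l g : ℝ) :
    cross3 Q P = (k * (g * ν)) • cross3 r d + (k * c) • cross3 r e + (k * l) • cross3 r u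
      + k • cross3 r (P - ((g * ν) • d + c • e + l • u)) + cross3 (Q - k • r) P := by
  simp only [cross3_add_right, cross3_sub_right, cross3_sub_left, cross3_smul_right,
    cross3_smul_left]
  module

namespace NearFamily

variable {ι : Type*} {F : Filter ι} {m : Fin 4 → ℝ} {κ ν τ B : ℝ} {g : ι → ℝ}
  {r u Q₂ P₂ Q₃ P₃ : ι → V3}

lemma tendsto_angMom_two_zero (H : NearFamily F m κ ν τ B g r u Q₂ P₂ Q₃ P₃) :
    Tendsto (fun i => cross3 (Q₂ i) (P₂ i) 0 / g i ^ 2) F (𝓝 (sig11 m * τ * κ)) := by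
  have hw := (H.tendsto_div_sq_smul (H.near.mono fun i hi => hi.angMom)).v3_apply 0
  have hp := (H.tendsto_pos.cross3
    (H.tendsto_div_sq_smul (H.near.mono fun i hi => hi.jacobi_mom_two))).v3_apply 0
  have hq := ((H.tendsto_div_sq_smul (H.near.mono fun i hi => hi.jacobi_pos_two)).cross3
    H.tendsto_jacobi_mom_two).v3_apply 0
  have hD := H.tendsto_tiltDir.v3_apply 1
  have h := ((((H.tendsto_pos_one.sub (H.tendsto_pos_two_div.mul hD)).const_mul
    (-(sig11 m * τ))).sub (H.tendsto_pos_one_div.const_mul (sig11 m * sepWeight m))).add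
    (hw.const_mul (sig11 m * sepWeight m)) |>.sub (hp.const_mul (sig11 m))).add hq
  have e : -(sig11 m * τ) * (0 - κ * vec3 0 1 0 1) - sig11 m * sepWeight m * 0
      + sig11 m * sepWeight m * (0 : V3) 0 - sig11 m * cross3 (vec3 1 0 0) 0 0
      + cross3 0 (τ • vec3 0 1 0) 0 = sig11 m * τ * κ := by
    simp
  rw [e] at h
  refine h.congr' ?_
  filter_upwards [H.eventually_pos] with i hg
  rw [cross3_jacobi_two (Q₂ i) (P₂ i) (r i) (u i) (tiltDir (g i)) (vec3 0 0 1) (sig11 m) τ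
    (sepWeight m) (g i)]
  simp only [cross3_zero_coord, PiLp.add_apply, PiLp.sub_apply, PiLp.smul_apply, smul_eq_mul,
    tiltDir, vec3_one_coord, vec3_two_coord]
  field_simp
  ring

lemma tendsto_angMom_two_one (H : NearFamily F m κ ν τ B g r u Q₂ P₂ Q₃ P₃) :
    Tendsto (fun i => cross3 (Q₂ i) (P₂ i) 1 / g i ^ 2) F (𝓝 (sig11 m * τ)) := by
  have hw := (H.tendsto_div_sq_smul (H.near.mono fun i hi => hi.angMom)).v3_apply 1
  have hp := (H.tendsto_pos.cross3
    (H.tendsto_div_sq_smul (H.near.mono fun i hi => hi.jacobi_mom_two))).v3_apply 1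
  have hq := ((H.tendsto_div_sq_smul (H.near.mono fun i hi => hi.jacobi_pos_two)).cross3
    H.tendsto_jacobi_mom_two).v3_apply 1
  have h := (((H.tendsto_pos_zero.const_mul (sig11 m * τ)).add
    (H.tendsto_pos_zero_div.const_mul (sig11 m * sepWeight m))).add
    (hw.const_mul (sig11 m * sepWeight m)) |>.sub (hp.const_mul (sig11 m))).add hq
  have e : sig11 m * τ * 1 + sig11 m * sepWeight m * 0
      + sig11 m * sepWeight m * (0 : V3) 1 - sig11 m * cross3 (vec3 1 0 0) 0 1
      + cross3 0 (τ • vec3 0 1 0) 1 = sig11 m * τ := by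
    simp
  rw [e] at h
  refine h.congr' ?_
  filter_upwards [H.eventually_pos] with i hg
  rw [cross3_jacobi_two (Q₂ i) (P₂ i) (r i) (u i) (tiltDir (g i)) (vec3 0 0 1) (sig11 m) τ
    (sepWeight m) (g i)]
  simp only [cross3_one_coord, PiLp.add_apply, PiLp.sub_apply, PiLp.smul_apply, smul_eq_mul,
    tiltDir, vec3_zero_coord, vec3_two_coord]
  field_simp
  ring

lemma tendsto_angMom_three (H : NearFamily F m κ ν τ B g r u Q₂ P₂ Q₃ P₃) :
    Tendsto (fun i => (1 / g i) • cross3 (Q₃ i) (P₃ i)) F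
      (𝓝 (((m 0 + m 2) / Mtot2 m) • vec3 0
        (-(m 3 * (sepWeight m / comWeight m + (m 0 + m 2) / Mtot3 m))) ν)) := by
  obtain ⟨k, hk⟩ : ∃ k, k = (m 0 + m 2) / Mtot2 m := ⟨_, rfl⟩
  obtain ⟨c, hc⟩ : ∃ c, c = sepWeight m / comWeight m := ⟨_, rfl⟩
  obtain ⟨l, hl⟩ : ∃ l, l = (m 0 + m 2) / Mtot3 m := ⟨_, rfl⟩
  have hw := H.tendsto_div_smul (H.near.mono fun i hi => hi.angMom)
  have hp := H.tendsto_pos.cross3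
    (H.tendsto_div_smul (H.near.mono fun i hi => hi.jacobi_mom_three))
  have hq := (H.tendsto_div_smul (H.near.mono fun i hi => hi.jacobi_pos_three)).cross3
    H.tendsto_jacobi_mom_three
  have h := (((((H.tendsto_pos.cross3 H.tendsto_tiltDir).const_smul (k * ν)).add
    ((H.tendsto_pos.cross3 (tendsto_const_nhds (x := vec3 0 0 1))).const_smul
      (k * (m 3 * c)))).add ((hw.add_const (cross3 (vec3 1 0 0) (vec3 0 0 1))).const_smul
      (k * (m 3 * l)))).add (hp.const_smul k)).add hq
  rw [← hk, ← hc, ← hl] at *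
  have e : (k * ν) • cross3 (vec3 1 0 0) (vec3 0 1 0)
      + (k * (m 3 * c)) • cross3 (vec3 1 0 0) (vec3 0 0 1)
      + (k * (m 3 * l)) • (0 + cross3 (vec3 1 0 0) (vec3 0 0 1)) + k • cross3 (vec3 1 0 0) 0
      + cross3 0 0 = k • vec3 0 (-(m 3 * (c + l))) ν := by
    apply V3.ext <;> simp <;> ring
  rw [e] at h
  refine h.congr' ?_
  filter_upwards [H.eventually_pos] with i hg
  rw [cross3_jacobi_three (Q₃ i) (P₃ i) (r i) (u i) (tiltDir (g i)) (vec3 0 0 1) k ν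
    (m 3 * (c * g i)) (m 3 * l) (g i)]
  simp only [cross3_smul_left, cross3_smul_right]
  match_scalars <;> field_simp <;> ring

end NearFamily

lemma Real.Angle.abs_toReal_eq_arccos_cos (φ : Real.Angle) :
    |φ.toReal| = Real.arccos φ.cos := by
  rw [← Real.Angle.cos_toReal, ← Real.cos_abs,
    Real.arccos_cos (abs_nonneg _) (Real.Angle.abs_toReal_le_pi φ)]

lemma Real.Angle.exists_cos_add_ne_zero (h : Real.Angle) {δ : ℝ} (hδ : 0 < δ) :
    ∃ η : ℝ, |(η : Real.Angle).toReal| < δ ∧ (h + (η : Real.Angle)).cos ≠ 0 := by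
  by_cases hc : h.cos = 0
  · refine ⟨min (δ / 2) 1, ?_, ?_⟩
    · have h0 : 0 ≤ min (δ / 2) 1 := by positivity
      rw [Real.Angle.abs_toReal_coe_eq_self_iff.2
        ⟨h0, (min_le_right _ _).trans (by linarith [Real.pi_gt_three])⟩]
      exact (min_le_left _ _).trans_lt (by linarith)
    · have h0 : 0 < min (δ / 2) 1 := by positivity
      have hs : h.sin ≠ 0 := fun hs => by
        have := Real.Angle.cos_sq_add_sin_sq h
        rw [hc, hs] at this
        norm_num at this
      rw [Real.Angle.cos_add, hc, zero_mul, zero_sub, neg_ne_zero, Real.Angle.sin_coe]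
      exact mul_ne_zero hs (Real.sin_pos_of_pos_of_lt_pi h0
        ((min_le_right _ _).trans_lt (by linarith [Real.pi_gt_three]))).ne'
  · exact ⟨0, by simpa using hδ, by simpa using hc⟩

/-! ### Observables of the second planet in rescaled Jacobi coordinates -/

/-- Rescaled Kepler energy of the second planet. -/
def keplerEnergy (m : Fin 4 → ℝ) (Q P : V3) : ℝ :=
  ‖P‖ ^ 2 / (2 * mu2 m) - mu2 m * Mtot2 m / (Mtot3 m * ‖Q‖)

section Rescale

variable {m : Fin 4 → ℝ} {pos vel : Fin 4 → V3} {a b : ℝ}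

lemma mu2_pos (hm : ∀ j, 0 < m j) : 0 < mu2 m := by
  have := hm 2
  have := Mtot1_pos hm
  have := Mtot2_pos hm
  unfold mu2
  positivity

lemma keplerEnergy_rescale (hm : ∀ j, 0 < m j) (ha : 0 < a) (hb : 0 < b)
    (hab : a * b ^ 2 * Mtot3 m = 1) :
    keplerEnergy m (a • jq2 m pos) (b • jp2 m vel) = b ^ 2 * kepE2 m pos vel := by
  have hM := Mtot3_pos hm
  have hμ := mu2_pos hm
  rw [keplerEnergy, kepE2, norm_smul, norm_smul, Real.norm_eq_abs, Real.norm_eq_abs,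
    abs_of_pos ha, abs_of_pos hb]
  rcases eq_or_ne ‖jq2 m pos‖ 0 with h | h
  · rw [h]
    simp
    ring
  · have e : mu2 m * Mtot2 m / (Mtot3 m * (a * ‖jq2 m pos‖))
        = b ^ 2 * (mu2 m * Mtot2 m / ‖jq2 m pos‖) := by
      field_simp
      linear_combination (-Mtot2 m) * hab
    rw [e]
    ring

lemma angC2_eq_smul (ha : 0 < a) (hb : 0 < b) :
    angC2 m pos vel = (1 / (a * b)) • cross3 (a • jq2 m pos) (b • jp2 m vel) := by
  rw [angC2, cross3_smul_left, cross3_smul_right, smul_smul, smul_smul, one_div_mul_eq_div,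
    div_mul_cancel_left₀ (by positivity)]
  rw [show (b : ℝ)⁻¹ * b = 1 by field_simp, one_smul]

lemma angC3_eq_smul (ha : 0 < a) (hb : 0 < b) :
    angC3 m pos vel = (1 / (a * b)) • cross3 (a • jq3 m pos) (b • jp3 m vel) := by
  rw [angC3, cross3_smul_left, cross3_smul_right, smul_smul, smul_smul, one_div_mul_eq_div,
    div_mul_cancel_left₀ (by positivity)]
  rw [show (b : ℝ)⁻¹ * b = 1 by field_simp, one_smul]

lemma ecc2_eq (hm : ∀ j, 0 < m j) (ha : 0 < a) (hb : 0 < b) (hab : a * b ^ 2 * Mtot3 m = 1)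
    (hE : kepE2 m pos vel < 0) : ecc2 m pos vel =
      √(1 + 2 * keplerEnergy m (a • jq2 m pos) (b • jp2 m vel) *
        (Mtot3 m ^ 2 * ‖cross3 (a • jq2 m pos) (b • jp2 m vel)‖ ^ 2) /
          (mu2 m ^ 3 * Mtot2 m ^ 2)) := by
  have hM := Mtot3_pos hm
  have hM2 := Mtot2_pos hm
  have hμ := mu2_pos hm
  have hs : sma2 m pos vel = mu2 m * Mtot2 m / (2 * -kepE2 m pos vel) := by
    rw [sma2, mul_neg, div_neg, neg_div]
  have hs0 : 0 < sma2 m pos vel := by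
    have : 0 < -kepE2 m pos vel := by linarith
    rw [hs]
    positivity
  rw [ecc2, Lact2, mul_pow, Real.sq_sqrt (by positivity), hs, keplerEnergy_rescale hm ha hb hab,
    angC2_eq_smul ha hb, norm_smul, Real.norm_eq_abs, abs_of_pos (by positivity)]
  congr 1
  have hM' : Mtot3 m = 1 / (a * b ^ 2) := by
    field_simp
    linear_combination hab
  rw [hM']
  have := hE.ne
  field_simp
  ring

end Rescale

/-- Angle between the limiting angular momenta. -/
lemma angle_limit {s w θ k c : ℝ} (hs : s ≠ 0) (hw : 0 < w) (hk : 0 < k) (hθ : θ ∈ Ioo 0 π)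
    (hc : c = s / |s| * (w * Real.cos θ / Real.sin θ)) :
    InnerProductGeometry.angle (s • vec3 0 0 1) (k • vec3 0 (-w) c) = θ := by
  have hsin : 0 < Real.sin θ := Real.sin_pos_of_mem_Ioo hθ
  have hs' : 0 < |s| := abs_pos.2 hs
  rw [InnerProductGeometry.angle_smul_right_of_pos _ _ hk]
  have e1 : s • vec3 0 0 1 = |s| • vec3 0 0 (s / |s|) := by
    apply V3.ext <;> simp
    field_simp
  have e2 : vec3 0 (-w) c = (w / Real.sin θ) • vec3 0 (-Real.sin θ) (s / |s| * Real.cos θ) := by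
    apply V3.ext <;> simp
    · field_simp
    · rw [hc]; ring
  rw [e1, e2, InnerProductGeometry.angle_smul_right_of_pos _ _ (by positivity),
    InnerProductGeometry.angle_smul_left_of_pos _ _ hs']
  have hsq : (s / |s|) ^ 2 = 1 := by rw [div_pow, sq_abs, div_self (by positivity)]
  have n1 : ‖vec3 0 0 (s / |s|)‖ = 1 := norm_vec3_eq_one (by rw [hsq]; norm_num)
  have n2 : ‖vec3 0 (-Real.sin θ) (s / |s| * Real.cos θ)‖ = 1 := norm_vec3_eq_one (by
    rw [mul_pow, hsq]
    have := Real.sin_sq_add_cos_sq θ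
    linarith)
  rw [InnerProductGeometry.angle, n1, n2, V3.inner_eq]
  simp only [vec3_zero_coord, vec3_one_coord, vec3_two_coord]
  have e3 : (0 * 0 + 0 * -Real.sin θ + s / |s| * (s / |s| * Real.cos θ)) / (1 * 1)
      = Real.cos θ := by
    linear_combination Real.cos θ * hsq
  rw [e3, Real.arccos_cos hθ.1.le hθ.2.le]

/-- Node of the limiting angular momentum. -/
lemma arg_limit {h : Real.Angle} (hc : h.cos ≠ 0) {s t : ℝ} (ht : 0 < t)
    (hs : s = t * (h.cos / |h.cos|)) :
    ((Complex.arg ⟨s, s * (h.sin / h.cos)⟩ : ℝ) : Real.Angle) = h := by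
  have hc' : 0 < |h.cos| := abs_pos.2 hc
  have e : (⟨s, s * (h.sin / h.cos)⟩ : ℂ) =
      ((t / |h.cos| : ℝ) : ℂ) * ((h.cos : ℂ) + (h.sin : ℂ) * Complex.I) := by
    apply Complex.ext
    · simp [hs]; ring
    · simp [hs]; field_simp
  rw [e, Complex.arg_mul_cos_add_sin_mul_I_coe_angle (by positivity)]

namespace NearFamily

variable {ι : Type*} {F : Filter ι} {m : Fin 4 → ℝ} {κ ν τ B : ℝ} {g a b : ι → ℝ}
  {r u : ι → V3} {pos vel : ι → Fin 4 → V3}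

lemma sig11_pos (hm : ∀ j, 0 < m j) : 0 < sig11 m := div_pos (hm 1) (Mtot1_pos hm)

lemma tendsto_keplerEnergy {Q P Q₃ P₃ : ι → V3} (hm : ∀ j, 0 < m j)
    (H : NearFamily F m κ ν τ B g r u Q P Q₃ P₃) :
    Tendsto (fun i => keplerEnergy m (Q i) (P i)) F
      (𝓝 (τ ^ 2 / (2 * mu2 m) - mu2 m * Mtot2 m / (Mtot3 m * sig11 m))) := by
  have hs := sig11_pos hm
  have hM := Mtot3_pos hm
  have n1 : ‖-(sig11 m • vec3 1 0 0)‖ = sig11 m := by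
    rw [norm_neg, norm_smul, norm_vec3_eq_one (by norm_num), mul_one, Real.norm_eq_abs,
      abs_of_pos hs]
  have n2 : ‖τ • vec3 0 1 0‖ ^ 2 = τ ^ 2 := by
    rw [norm_smul, norm_vec3_eq_one (by norm_num), mul_one, Real.norm_eq_abs, sq_abs]
  have hQ := H.tendsto_jacobi_pos_two.norm
  have hP := H.tendsto_jacobi_mom_two.norm.pow 2
  rw [n1] at hQ
  rw [n2] at hP
  exact (hP.div_const _).sub (tendsto_const_nhds.div (hQ.const_mul (Mtot3 m)) (by positivity))

lemma tendsto_norm_angMom_two {Q P Q₃ P₃ : ι → V3}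
    (H : NearFamily F m κ ν τ B g r u Q P Q₃ P₃) :
    Tendsto (fun i => cross3 (Q i) (P i)) F (𝓝 ((-(sig11 m * τ)) • vec3 0 0 1)) := by
  have h := H.tendsto_jacobi_pos_two.cross3 H.tendsto_jacobi_mom_two
  have e : cross3 (-(sig11 m • vec3 1 0 0)) (τ • vec3 0 1 0)
      = (-(sig11 m * τ)) • vec3 0 0 1 := by
    apply V3.ext <;> simp
  rwa [e] at h

end NearFamily

/-- For a suitable choice of the parameters, the observables of the second planet along a family
of near states are eventually close to the prescribed values. -/
lemma exists_param_eventually {m : Fin 4 → ℝ} (hm : ∀ j, 0 < m j) {e θ δ : ℝ}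
    (he : e ∈ Ioo (0 : ℝ) 1) (hθ : θ ∈ Ioo 0 π) (h : Real.Angle) (hδ : 0 < δ) :
    ∃ κ ν τ : ℝ, ∀ {B : ℝ} {ι : Type} {F : Filter ι} {g a b : ι → ℝ} {r u : ι → V3}
      {pos vel : ι → Fin 4 → V3},
      (∀ᶠ i in F, 0 < a i ∧ 0 < b i ∧ a i * b i ^ 2 * Mtot3 m = 1) →
      NearFamily F m κ ν τ B g r u (fun i => a i • jq2 m (pos i)) (fun i => b i • jp2 m (vel i))
        (fun i => a i • jq3 m (pos i)) (fun i => b i • jp3 m (vel i)) →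
      ∀ᶠ i in F, kepE2 m (pos i) (vel i) < 0 ∧ angC2 m (pos i) (vel i) ≠ 0 ∧
        angC3 m (pos i) (vel i) ≠ 0 ∧
        (angC2 m (pos i) (vel i) 0, angC2 m (pos i) (vel i) 1) ≠ ((0 : ℝ), (0 : ℝ)) ∧
        |ecc2 m (pos i) (vel i) - e| ≤ δ ∧ |incl23 m (pos i) (vel i) - θ| ≤ δ ∧
        |(node2 m (pos i) (vel i) - h).toReal| ≤ δ := by
  have hM := Mtot3_pos hm
  have hM2 := Mtot2_pos hm
  have hμ := mu2_pos hm
  have hs := NearFamily.sig11_pos hm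
  have m0 := hm 0
  have m1 := hm 1
  have m2 := hm 2
  have m3 := hm 3
  obtain ⟨η, hη, hcos⟩ := h.exists_cos_add_ne_zero hδ
  set h' := h + (η : Real.Angle) with hh'
  have hc0 : 0 < |h'.cos| := abs_pos.2 hcos
  obtain ⟨T, hT⟩ : ∃ T, T = √(mu2 m ^ 2 * Mtot2 m * (1 - e) / (sig11 m * Mtot3 m)) := ⟨_, rfl⟩
  have he1 : 0 < 1 - e := by linarith [he.2]
  have hT0 : 0 < T := by rw [hT]; positivity
  have hT2 : T ^ 2 = mu2 m ^ 2 * Mtot2 m * (1 - e) / (sig11 m * Mtot3 m) := by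
    rw [hT, Real.sq_sqrt (by positivity)]
  obtain ⟨σ, hσ⟩ : ∃ σ, σ = h'.cos / |h'.cos| := ⟨_, rfl⟩
  have hσ2 : σ ^ 2 = 1 := by rw [hσ, div_pow, sq_abs, div_self (by positivity)]
  have hσ0 : σ ≠ 0 := fun h0 => by rw [h0] at hσ2; norm_num at hσ2
  have hσa : |σ| = 1 := by rw [hσ, abs_div, abs_abs, div_self hc0.ne']
  obtain ⟨w, hw⟩ : ∃ w, w = m 3 * (sepWeight m / comWeight m + (m 0 + m 2) / Mtot3 m) := ⟨_, rfl⟩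
  have hw0 : 0 < w := by
    rw [hw, sepWeight, comWeight, sig22]
    positivity
  refine ⟨-(h'.sin / h'.cos), σ * (w * Real.cos θ / Real.sin θ), -(σ * T), ?_⟩
  intro B ι F g a b r u pos vel hab H
  have hτ2 : (-(σ * T)) ^ 2 = T ^ 2 := by rw [neg_sq, mul_pow, hσ2, one_mul]
  have hE := H.tendsto_keplerEnergy hm
  rw [hτ2] at hE
  have hElim : T ^ 2 / (2 * mu2 m) - mu2 m * Mtot2 m / (Mtot3 m * sig11 m)
      = -(mu2 m * Mtot2 m * (1 + e) / (2 * (Mtot3 m * sig11 m))) := by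
    rw [hT2]
    field_simp
    ring
  rw [hElim] at hE
  have hEneg : ∀ᶠ i in F, kepE2 m (pos i) (vel i) < 0 := by
    have hlt : -(mu2 m * Mtot2 m * (1 + e) / (2 * (Mtot3 m * sig11 m))) < 0 := by
      have := he.1
      rw [neg_lt_zero]
      positivity
    filter_upwards [hE.eventually_lt_const hlt, hab] with i hi ⟨hai, hbi, habi⟩
    rw [keplerEnergy_rescale hm hai hbi habi] at hi
    by_contra hcon
    rw [not_lt] at hcon
    have : 0 ≤ b i ^ 2 * kepE2 m (pos i) (vel i) := by positivity
    linarith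
  have hC := H.tendsto_norm_angMom_two
  have hsT : -(sig11 m * -(σ * T)) = σ * (sig11 m * T) := by ring
  rw [hsT] at hC
  have hC3 := H.tendsto_angMom_three
  rw [← hw] at hC3
  have hC0 : (σ * (sig11 m * T)) • vec3 0 0 1 ≠ 0 := fun h0 => by
    have := congrArg (fun v : V3 => v 2) h0
    simp [hσ0, hs.ne', hT0.ne'] at this
  have hk0 : 0 < (m 0 + m 2) / Mtot2 m := by positivity
  have hC30 : ((m 0 + m 2) / Mtot2 m) • vec3 0 (-w) (σ * (w * Real.cos θ / Real.sin θ)) ≠ 0 :=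
    fun h0 => by
      have := congrArg (fun v : V3 => v 1) h0
      simp only [PiLp.smul_apply, vec3_one_coord, smul_eq_mul, PiLp.zero_apply, mul_neg,
        neg_eq_zero] at this
      exact (mul_pos hk0 hw0).ne' this
  have hecc : Tendsto (fun i => ecc2 m (pos i) (vel i)) F (𝓝 e) := by
    have hlim := (((hE.const_mul 2).mul ((hC.norm.pow 2).const_mul (Mtot3 m ^ 2))).div_const
      (mu2 m ^ 3 * Mtot2 m ^ 2)).const_add 1 |>.sqrt
    have hval : √(1 + 2 * -(mu2 m * Mtot2 m * (1 + e) / (2 * (Mtot3 m * sig11 m))) *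
        (Mtot3 m ^ 2 * ‖(σ * (sig11 m * T)) • vec3 0 0 1‖ ^ 2) /
          (mu2 m ^ 3 * Mtot2 m ^ 2)) = e := by
      rw [norm_smul, norm_vec3_eq_one (by norm_num), mul_one, Real.norm_eq_abs, sq_abs, mul_pow,
        hσ2, one_mul, mul_pow, hT2]
      rw [show (1 + 2 * -(mu2 m * Mtot2 m * (1 + e) / (2 * (Mtot3 m * sig11 m))) *
        (Mtot3 m ^ 2 * (sig11 m ^ 2 * (mu2 m ^ 2 * Mtot2 m * (1 - e) / (sig11 m * Mtot3 m)))) /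
          (mu2 m ^ 3 * Mtot2 m ^ 2)) = e ^ 2 by field_simp; ring]
      exact Real.sqrt_sq he.1.le
    rw [hval] at hlim
    refine hlim.congr' ?_
    filter_upwards [hEneg, hab] with i hi ⟨hai, hbi, habi⟩
    rw [ecc2_eq hm hai hbi habi hi]
  have hincl : Tendsto (fun i => incl23 m (pos i) (vel i)) F (𝓝 θ) := by
    have hlim := (InnerProductGeometry.continuousAt_angle
      (x := ((σ * (sig11 m * T)) • vec3 0 0 1, ((m 0 + m 2) / Mtot2 m) • vec3 0 (-w)
        (σ * (w * Real.cos θ / Real.sin θ)))) hC0 hC30).tendsto.comp (hC.prodMk_nhds hC3)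
    have hval := angle_limit (s := σ * (sig11 m * T)) (w := w) (θ := θ)
      (c := σ * (w * Real.cos θ / Real.sin θ)) (by positivity) hw0 hk0 hθ (by
        rw [abs_mul, hσa, one_mul, abs_of_pos (by positivity), mul_div_cancel_right₀ _
          (by positivity)])
    simp only [hval] at hlim
    refine hlim.congr' ?_
    filter_upwards [H.eventually_pos, hab] with i hgi ⟨hai, hbi, habi⟩
    simp only [Function.comp_apply]
    rw [incl23, angC2_eq_smul hai hbi, angC3_eq_smul hai hbi, ← InnerProductGeometry.angle,
      InnerProductGeometry.angle_smul_left_of_pos _ _ (by positivity),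
      InnerProductGeometry.angle_smul_right_of_pos _ _ (by positivity),
      InnerProductGeometry.angle_smul_right_of_pos _ _ (by positivity)]
  have hn0 := H.tendsto_angMom_two_zero
  have hn1 := H.tendsto_angMom_two_one
  have hnode : Tendsto (fun i => node2 m (pos i) (vel i)) F (𝓝 h') := by
    have hz : Tendsto (fun i => (⟨-(cross3 (a i • jq2 m (pos i)) (b i • jp2 m (vel i)) 1 / g i ^ 2),
        cross3 (a i • jq2 m (pos i)) (b i • jp2 m (vel i)) 0 / g i ^ 2⟩ : ℂ)) F
        (𝓝 ⟨-(sig11 m * -(σ * T)), sig11 m * -(σ * T) * -(h'.sin / h'.cos)⟩) :=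
      (Complex.equivRealProdCLM.symm.continuous.tendsto (_, _)).comp (hn1.neg.prodMk_nhds hn0)
    rw [hsT, show sig11 m * -(σ * T) * -(h'.sin / h'.cos)
      = σ * (sig11 m * T) * (h'.sin / h'.cos) by ring] at hz
    have hval := arg_limit hcos (s := σ * (sig11 m * T)) (t := sig11 m * T) (by positivity)
      (by rw [← hσ]; ring)
    have hne : (⟨σ * (sig11 m * T), σ * (sig11 m * T) * (h'.sin / h'.cos)⟩ : ℂ) ≠ 0 :=
      fun h0 => by
        have := congrArg Complex.re h0
        simp [hσ0, hs.ne', hT0.ne'] at this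
    have hlim := (Complex.continuousAt_arg_coe_angle hne).tendsto.comp hz
    simp only [Function.comp_apply, hval] at hlim
    refine hlim.congr' ?_
    filter_upwards [H.eventually_pos, hab] with i hgi ⟨hai, hbi, habi⟩
    simp only [Function.comp_apply]
    rw [node2, angC2_eq_smul hai hbi]
    congr 1
    rw [← Complex.arg_real_mul (⟨-(cross3 (a i • jq2 m (pos i)) (b i • jp2 m (vel i)) 1 / g i ^ 2),
      _⟩ : ℂ) (by positivity : 0 < g i ^ 2 / (a i * b i))]
    congr 1
    apply Complex.ext
    · rw [Complex.re_ofReal_mul]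
      simp only [PiLp.smul_apply, smul_eq_mul]
      field_simp
    · rw [Complex.im_ofReal_mul]
      simp only [PiLp.smul_apply, smul_eq_mul]
      field_simp
  have hnode' : Tendsto (fun i => |(node2 m (pos i) (vel i) - h).toReal|) F
      (𝓝 |(η : Real.Angle).toReal|) := by
    simp only [Real.Angle.abs_toReal_eq_arccos_cos]
    have hd := hnode.sub_const h
    rw [hh', add_sub_cancel_left] at hd
    exact ((Real.continuous_arccos.comp Real.Angle.continuous_cos).tendsto _).comp hd
  have hne1 : ∀ᶠ i in F, cross3 (a i • jq2 m (pos i)) (b i • jp2 m (vel i)) 1 / g i ^ 2 ≠ 0 :=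
    hn1.eventually_ne (by
      simp [hσ0, hs.ne', hT0.ne'])
  filter_upwards [hEneg, hC3.eventually_ne hC30, hne1, hab, (tendsto_order.1
    (hecc.sub_const e).abs).2 δ (by simpa using hδ), (tendsto_order.1
    (hincl.sub_const θ).abs).2 δ (by simpa using hδ), (tendsto_order.1 hnode').2 δ hη]
    with i h1 h3 h4 ⟨hai, hbi, habi⟩ h5 h6 h7
  have hC1 : angC2 m (pos i) (vel i) 1 ≠ 0 := by
    rw [angC2_eq_smul hai hbi, PiLp.smul_apply, smul_eq_mul]
    exact mul_ne_zero (by positivity) fun h0 => h4 (by rw [h0, zero_div])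
  refine ⟨h1, fun h0 => hC1 (by rw [h0]; rfl), fun h0 => h3 ?_, fun h0 => hC1 (congrArg Prod.snd h0),
    h5.le, h6.le, h7.le⟩
  rw [angC3_eq_smul hai hbi, smul_eq_zero] at h0
  rw [h0.resolve_left (by positivity), smul_zero]

/-- **Drift in eccentricity, mutual inclination and node of the second planet.** -/
theorem fourBody_drift_ecc_incl_node
    (m : Fin 4 → ℝ) (hm : ∀ j, 0 < m j) (hm01 : m 0 ≠ m 1)
    (N : ℕ) (e2itin θ23itin : Fin (N + 1) → ℝ) (h2itin : Fin (N + 1) → Real.Angle)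
    (he2 : ∀ k, e2itin k ∈ Set.Ioo (0:ℝ) 1)
    (hθ23 : ∀ k, θ23itin k ∈ Set.Ioo (0:ℝ) π)
    (δ : ℝ) (hδ : 0 < δ) :
    ∃ T > (0:ℝ), ∃ x v : Fin 4 → ℝ → V3,
      IsFourBodySolution m (Set.Icc 0 T) x v ∧
      ∃ t : Fin (N + 1) → ℝ, StrictMono t ∧ (∀ k, t k ∈ Set.Icc (0:ℝ) T) ∧
        ∀ k : Fin (N + 1),
          kepE2 m (posAt x (t k)) (posAt v (t k)) < 0 ∧
          angC2 m (posAt x (t k)) (posAt v (t k)) ≠ 0 ∧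
          angC3 m (posAt x (t k)) (posAt v (t k)) ≠ 0 ∧
          (angC2 m (posAt x (t k)) (posAt v (t k)) 0,
            angC2 m (posAt x (t k)) (posAt v (t k)) 1) ≠ ((0:ℝ), (0:ℝ)) ∧
          |ecc2 m (posAt x (t k)) (posAt v (t k)) - e2itin k| ≤ δ ∧
          |incl23 m (posAt x (t k)) (posAt v (t k)) - θ23itin k| ≤ δ ∧
          |(node2 m (posAt x (t k)) (posAt v (t k)) - h2itin k).toReal| ≤ δ := by
  choose κ ν τ hgood using fun k => exists_param_eventually hm (he2 k) (hθ23 k) (h2itin k) hδ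
  set B := ∑ k, |κ k| with hB
  have hκ : ∀ k, |κ k| ≤ B := fun k =>
    Finset.single_le_sum (f := fun k => |κ k|) (fun _ _ => abs_nonneg _) (Finset.mem_univ k)
  have hB0 : 0 ≤ B := (abs_nonneg _).trans (hκ 0)
  have hsmall : ∀ᶠ g : ℝ in 𝓝[>] 0, 0 < g ∧ g ≤ 1 / 100 ∧ B * g ≤ 1 / 2100 := by
    filter_upwards [Ioc_mem_nhdsGT (show (0 : ℝ) < 1 / 100 by norm_num),
      Ioc_mem_nhdsGT (show (0 : ℝ) < 1 / (2100 * (B + 1)) by positivity)] with g h1 h2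
    refine ⟨h1.1, h1.2, ?_⟩
    have h3 := (le_div_iff₀ (by positivity)).1 h2.2
    nlinarith [h1.1]
  have hex : ∀ g : ℝ, 0 < g ∧ g ≤ 1 / 100 ∧ B * g ≤ 1 / 2100 → _ := fun g hg =>
    exists_itinerary hm κ ν τ hg.1 hg.2.1 hκ hg.2.2 (pow_pos hg.1 4)
  choose! T hT x v hsol t hmono ht a ha b hb hab r u hnear using hex
  have hall : ∀ᶠ g : ℝ in 𝓝[>] 0, ∀ k, _ := eventually_all.2 fun k =>
    hgood k (B := B) (g := fun g => g) (a := a) (b := b) (r := fun g => r g k)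
      (u := fun g => u g k) (pos := fun g => posAt (x g) (t g k))
      (vel := fun g => posAt (v g) (t g k))
      (hsmall.mono fun g hg => ⟨ha g hg, hb g hg, hab g hg⟩)
      ⟨tendsto_id, hsmall.mono fun g hg => hnear g hg k⟩
  obtain ⟨g, hg, hk⟩ := (hsmall.and hall).exists
  exact ⟨T g, hT g hg, x g, v g, hsol g hg, t g, hmono g hg, ht g hg, hk⟩
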